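/- Let n ≥ 1, c > 0, α > 0, β > 0, ε > 0, T > 0, and let m ∈ ℕ satisfy m ≥ ⌊n/2⌋ + 2. Let u : [0,T] × ℝⁿ → ℝ be a smooth spatially-Schwartz solution of the inviscid Kuznetsov equation ∂_t²u − c²Δu = αε·∂_t u·∂_t²u + βε·∇u·∇∂_t u, and assume ‖∂_t u(t,·)‖_{L^∞(ℝⁿ)} ≤ 1/(2αε) for all t ∈ [0,T]. Then, with B = (3 + 2c²)/min(1/2, c²), there exists a constant C_m > 0, depending only on m, n and c, such that for all t ∈ [0,T]: E_m[u](t) ≤ B·E_m[u](0) + C_m·max(α,β)·ε·∫₀ᵗ E_m[u](τ)^{3/2} dτ. -/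

import Mathlib

/-!
The estimate is an energy estimate for the equation differentiated along every `∂_t^j ∂^A` with
`j + |A| ≤ m`, combined with a Sobolev product estimate for the nonlinear terms.

*Energy balance.* Let `a = αε`, `b = βε`, and let `V` be a space-time derivative of `u`. Then `V`
solves the quasilinear wave equation with a commutator as source (`Sol.word`), and the density
`ρ = (1 - a ∂_t u) |∂_t V|² + c² |∇V|²` satisfies a balance law `∂_t ρ + div q = S` (`rho_balance`).
The bound on `‖∂_t u‖_∞` says exactly that the coefficient `1 - a ∂_t u` lies in `[1/2, 3/2]`. Every
term of `S` is a product of three derivatives of `u`.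

*Product estimate.* By Plancherel, convolution and Cauchy–Schwarz, `H^{s₁} · H^{s₂} ⊂ L²` as soon as
`s₁ + s₂ > n/2` (`exists_prod`). Distributing the derivatives in the cubic terms, `m ≥ ⌊n/2⌋ + 2`
gives `|∫ S| ≤ C (a + n b) E_m^{3/2}` (`exists_src`).

*Multiplicities.* Summing `∫ ρ` over all derivatives counts a mixed derivative `∂_t^j ∂^B` once as a
time derivative and once for each variable occurring in `B`. The modified energy `Fm` therefore
carries the weights `wt`, chosen so that it lies between `min (1/2) (c²) E_m` and `(3 + 2c²) E_m`
(`Fm_lower`, `Fm_upper`); this yields the stated constant `B`.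

*Integration over `ℝⁿ`.* The slices of `u` are Schwartz at each time, but nothing is assumed to be
uniform in time, so `∫ ρ` cannot be differentiated directly. Finite propagation speed replaces
uniformity. Weights that decrease along backward cones turn the balance law into an inequality
(`cone_ineq`). A continuity argument on shrinking cubes, closed by the Sobolev inequality on a cube
(`sobolev_cube`), bounds all high-order energies for a short time in terms of the initial one alone
(`local_bound`). Running it in both time directions and using compactness of `[0, T]` bounds the
energies (`energy_bdd`), hence the low-order derivatives (`low_bdd`). Letting the cones exhaust space
then gives the energy inequality on `ℝⁿ` by dominated convergence (`energy_ineq`).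
-/

open MeasureTheory Real

noncomputable section

/-- Spatial partial derivative in direction `i`. -/
def pd {n : ℕ} (i : Fin n) (f : (Fin n → ℝ) → ℝ) : (Fin n → ℝ) → ℝ :=
  fun x => fderiv ℝ f x (Pi.single i 1)

/-- Iterated spatial derivative `∂_{x₁}^{A₁} ⋯ ∂_{x_n}^{A_n}` along the multi-index `A`. -/
def pdMulti {n : ℕ} (A : Fin n → ℕ) (f : (Fin n → ℝ) → ℝ) : (Fin n → ℝ) → ℝ :=
  (List.finRange n).foldr (fun i g => (pd i)^[A i] g) f

/-- Squared `L²(ℝⁿ)` norm. -/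
def L2sq {n : ℕ} (f : (Fin n → ℝ) → ℝ) : ℝ := ∫ x, (f x) ^ 2

/-- `L^p(ℝⁿ)` norm. -/
def LpNorm {n : ℕ} (p : ℝ) (f : (Fin n → ℝ) → ℝ) : ℝ := (∫ x, |f x| ^ p) ^ p⁻¹

/-- `L^∞(ℝⁿ)` (sup) norm. -/
def supNorm {n : ℕ} (f : (Fin n → ℝ) → ℝ) : ℝ := ⨆ x, |f x|

/-- The finite set of spatial multi-indices of total order at most `k`. -/
def multiIdx (n k : ℕ) : Finset (Fin n → ℕ) :=
  (Fintype.piFinset fun _ : Fin n => Finset.range (k + 1)).filter fun A => (∑ i, A i) ≤ k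

/-- Squared Sobolev `H^k(ℝⁿ)` norm: the sum of the squared `L²` norms of all spatial
derivatives of order at most `k`. -/
def Hsq {n : ℕ} (k : ℕ) (f : (Fin n → ℝ) → ℝ) : ℝ := ∑ A ∈ multiIdx n k, L2sq (pdMulti A f)

/-- Squared `H^k` norm of the spatial gradient (sum over the components). -/
def gradHsq {n : ℕ} (k : ℕ) (f : (Fin n → ℝ) → ℝ) : ℝ := ∑ i, Hsq k (pd i f)

/-- Time derivative `∂_t u`. -/
def dt {n : ℕ} (u : ℝ → (Fin n → ℝ) → ℝ) : ℝ → (Fin n → ℝ) → ℝ :=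
  fun t x => deriv (fun s => u s x) t

/-- Iterated time derivative `∂_t^k u`. -/
def dtIter {n : ℕ} (k : ℕ) (u : ℝ → (Fin n → ℝ) → ℝ) : ℝ → (Fin n → ℝ) → ℝ :=
  fun t x => iteratedDeriv k (fun s => u s x) t

/-- Spatial Laplacian `Δu`. -/
def lap {n : ℕ} (u : ℝ → (Fin n → ℝ) → ℝ) : ℝ → (Fin n → ℝ) → ℝ :=
  fun t x => ∑ i, pd i (pd i (u t)) x

/-- Euclidean inner product of the spatial gradients, `∇u · ∇v`. -/
def gradDot {n : ℕ} (u v : ℝ → (Fin n → ℝ) → ℝ) : ℝ → (Fin n → ℝ) → ℝ :=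
  fun t x => ∑ i, pd i (u t) x * pd i (v t) x

/-- Squared norm of the spatial gradient, `|∇u|²`. -/
def gradSq {n : ℕ} (u : ℝ → (Fin n → ℝ) → ℝ) : ℝ → (Fin n → ℝ) → ℝ :=
  fun t x => ∑ i, (pd i (u t) x) ^ 2

/-- A function on `ℝⁿ` is Schwartz if it underlies a `SchwartzMap`. -/
def IsSchwartz {n : ℕ} (f : (Fin n → ℝ) → ℝ) : Prop :=
  ∃ g : SchwartzMap (Fin n → ℝ) ℝ, ⇑g = f

/-- A space-time function is smooth spatially-Schwartz if it is jointly smooth and all its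
time derivatives `∂_t^k u (t, ·)` are Schwartz functions of the space variable. -/
def SmoothSchwartz {n : ℕ} (u : ℝ → (Fin n → ℝ) → ℝ) : Prop :=
  ContDiff ℝ (⊤ : ℕ∞) (fun p : ℝ × (Fin n → ℝ) => u p.1 p.2) ∧
  ∀ (k : ℕ) (t : ℝ), IsSchwartz fun x => dtIter k u t x

/-- The energy `E_m[u](t)` for the inviscid Kuznetsov equation. -/
def Em {n : ℕ} (m : ℕ) (u : ℝ → (Fin n → ℝ) → ℝ) (t : ℝ) : ℝ :=
  gradHsq m (u t) + ∑ i ∈ Finset.Icc 1 (m + 1), Hsq (m + 1 - i) fun x => dtIter i u t x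

/-- The inviscid Kuznetsov equation at time `t`. -/
def InviscidKuznetsov {n : ℕ} (c α β ε : ℝ) (u : ℝ → (Fin n → ℝ) → ℝ) (t : ℝ) : Prop :=
  ∀ x, dtIter 2 u t x - c ^ 2 * lap u t x =
    α * ε * dt u t x * dtIter 2 u t x + β * ε * gradDot u (dt u) t x

section

/-! ### Calculus of iterated space-time derivatives -/

/-- Space-time `ℝ × ℝⁿ`, with the sup norm on the space factor. -/
abbrev SpT (n : ℕ) := ℝ × (Fin n → ℝ)

/-- A derivative direction: `none` is time, `some i` the `i`-th space direction. A list of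
directions (a word) encodes an iterated space-time derivative. -/
abbrev Dir (n : ℕ) := Option (Fin n)

/-- The unit vector of a direction. -/
def bv {n : ℕ} : Dir n → SpT n
  | none => (1, 0)
  | some i => (0, Pi.single i 1)

/-- First-order derivative of a space-time function in direction `d`. -/
def dD {n : ℕ} (d : Dir n) (f : SpT n → ℝ) : SpT n → ℝ := fun p => fderiv ℝ f p (bv d)

/-- Iterated derivative along a word; the head of the word is applied last. -/
def dW {n : ℕ} (w : List (Dir n)) (f : SpT n → ℝ) : SpT n → ℝ := w.foldr dD f

/-- Joint smoothness on space-time. -/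
abbrev Sm {n : ℕ} (f : SpT n → ℝ) : Prop := ContDiff ℝ (⊤ : ℕ∞) f

variable {n : ℕ}

@[simp] lemma dW_nil (f : SpT n → ℝ) : dW [] f = f := rfl
@[simp] lemma dW_cons (d : Dir n) (w : List (Dir n)) (f : SpT n → ℝ) :
    dW (d :: w) f = dD d (dW w f) := rfl
lemma dW_append (w w' : List (Dir n)) (f : SpT n → ℝ) : dW (w ++ w') f = dW w (dW w' f) := by
  simp [dW]

lemma Sm.diff {f : SpT n → ℝ} (hf : Sm f) : Differentiable ℝ f :=
  hf.differentiable (by simp)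

lemma Sm.dD {f : SpT n → ℝ} (hf : Sm f) (d : Dir n) : Sm (dD d f) :=
  (hf.fderiv_right (m := (⊤ : ℕ∞)) (by simp)).clm_apply contDiff_const

lemma Sm.dW {f : SpT n → ℝ} (hf : Sm f) (w : List (Dir n)) : Sm (dW w f) := by
  induction w with
  | nil => exact hf
  | cons d w ih => exact ih.dD d

lemma Sm.cont {f : SpT n → ℝ} (hf : Sm f) : Continuous f := ContDiff.continuous hf

lemma dD_add {f g : SpT n → ℝ} (hf : Sm f) (hg : Sm g) (d : Dir n) :
    dD d (fun p => f p + g p) = fun p => dD d f p + dD d g p := by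
  funext p
  simp only [dD]
  rw [fderiv_fun_add (hf.diff p) (hg.diff p)]; rfl

lemma dD_sub {f g : SpT n → ℝ} (hf : Sm f) (hg : Sm g) (d : Dir n) :
    dD d (fun p => f p - g p) = fun p => dD d f p - dD d g p := by
  funext p
  simp only [dD]
  rw [fderiv_fun_sub (hf.diff p) (hg.diff p)]; rfl

lemma dD_mul {f g : SpT n → ℝ} (hf : Sm f) (hg : Sm g) (d : Dir n) :
    dD d (fun p => f p * g p) = fun p => dD d f p * g p + f p * dD d g p := by
  funext p
  simp only [dD]
  rw [fderiv_fun_mul (hf.diff p) (hg.diff p)]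
  simp; ring

lemma dD_const (k : ℝ) (d : Dir n) : dD d (fun _ : SpT n => k) = fun _ => 0 := by
  funext p
  simp [dD]

lemma dD_const_mul {f : SpT n → ℝ} (hf : Sm f) (k : ℝ) (d : Dir n) :
    dD d (fun p => k * f p) = fun p => k * dD d f p := by
  funext p
  simp only [dD]
  rw [fderiv_const_mul (hf.diff p)]; rfl

lemma dD_sum {ι : Type*} (s : Finset ι) {f : ι → SpT n → ℝ} (hf : ∀ i ∈ s, Sm (f i)) (d : Dir n) :
    dD d (fun p => ∑ i ∈ s, f i p) = fun p => ∑ i ∈ s, dD d (f i) p := by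
  funext p
  simp only [dD]
  rw [fderiv_fun_sum fun i hi => (hf i hi).diff p]
  simp

lemma Sm.listSum {ι : Type*} (s : List ι) {f : ι → SpT n → ℝ} (hf : ∀ i ∈ s, Sm (f i)) :
    Sm (fun p => (s.map fun i => f i p).sum) := by
  induction s with
  | nil => simpa using contDiff_const
  | cons a s ih =>
    simp only [List.map_cons, List.sum_cons]
    exact (hf a (by simp)).add (ih fun i hi => hf i (by simp [hi]))

lemma dD_listSum {ι : Type*} (s : List ι) {f : ι → SpT n → ℝ} (hf : ∀ i ∈ s, Sm (f i)) (d : Dir n) :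
    dD d (fun p => (s.map fun i => f i p).sum) = fun p => (s.map fun i => dD d (f i) p).sum := by
  induction s with
  | nil => simpa using dD_const 0 d
  | cons a s ih =>
    simp only [List.map_cons, List.sum_cons]
    rw [dD_add (hf a (by simp)) (Sm.listSum s fun i hi => hf i (by simp [hi])),
      ih fun i hi => hf i (by simp [hi])]

lemma dW_sub {f g : SpT n → ℝ} (hf : Sm f) (hg : Sm g) (w : List (Dir n)) :
    dW w (fun p => f p - g p) = fun p => dW w f p - dW w g p := by
  induction w with
  | nil => rfl
  | cons d w ih => rw [dW_cons, ih, dD_sub (hf.dW w) (hg.dW w)]; rfl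

lemma dW_const_mul {f : SpT n → ℝ} (hf : Sm f) (k : ℝ) (w : List (Dir n)) :
    dW w (fun p => k * f p) = fun p => k * dW w f p := by
  induction w with
  | nil => rfl
  | cons d w ih => rw [dW_cons, ih, dD_const_mul (hf.dW w)]; rfl

lemma dW_sum {ι : Type*} (s : Finset ι) {f : ι → SpT n → ℝ} (hf : ∀ i ∈ s, Sm (f i))
    (w : List (Dir n)) :
    dW w (fun p => ∑ i ∈ s, f i p) = fun p => ∑ i ∈ s, dW w (f i) p := by
  induction w with
  | nil => rfl
  | cons d w ih => rw [dW_cons, ih, dD_sum s fun i hi => (hf i hi).dW w]; rfl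

lemma dW_zero (w : List (Dir n)) : dW w (fun _ => 0) = fun _ => (0 : ℝ) := by
  induction w with
  | nil => rfl
  | cons d w ih => rw [dW_cons, ih, dD_const]

/-- Symmetry of second derivatives. -/
lemma dD_comm {f : SpT n → ℝ} (hf : Sm f) (d e : Dir n) : dD d (dD e f) = dD e (dD d f) := by
  have key : ∀ d e : Dir n, ∀ p, dD d (dD e f) p = fderiv ℝ (fderiv ℝ f) p (bv d) (bv e) := by
    intro d e p
    have h1 : DifferentiableAt ℝ (fderiv ℝ f) p :=
      ((hf.fderiv_right (m := (⊤ : ℕ∞)) (by simp)).differentiable (by simp)) p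
    change fderiv ℝ (fun q => fderiv ℝ f q (bv e)) p (bv d) = _
    rw [fderiv_clm_apply h1 (differentiableAt_const _)]
    simp
  funext p
  rw [key, key]
  exact (ContDiffAt.isSymmSndFDerivAt (n := (⊤ : ℕ∞)) hf.contDiffAt
    (by rw [minSmoothness_of_isRCLikeNormedField]; exact WithTop.coe_le_coe.2 (le_top : (2 : ℕ∞) ≤ ⊤))) _ _

lemma dD_dW_comm {f : SpT n → ℝ} (hf : Sm f) (d : Dir n) (w : List (Dir n)) :
    dD d (dW w f) = dW w (dD d f) := by
  induction w with
  | nil => rfl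
  | cons e w ih => rw [dW_cons, dW_cons, dD_comm (hf.dW w), ih]

lemma dW_perm {f : SpT n → ℝ} (hf : Sm f) {w w' : List (Dir n)} (h : w.Perm w') :
    dW w f = dW w' f := by
  induction h with
  | nil => rfl
  | cons d _ ih => rw [dW_cons, dW_cons, ih]
  | swap d e w => simp only [dW_cons]; rw [dD_comm (hf.dW w)]
  | trans _ _ h1 h2 => rw [h1, h2]

/-- All ways of splitting a word into two complementary subwords. -/
def spl : List (Dir n) → List (List (Dir n) × List (Dir n))
  | [] => [([], [])]
  | d :: w => (spl w).map (fun p => (d :: p.1, p.2)) ++ (spl w).map (fun p => (p.1, d :: p.2))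

/-- The splittings of a word whose first part is nonempty: these index the commutator terms in
the Leibniz rule. -/
def spl' : List (Dir n) → List (List (Dir n) × List (Dir n))
  | [] => []
  | d :: w => (spl w).map (fun p => (d :: p.1, p.2)) ++ (spl' w).map (fun p => (p.1, d :: p.2))

lemma mem_spl (w : List (Dir n)) : ∀ p ∈ spl w, p.1.length + p.2.length = w.length := by
  induction w with
  | nil => simp [spl]
  | cons d w ih =>
    simp only [spl, List.mem_append, List.mem_map]
    rintro p (⟨q, hq, rfl⟩ | ⟨q, hq, rfl⟩) <;> have := ih q hq <;> simp <;> omega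

lemma mem_spl' (w : List (Dir n)) :
    ∀ p ∈ spl' w, p.1.length + p.2.length = w.length ∧ 1 ≤ p.1.length := by
  induction w with
  | nil => simp [spl']
  | cons d w ih =>
    simp only [spl', List.mem_append, List.mem_map]
    rintro p (⟨q, hq, rfl⟩ | ⟨q, hq, rfl⟩)
    · have := mem_spl w q hq
      simp; omega
    · have := ih q hq
      simp; omega

lemma dW_mul {f g : SpT n → ℝ} (hf : Sm f) (hg : Sm g) (w : List (Dir n)) :
    dW w (fun p => f p * g p) =
      fun p => ((spl w).map fun q => dW q.1 f p * dW q.2 g p).sum := by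
  induction w with
  | nil => simp [spl]
  | cons d w ih =>
    rw [dW_cons, ih, dD_listSum _ fun q _ => (hf.dW q.1).mul (hg.dW q.2)]
    funext p
    simp only [spl, List.map_append, List.sum_append, List.map_map]
    rw [← List.sum_map_add]
    congr 1
    refine List.map_congr_left fun q _ => ?_
    rw [dD_mul (hf.dW q.1) (hg.dW q.2)]
    rfl

/-- Among all splittings of a word, exactly one has an empty first part. -/
lemma spl_sum (w : List (Dir n)) (F : List (Dir n) × List (Dir n) → ℝ) :
    ((spl w).map F).sum = F ([], w) + ((spl' w).map F).sum := by
  induction w generalizing F with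
  | nil => simp [spl, spl']
  | cons d w ih =>
    simp only [spl, spl', List.map_append, List.sum_append, List.map_map]
    rw [ih (F ∘ fun p => (p.1, d :: p.2))]
    simp only [Function.comp_def]
    ring

/-- Leibniz rule with the undifferentiated first factor singled out. -/
lemma dW_mul' {f g : SpT n → ℝ} (hf : Sm f) (hg : Sm g) (w : List (Dir n)) :
    dW w (fun p => f p * g p) =
      fun p => f p * dW w g p + ((spl' w).map fun q => dW q.1 f p * dW q.2 g p).sum := by
  rw [dW_mul hf hg]
  funext p
  rw [spl_sum]
  rfl

lemma dD_congr_open {O : Set (SpT n)} (hO : IsOpen O) {f g : SpT n → ℝ} (h : ∀ p ∈ O, f p = g p)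
    (d : Dir n) : ∀ p ∈ O, dD d f p = dD d g p := by
  intro p hp
  simp only [dD]
  rw [Filter.EventuallyEq.fderiv_eq (Filter.eventually_of_mem (hO.mem_nhds hp) h)]

lemma dW_congr_open {O : Set (SpT n)} (hO : IsOpen O) {f g : SpT n → ℝ} (h : ∀ p ∈ O, f p = g p)
    (w : List (Dir n)) : ∀ p ∈ O, dW w f p = dW w g p := by
  induction w with
  | nil => exact h
  | cons d w ih => exact dD_congr_open hO ih d

lemma hasDerivAt_time {f : SpT n → ℝ} (hf : Sm f) (t : ℝ) (x : Fin n → ℝ) :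
    HasDerivAt (fun s => f (s, x)) (dD none f (t, x)) t := by
  have h1 := (hf.diff (t, x)).hasFDerivAt
  have h2 : HasDerivAt (fun s : ℝ => (s, x)) ((1 : ℝ), (0 : Fin n → ℝ)) t :=
    (hasDerivAt_id t).prodMk (hasDerivAt_const t x)
  exact h1.comp_hasDerivAt t h2

lemma Sm.slice {f : SpT n → ℝ} (hf : Sm f) (t : ℝ) :
    ContDiff ℝ (⊤ : ℕ∞) (fun y : Fin n → ℝ => f (t, y)) :=
  ContDiff.comp hf (contDiff_const.prodMk contDiff_id)

lemma dD_some_eq {f : SpT n → ℝ} (hf : Sm f) (i : Fin n) (t : ℝ) (x : Fin n → ℝ) :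
    dD (some i) f (t, x) = pd i (fun y => f (t, y)) x := by
  have h1 := (hf.diff (t, x)).hasFDerivAt
  have h2 : HasFDerivAt (fun y : Fin n → ℝ => (t, y))
      ((0 : (Fin n → ℝ) →L[ℝ] ℝ).prod (ContinuousLinearMap.id ℝ _)) x :=
    (hasFDerivAt_const t x).prodMk (hasFDerivAt_id x)
  have h3 := h1.comp x h2
  simp only [pd, dD]
  rw [show (fun y => f (t, y)) = f ∘ fun y => (t, y) from rfl, h3.fderiv]
  simp [bv]

/-- Uncurried form of a space-time function. -/
def unc (u : ℝ → (Fin n → ℝ) → ℝ) : SpT n → ℝ := fun p => u p.1 p.2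

lemma dtIter_eq {u : ℝ → (Fin n → ℝ) → ℝ} (hu : Sm (unc u)) (k : ℕ) (t : ℝ) (x : Fin n → ℝ) :
    dtIter k u t x = dW (List.replicate k none) (unc u) (t, x) := by
  induction k generalizing t with
  | zero => simp [dtIter, unc]
  | succ k ih =>
    have : (iteratedDeriv k fun s => u s x) =
        fun s => dW (List.replicate k none) (unc u) (s, x) := funext fun s => ih s
    simp only [dtIter, iteratedDeriv_succ]
    rw [this, (hasDerivAt_time (hu.dW _) t x).deriv]
    rfl

/-- The word of spatial directions of a multi-index. -/
def wA (A : Fin n → ℕ) : List (Dir n) :=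
  (List.finRange n).flatMap fun i => List.replicate (A i) (some i)

lemma pd_iter_eq {f : SpT n → ℝ} (hf : Sm f) (i : Fin n) (k : ℕ) (t : ℝ) :
    (pd i)^[k] (fun y => f (t, y)) = fun x => dW (List.replicate k (some i)) f (t, x) := by
  induction k with
  | zero => rfl
  | succ k ih =>
    rw [Function.iterate_succ_apply', ih]
    funext x
    rw [← dD_some_eq (hf.dW _)]
    rfl

lemma pdMulti_eq {f : SpT n → ℝ} (hf : Sm f) (A : Fin n → ℕ) (t : ℝ) :
    pdMulti A (fun y => f (t, y)) = fun x => dW (wA A) f (t, x) := by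
  unfold pdMulti wA
  induction List.finRange n with
  | nil => rfl
  | cons i l ih =>
    rw [List.foldr_cons, ih, List.flatMap_cons, pd_iter_eq (hf.dW _)]
    simp only [dW_append]

/-- The word of `∂^A ∂_t^j`. -/
def wJ (j : ℕ) (A : Fin n → ℕ) : List (Dir n) := wA A ++ List.replicate j none

lemma count_wA (A : Fin n → ℕ) (i : Fin n) : (wA A).count (some i) = A i := by
  unfold wA
  rw [List.count_flatMap]
  have : (List.count (some i) ∘ fun j : Fin n => List.replicate (A j) (some j)) =
      fun j => if j = i then A i else 0 := by
    funext j
    simp only [Function.comp, List.count_replicate]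
    by_cases h : j = i
    · subst h; simp
    · simp [h]
  rw [this, ← List.ofFn_eq_map, List.sum_ofFn]
  simp

lemma count_none_wA (A : Fin n → ℕ) : (wA A).count none = 0 := by
  rw [List.count_eq_zero]
  simp [wA]

lemma length_wA (A : Fin n → ℕ) : (wA A).length = ∑ i, A i := by
  unfold wA
  rw [List.length_flatMap]
  simp only [List.length_replicate]
  rw [← List.ofFn_eq_map, List.sum_ofFn]

lemma length_wJ (j : ℕ) (A : Fin n → ℕ) : (wJ j A).length = (∑ i, A i) + j := by
  simp [wJ, length_wA]

/-- Up to the order of differentiation, every word is of the form `∂^A ∂_t^j`. -/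
lemma perm_wJ (w : List (Dir n)) :
    w.Perm (wJ (w.count none) fun i => w.count (some i)) := by
  rw [List.perm_iff_count]
  rintro (_ | i)
  · simp [wJ, List.count_append, count_none_wA]
  · simp [wJ, List.count_append, count_wA, List.count_replicate]

/-! ### Schwartz functions on space -/

lemma IsSchwartz.pd {f : (Fin n → ℝ) → ℝ} (hf : IsSchwartz f) (i : Fin n) :
    IsSchwartz (pd i f) := by
  obtain ⟨g, rfl⟩ := hf
  refine ⟨LineDeriv.lineDerivOp (Pi.single i 1 : Fin n → ℝ) g, ?_⟩
  funext x
  rw [SchwartzMap.lineDerivOp_apply_eq_fderiv]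
  rfl

lemma IsSchwartz.pdMulti {f : (Fin n → ℝ) → ℝ} (hf : IsSchwartz f) (A : Fin n → ℕ) :
    IsSchwartz (pdMulti A f) := by
  unfold _root_.pdMulti
  induction List.finRange n with
  | nil => exact hf
  | cons i l ih =>
    rw [List.foldr_cons]
    induction A i with
    | zero => exact ih
    | succ k ihk => rw [Function.iterate_succ_apply']; exact ihk.pd i

lemma IsSchwartz.integrable {f : (Fin n → ℝ) → ℝ} (hf : IsSchwartz f) : Integrable f := by
  obtain ⟨g, rfl⟩ := hf
  exact g.integrable

lemma IsSchwartz.mul {f g : (Fin n → ℝ) → ℝ} (hf : IsSchwartz f) (hg : IsSchwartz g) :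
    IsSchwartz (fun x => f x * g x) := by
  obtain ⟨F, rfl⟩ := hf
  obtain ⟨G, rfl⟩ := hg
  exact ⟨SchwartzMap.pairing (ContinuousLinearMap.mul ℝ ℝ) F G, by funext x; simp⟩

lemma IsSchwartz.const_mul {f : (Fin n → ℝ) → ℝ} (hf : IsSchwartz f) (k : ℝ) :
    IsSchwartz (fun x => k * f x) := by
  obtain ⟨F, rfl⟩ := hf
  exact ⟨k • F, by funext x; simp⟩

lemma IsSchwartz.add {f g : (Fin n → ℝ) → ℝ} (hf : IsSchwartz f) (hg : IsSchwartz g) :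
    IsSchwartz (fun x => f x + g x) := by
  obtain ⟨F, rfl⟩ := hf
  obtain ⟨G, rfl⟩ := hg
  exact ⟨F + G, by funext x; simp⟩

lemma IsSchwartz.zero : IsSchwartz (fun _ : Fin n → ℝ => 0) := ⟨0, by funext x; simp⟩

lemma IsSchwartz.listSum {ι : Type*} (s : List ι) {f : ι → (Fin n → ℝ) → ℝ}
    (hf : ∀ i ∈ s, IsSchwartz (f i)) : IsSchwartz (fun x => (s.map fun i => f i x).sum) := by
  induction s with
  | nil => simpa using IsSchwartz.zero
  | cons a s ih =>
    simp only [List.map_cons, List.sum_cons]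
    exact (hf a (by simp)).add (ih fun i hi => hf i (by simp [hi]))

lemma IsSchwartz.sum {ι : Type*} (s : Finset ι) {f : ι → (Fin n → ℝ) → ℝ}
    (hf : ∀ i ∈ s, IsSchwartz (f i)) : IsSchwartz (fun x => ∑ i ∈ s, f i x) := by
  have := IsSchwartz.listSum s.toList (f := f) (by simpa using hf)
  simpa [Finset.sum_map_toList] using this

lemma IsSchwartz.bdd {f : (Fin n → ℝ) → ℝ} (hf : IsSchwartz f) : ∃ C, ∀ x, |f x| ≤ C := by
  obtain ⟨F, rfl⟩ := hf
  refine ⟨SchwartzMap.seminorm ℝ 0 0 F, fun x => ?_⟩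
  have := SchwartzMap.norm_le_seminorm ℝ F x
  simpa using this

lemma SmoothSchwartz.sm {u : ℝ → (Fin n → ℝ) → ℝ} (hu : SmoothSchwartz u) : Sm (unc u) := hu.1

/-- Every mixed space-time derivative has Schwartz time slices. -/
lemma SmoothSchwartz.word {u : ℝ → (Fin n → ℝ) → ℝ} (hu : SmoothSchwartz u)
    (w : List (Dir n)) (t : ℝ) : IsSchwartz (fun x => dW w (unc u) (t, x)) := by
  rw [dW_perm hu.sm (perm_wJ w), wJ, dW_append, ← pdMulti_eq (hu.sm.dW _)]
  refine IsSchwartz.pdMulti ?_ _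
  have := hu.2 (w.count none) t
  simpa only [dtIter_eq hu.sm] using this

/-! ### Weights on backward cones -/

/-- A nonnegative weight that decreases along every direction of speed at most `M`, at rate `k`. -/
structure Decr (M k : ℝ) (G : SpT n → ℝ) : Prop where
  sm : Sm G
  nonneg : ∀ p, 0 ≤ G p
  ineq : ∀ p, dD none G p + M * ∑ i, |dD (some i) G p| + k * G p ≤ 0

lemma Decr.mul {M k l : ℝ} {G H : SpT n → ℝ} (hM : 0 ≤ M) (hG : Decr M k G) (hH : Decr M l H) :
    Decr M (k + l) (fun p => G p * H p) where
  sm := hG.sm.mul hH.sm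
  nonneg p := mul_nonneg (hG.nonneg p) (hH.nonneg p)
  ineq p := by
    rw [dD_mul hG.sm hH.sm]
    have h1 : ∑ i, |dD (some i) (fun p => G p * H p) p| ≤
        (∑ i, |dD (some i) G p|) * H p + G p * ∑ i, |dD (some i) H p| := by
      rw [Finset.sum_mul, Finset.mul_sum, ← Finset.sum_add_distrib]
      refine Finset.sum_le_sum fun i _ => ?_
      rw [dD_mul hG.sm hH.sm]
      refine (abs_add_le _ _).trans ?_
      rw [abs_mul, abs_mul, abs_of_nonneg (hH.nonneg p), abs_of_nonneg (hG.nonneg p)]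
    have h2 := mul_le_mul_of_nonneg_left h1 hM
    have h3 := mul_le_mul_of_nonneg_right (hG.ineq p) (hH.nonneg p)
    have h4 := mul_le_mul_of_nonneg_left (hH.ineq p) (hG.nonneg p)
    simp only
    nlinarith

lemma Decr.one {M : ℝ} : Decr M 0 (fun _ : SpT n => (1 : ℝ)) where
  sm := contDiff_const
  nonneg _ := zero_le_one
  ineq p := by simp [dD_const]

lemma Decr.prod {M : ℝ} (hM : 0 ≤ M) {ι : Type*} (s : Finset ι) {G : ι → SpT n → ℝ}
    (hG : ∀ i ∈ s, Decr M 0 (G i)) : Decr M 0 (fun p => ∏ i ∈ s, G i p) := by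
  classical
  induction s using Finset.induction_on with
  | empty => simpa using Decr.one
  | insert a s ha ih =>
    have := (hG a (by simp)).mul hM (ih fun i hi => hG i (by simp [hi]))
    simpa [Finset.prod_insert ha] using this

lemma Decr.exp {M : ℝ} (k : ℝ) : Decr M k (fun p : SpT n => Real.exp (-(k * p.1))) := by
  have key : ∀ (d : Dir n) p, dD d (fun p : SpT n => Real.exp (-(k * p.1))) p
      = Real.exp (-(k * p.1)) * (-(k * (bv d).1)) := by
    intro d p
    have h1 : HasFDerivAt (fun p : SpT n => -(k * p.1))
      (-(k • ContinuousLinearMap.fst ℝ ℝ (Fin n → ℝ))) p :=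
      (((ContinuousLinearMap.fst ℝ ℝ (Fin n → ℝ)).hasFDerivAt).const_mul k).neg
    rw [dD, h1.exp.fderiv]
    simp
  refine ⟨?_, fun p => (Real.exp_pos _).le, fun p => ?_⟩
  · exact ContDiff.exp ((contDiff_const.mul contDiff_fst).neg)
  · simp only [key]
    simp [bv]
    linarith

/-- The factor of the cutoff attached to the face `-σ x_j = r0 - M s` of the shrinking cube: it
depends on `s` and `x_j` through a monotone function of `-M s + σ x_j`, so its time derivative
absorbs `M` times its space derivative. -/
lemma Decr.face {M : ℝ} (r0 : ℝ) {e : ℝ} (he : 0 < e) (σ : ℝ) (hσ : |σ| = 1) (j : Fin n) :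
    Decr M 0 (fun p : SpT n => smoothTransition ((r0 - M * p.1 + σ * p.2 j) / e)) := by
  set θ' := deriv smoothTransition
  have hθ' : ∀ y, 0 ≤ θ' y := fun y => Real.smoothTransition.monotone.deriv_nonneg
  have key : ∀ (d : Dir n) p,
      dD d (fun p : SpT n => smoothTransition ((r0 - M * p.1 + σ * p.2 j) / e)) p
      = θ' ((r0 - M * p.1 + σ * p.2 j) / e) * ((-M * (bv d).1 + σ * (bv d).2 j) / e) := by
    intro d p
    let L : SpT n →L[ℝ] ℝ := e⁻¹ • (-(M • ContinuousLinearMap.fst ℝ ℝ (Fin n → ℝ)) +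
      σ • ((ContinuousLinearMap.proj j).comp (ContinuousLinearMap.snd ℝ ℝ (Fin n → ℝ))))
    have h1 : HasFDerivAt (fun p : SpT n => (r0 - M * p.1 + σ * p.2 j) / e) L p := by
      have := (L.hasFDerivAt (x := p)).const_add (r0 / e)
      refine this.congr_of_eventuallyEq (Filter.Eventually.of_forall fun q => ?_)
      simp [L]; field_simp; ring
    have h2 : HasDerivAt smoothTransition (θ' ((r0 - M * p.1 + σ * p.2 j) / e))
        ((r0 - M * p.1 + σ * p.2 j) / e) :=
      ((Real.smoothTransition.contDiff (n := 1)).differentiable (by simp) _).hasDerivAt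
    have h3 := h2.comp_hasFDerivAt p h1
    rw [dD]
    have h4 := h3.fderiv
    rw [show (smoothTransition ∘ fun p : SpT n => (r0 - M * p.1 + σ * p.2 j) / e) =
      (fun p : SpT n => smoothTransition ((r0 - M * p.1 + σ * p.2 j) / e)) from rfl] at h4
    rw [h4]
    simp [L]; ring
  refine ⟨?_, fun p => Real.smoothTransition.nonneg _, fun p => ?_⟩
  · refine Real.smoothTransition.contDiff.comp ?_
    have h : ContDiff ℝ (⊤ : ℕ∞) (fun p : SpT n => p.2 j) :=
      (contDiff_apply ℝ ℝ j).comp contDiff_snd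
    exact (((contDiff_const.sub (contDiff_const.mul contDiff_fst)).add
      (contDiff_const.mul h)).div_const _)
  · simp only [key, bv]
    rw [Finset.sum_eq_single j]
    · simp [abs_mul, hσ, abs_div, abs_of_pos he, abs_of_nonneg (hθ' _)]
      apply le_of_eq; ring
    · intro b _ hb
      simp [hb.symm]
    · simp

/-- Smooth cutoff of the shrinking cube `|x|_∞ ≤ r0 - M s`, with exponential time decay of rate
`k`; the transition layer has width `e`. -/
def cone (r0 M k e : ℝ) : SpT n → ℝ := fun p => Real.exp (-(k * p.1)) * ∏ i,
  (smoothTransition ((r0 - M * p.1 + 1 * p.2 i) / e) *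
    smoothTransition ((r0 - M * p.1 + (-1) * p.2 i) / e))

lemma cone_decr {M : ℝ} (hM : 0 ≤ M) (r0 k : ℝ) {e : ℝ} (he : 0 < e) :
    Decr M k (cone (n := n) r0 M k e) := by
  have h1 : ∀ i ∈ Finset.univ, Decr (n := n) M 0 (fun p =>
      smoothTransition ((r0 - M * p.1 + 1 * p.2 i) / e) *
        smoothTransition ((r0 - M * p.1 + (-1) * p.2 i) / e)) := fun i _ => by
    have := (Decr.face (M := M) r0 he 1 (by simp) i).mul hM (Decr.face r0 he (-1) (by simp) i)
    rwa [add_zero] at this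
  have h := (Decr.exp (n := n) (M := M) k).mul hM (Decr.prod hM Finset.univ h1)
  rwa [add_zero] at h

lemma cone_le_exp (r0 M k e : ℝ) (p : SpT n) : cone r0 M k e p ≤ Real.exp (-(k * p.1)) := by
  unfold cone
  refine mul_le_of_le_one_right (Real.exp_pos _).le (Finset.prod_le_one ?_ ?_)
  · exact fun i _ => mul_nonneg (smoothTransition.nonneg _) (smoothTransition.nonneg _)
  · exact fun i _ => mul_le_one₀ (smoothTransition.le_one _) (smoothTransition.nonneg _)
      (smoothTransition.le_one _)

lemma cone_eq_zero {r0 M k e : ℝ} (he : 0 < e) {p : SpT n} {R : ℝ}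
    (hR0 : 0 ≤ R) (hR : r0 - M * p.1 ≤ R) (h : R < ‖p.2‖) : cone r0 M k e p = 0 := by
  have : ¬ ∀ i, ‖p.2 i‖ ≤ R := fun h' =>
    absurd ((pi_norm_le_iff_of_nonneg hR0).2 h') (not_le.2 h)
  push Not at this
  obtain ⟨i, hi⟩ := this
  unfold cone
  rw [Finset.prod_eq_zero (Finset.mem_univ i), mul_zero]
  rw [Real.norm_eq_abs] at hi
  rcases lt_abs.1 hi with h | h
  · rw [smoothTransition.zero_of_nonpos (x := (r0 - M * p.1 + (-1) * p.2 i) / e), mul_zero]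
    exact div_nonpos_of_nonpos_of_nonneg (by linarith) he.le
  · rw [smoothTransition.zero_of_nonpos (x := (r0 - M * p.1 + 1 * p.2 i) / e), zero_mul]
    exact div_nonpos_of_nonpos_of_nonneg (by linarith) he.le

lemma cone_eq_exp {r0 M k e : ℝ} (he : 0 < e) {p : SpT n}
    (h : ‖p.2‖ ≤ r0 - M * p.1 - e) : cone r0 M k e p = Real.exp (-(k * p.1)) := by
  unfold cone
  rw [Finset.prod_eq_one, mul_one]
  intro i _
  have hi : |p.2 i| ≤ r0 - M * p.1 - e := (norm_le_pi_norm p.2 i).trans h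
  have := abs_le.1 hi
  rw [smoothTransition.one_of_one_le, smoothTransition.one_of_one_le, mul_one]
  · rw [le_div_iff₀ he]; linarith
  · rw [le_div_iff₀ he]; linarith

lemma integrable_slice {f : SpT n → ℝ} (hf : Continuous f) (s R : ℝ)
    (h : ∀ x, R < ‖x‖ → f (s, x) = 0) : Integrable (fun x => f (s, x)) := by
  refine Continuous.integrable_of_hasCompactSupport (by fun_prop) ?_
  refine HasCompactSupport.intro (isCompact_closedBall 0 R) fun x hx => h x ?_
  simpa using hx

/-- Weighted energy identity: integrate `∂ₜ(Wρ) + div(Wq)` for a divergence-form balance law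
`∂ₜρ + div q = S`. -/
lemma cone_identity {ρ S W : SpT n → ℝ} {q : Fin n → SpT n → ℝ} (hρ : Sm ρ) (hS : Continuous S)
    (hW : Sm W) (hq : ∀ i, Sm (q i)) {s1 : ℝ} (hs1 : 0 ≤ s1) (R : ℝ)
    (hsupp : ∀ s, -1 < s → ∀ x, R < ‖x‖ → W (s, x) = 0)
    (hid : ∀ s ∈ Set.Ioo 0 s1, ∀ x, dD none ρ (s, x) + ∑ i, dD (some i) (q i) (s, x) = S (s, x)) :
    (∫ x, W (s1, x) * ρ (s1, x)) - ∫ x, W (0, x) * ρ (0, x) =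
      ∫ s in (0:ℝ)..s1, ∫ x, (dD none W (s, x) * ρ (s, x) +
        ∑ i, dD (some i) W (s, x) * q i (s, x) + W (s, x) * S (s, x)) := by
  have hO : IsOpen {p : SpT n | -1 < p.1 ∧ R < ‖p.2‖} :=
    (isOpen_lt continuous_const continuous_fst).inter (isOpen_lt continuous_const continuous_snd.norm)
  have hd0 : ∀ d s, -1 < s → ∀ x, R < ‖x‖ → dD d W (s, x) = 0 := by
    intro d s hs x hx
    have := dD_congr_open hO (f := W) (g := fun _ => 0) (fun p hp => hsupp p.1 hp.1 p.2 hp.2) d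
      (s, x) ⟨hs, hx⟩
    rw [this, dD_const]
  set F : SpT n → ℝ := fun p => W p * ρ p with hF
  have hFs : Sm F := hW.mul hρ
  have hdF : dD none F = fun p => dD none W p * ρ p + W p * dD none ρ p := dD_mul hW hρ none
  have hres : ∀ s, -1 < s → ∀ f : SpT n → ℝ, (∀ x, R < ‖x‖ → f (s, x) = 0) →
      ∫ x in Metric.closedBall 0 R, f (s, x) = ∫ x, f (s, x) := by
    intro s _ f hf
    refine setIntegral_eq_integral_of_forall_compl_eq_zero fun x hx => hf x ?_
    simpa using hx
  have h0 : (-1 : ℝ) < 0 := by norm_num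
  have hF0 : ∀ s, -1 < s → ∀ x, R < ‖x‖ → F (s, x) = 0 := by
    intro s hs x hx; simp [hF, hsupp s hs x hx]
  have hdF0 : ∀ s, -1 < s → ∀ x, R < ‖x‖ → dD none F (s, x) = 0 := by
    intro s hs x hx; simp [hdF, hsupp s hs x hx, hd0 none s hs x hx]
  have hFTC : ∀ x, F (s1, x) - F (0, x) = ∫ s in (0:ℝ)..s1, dD none F (s, x) := by
    intro x
    rw [intervalIntegral.integral_eq_sub_of_hasDerivAt
      (f := fun s => F (s, x)) (fun s _ => hasDerivAt_time hFs s x)]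
    exact ((hFs.dD none).cont.comp (by fun_prop : Continuous fun s : ℝ => (s, x))).intervalIntegrable _ _
  change (∫ x, F (s1, x)) - ∫ x, F (0, x) = _
  rw [← integral_sub (integrable_slice hFs.cont s1 R (hF0 s1 (by linarith)))
    (integrable_slice hFs.cont 0 R (hF0 0 h0))]
  have e1 : ∫ x, (F (s1, x) - F (0, x)) =
      ∫ x in Metric.closedBall 0 R, (F (s1, x) - F (0, x)) := by
    symm
    refine setIntegral_eq_integral_of_forall_compl_eq_zero fun x hx => ?_
    have hx : R < ‖x‖ := by simpa using hx
    rw [hF0 s1 (by linarith) x hx, hF0 0 h0 x hx, sub_zero]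
  rw [e1]
  simp_rw [hFTC]
  rw [← intervalIntegral_integral_swap (f := fun s x => dD none F (s, x))]
  swap
  · rw [Measure.prod_restrict]
    have : IntegrableOn (dD none F) (Set.uIcc 0 s1 ×ˢ Metric.closedBall (0 : Fin n → ℝ) R)
        ((volume : Measure ℝ).prod volume) :=
      (hFs.dD none).cont.continuousOn.integrableOn_compact
        (isCompact_uIcc.prod (isCompact_closedBall _ _))
    exact this.mono_set (Set.prod_mono Set.uIoc_subset_uIcc subset_rfl)
  rw [intervalIntegral.integral_of_le hs1, intervalIntegral.integral_of_le hs1,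
    integral_Ioc_eq_integral_Ioo, integral_Ioc_eq_integral_Ioo]
  refine setIntegral_congr_fun measurableSet_Ioo fun s hs => ?_
  have hsm : -1 < s := by linarith [hs.1]
  rw [hres s hsm _ (hdF0 s hsm)]
  have ibp : ∀ i, ∫ x, W (s, x) * dD (some i) (q i) (s, x) =
      - ∫ x, dD (some i) W (s, x) * q i (s, x) := by
    intro i
    simp_rw [dD_some_eq (hq i), dD_some_eq hW]
    refine integral_mul_fderiv_eq_neg_fderiv_mul_of_integrable (f := fun x => W (s, x))
      (g := fun x => q i (s, x)) (v := Pi.single i 1) ?_ ?_ ?_ ?_ ?_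
    · have := integrable_slice (f := fun p => dD (some i) W p * q i p)
        ((hW.dD _).cont.mul (hq i).cont) s R (fun x hx => by simp [hd0 _ s hsm x hx])
      simp only [dD_some_eq hW] at this; exact this
    · have := integrable_slice (f := fun p => W p * dD (some i) (q i) p)
        (hW.cont.mul ((hq i).dD _).cont) s R (fun x hx => by simp [hsupp s hsm x hx])
      simp only [dD_some_eq (hq i)] at this; exact this
    · exact integrable_slice (f := fun p => W p * q i p)
        (hW.cont.mul (hq i).cont) s R (fun x hx => by simp [hsupp s hsm x hx])
    · intro x _; exact (hW.slice s).differentiable (by simp) x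
    · intro x _; exact ((hq i).slice s).differentiable (by simp) x
  have i1 : Integrable fun x => dD none W (s, x) * ρ (s, x) :=
    integrable_slice (f := fun p => dD none W p * ρ p) ((hW.dD _).cont.mul hρ.cont) s R
      (fun x hx => by simp [hd0 _ s hsm x hx])
  have i2 : ∀ i, Integrable fun x => dD (some i) W (s, x) * q i (s, x) := fun i =>
    integrable_slice (f := fun p => dD (some i) W p * q i p) ((hW.dD _).cont.mul (hq i).cont) s R
      (fun x hx => by simp [hd0 _ s hsm x hx])
  have i3 : Integrable fun x => W (s, x) * S (s, x) :=
    integrable_slice (f := fun p => W p * S p) (hW.cont.mul hS) s R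
      (fun x hx => by simp [hsupp s hsm x hx])
  have i4 : ∀ i, Integrable fun x => W (s, x) * dD (some i) (q i) (s, x) := fun i =>
    integrable_slice (f := fun p => W p * dD (some i) (q i) p) (hW.cont.mul ((hq i).dD _).cont) s R
      (fun x hx => by simp [hsupp s hsm x hx])
  have i5 := integrable_finsetSum Finset.univ fun i _ => i4 i
  have i6 := integrable_finsetSum Finset.univ fun i _ => i2 i
  have e2 : ∀ x, dD none F (s, x) = (dD none W (s, x) * ρ (s, x) + W (s, x) * S (s, x))
      - ∑ i, W (s, x) * dD (some i) (q i) (s, x) := by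
    intro x
    rw [hdF, ← hid s hs x, ← Finset.mul_sum]; ring
  have e3 : ∀ x, dD none W (s, x) * ρ (s, x) + ∑ i, dD (some i) W (s, x) * q i (s, x)
      + W (s, x) * S (s, x) = (dD none W (s, x) * ρ (s, x) + W (s, x) * S (s, x))
      + ∑ i, dD (some i) W (s, x) * q i (s, x) := fun x => by ring
  simp_rw [e2, e3]
  have i13 : Integrable fun x => dD none W (s, x) * ρ (s, x) + W (s, x) * S (s, x) := i1.add i3
  rw [integral_sub i13 i5, integral_add i13 i6,
    integral_finsetSum _ (fun i _ => i4 i), integral_finsetSum _ (fun i _ => i2 i)]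
  simp_rw [ibp]
  rw [Finset.sum_neg_distrib]; ring

/-! ### Pointwise bounds from `L²` bounds on cubes -/

/-- One-dimensional Sobolev inequality. The lower bound `1` on the length of the interval makes
the constant independent of the interval. -/
lemma sobolev_one {h h' : ℝ → ℝ} (hd : ∀ y, HasDerivAt h (h' y) y) (hc : Continuous h')
    {a b x : ℝ} (hab : 1 ≤ b - a) (hx : x ∈ Set.Icc a b) :
    h x ^ 2 ≤ 2 * ∫ y in a..b, (h y ^ 2 + h' y ^ 2) := by
  have hle : a ≤ b := by linarith
  have hch : Continuous h := continuous_iff_continuousAt.2 fun y => (hd y).continuousAt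
  set I := ∫ y in a..b, (h y ^ 2 + h' y ^ 2) with hI
  have hint : ∀ u v, IntervalIntegrable (fun y => h y ^ 2 + h' y ^ 2) volume u v :=
    fun u v => (by fun_prop : Continuous fun y => h y ^ 2 + h' y ^ 2).intervalIntegrable _ _
  have hy : ∀ y ∈ Set.Icc a b, h x ^ 2 ≤ h y ^ 2 + I := by
    intro y hy
    have e1 : ∫ z in y..x, 2 * h z * h' z = h x ^ 2 - h y ^ 2 := by
      refine intervalIntegral.integral_eq_sub_of_hasDerivAt (f := fun z => h z ^ 2) (fun z _ => ?_)
        ((by fun_prop : Continuous fun z => 2 * h z * h' z).intervalIntegrable _ _)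
      have := (hd z).pow 2
      simp only [Nat.cast_ofNat, Nat.add_one_sub_one, pow_one] at this
      exact this
    have e2 : |∫ z in y..x, 2 * h z * h' z| ≤ |∫ z in y..x, (h z ^ 2 + h' z ^ 2)| := by
      have hb : ∀ z, ‖2 * h z * h' z‖ ≤ h z ^ 2 + h' z ^ 2 := fun z => by
        rw [Real.norm_eq_abs, abs_le]
        constructor <;> nlinarith [sq_nonneg (h z - h' z), sq_nonneg (h z + h' z)]
      exact intervalIntegral.norm_integral_le_abs_of_norm_le (Filter.Eventually.of_forall hb)
        (hint _ _)
    have e3 : |∫ z in y..x, (h z ^ 2 + h' z ^ 2)| ≤ |I| := by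
      refine intervalIntegral.abs_integral_mono_interval ?_ (Filter.Eventually.of_forall fun z => ?_) (hint _ _)
      · rw [Set.uIoc_of_le hle]
        intro z hz
        rcases Set.mem_uIoc.1 hz with h | h <;> constructor <;> linarith [h.1, h.2, hx.1, hx.2, hy.1, hy.2]
      · simp only [Pi.zero_apply]; positivity
    have e4 : 0 ≤ I := intervalIntegral.integral_nonneg hle fun z _ => by positivity
    rw [abs_of_nonneg e4] at e3
    have := le_abs_self (∫ z in y..x, 2 * h z * h' z)
    linarith
  have hm : ∫ _ in a..b, h x ^ 2 ≤ ∫ y in a..b, (h y ^ 2 + I) :=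
    intervalIntegral.integral_mono_on hle (by simp)
      ((by fun_prop : Continuous fun y => h y ^ 2 + I).intervalIntegrable _ _) hy
  have hm2 : ∫ y in a..b, h y ^ 2 ≤ I :=
    intervalIntegral.integral_mono_on hle
      ((by fun_prop : Continuous fun y => h y ^ 2).intervalIntegrable _ _) (hint _ _)
      fun y _ => by nlinarith [sq_nonneg (h' y)]
  rw [intervalIntegral.integral_add ((by fun_prop : Continuous fun y => h y ^ 2).intervalIntegrable _ _)
    (by simp)] at hm
  simp only [intervalIntegral.integral_const, smul_eq_mul] at hm
  have hI0 : 0 ≤ I := intervalIntegral.integral_nonneg hle fun z _ => by positivity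
  have : (b - a) * h x ^ 2 ≤ (b - a) * (2 * I) := by nlinarith
  exact le_of_mul_le_mul_left this (by linarith)

/-- The density controlling pointwise values: the sum of the squares of all spatial derivatives
along subwords of `l`. -/
def sob : List (Fin n) → (SpT n → ℝ) → SpT n → ℝ
  | [], g => fun p => g p ^ 2
  | i :: l, g => fun p => sob l g p + sob l (dD (some i) g) p

lemma sob_nonneg (l : List (Fin n)) (g : SpT n → ℝ) (p : SpT n) : 0 ≤ sob l g p := by
  induction l generalizing g with
  | nil => exact sq_nonneg _
  | cons i l ih => exact add_nonneg (ih _) (ih _)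

lemma sob_cont (l : List (Fin n)) {g : SpT n → ℝ} (hg : Sm g) : Continuous (sob l g) := by
  induction l generalizing g with
  | nil => exact hg.cont.pow 2
  | cons i l ih => exact (ih hg).add (ih (hg.dD _))

lemma sob_le (l : List (Fin n)) (U : SpT n → ℝ) (w : List (Dir n)) (p : SpT n) (X : ℝ)
    (hX : ∀ w' : List (Dir n), w.length ≤ w'.length → w'.length ≤ w.length + l.length →
      dW w' U p ^ 2 ≤ X) : sob l (dW w U) p ≤ 2 ^ l.length * X := by
  induction l generalizing w with
  | nil => simpa [sob] using hX w le_rfl (by simp)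
  | cons i l ih =>
    have h1 := ih w fun w' h1 h2 => hX w' h1 (by simp; omega)
    have h2 := ih (some i :: w) fun w' h1 h2 => hX w' (by simp at h1; omega)
      (by simp at h2 ⊢; omega)
    simp only [dW_cons] at h2
    simp only [sob, List.length_cons, pow_succ]
    linarith

/-- `sobolev_one` applied successively in the variables listed in `l`, the other variables being
frozen at their values in `x`. -/
lemma sobolev_lmarginal {g : SpT n → ℝ} (hg : Sm g) (s : ℝ) {r : ℝ} (hr : 1 / 2 ≤ r)
    (l : List (Fin n)) (hl : l.Nodup) (x : Fin n → ℝ) (hx : ∀ i, |x i| ≤ r) :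
    ENNReal.ofReal (g (s, x) ^ 2) ≤ 2 ^ l.length *
      (∫⋯∫⁻_l.toFinset, (fun y => (Metric.closedBall (0 : Fin n → ℝ) r).indicator
        (fun y => ENNReal.ofReal (sob l g (s, y))) y) ∂(fun _ => volume)) x := by
  have hr0 : 0 ≤ r := by linarith
  induction l generalizing g x with
  | nil =>
    have : x ∈ Metric.closedBall (0 : Fin n → ℝ) r := by
      rw [mem_closedBall_zero_iff, pi_norm_le_iff_of_nonneg hr0]; exact hx
    simp [sob, this]
  | cons i l ih =>
    have hi : i ∉ l.toFinset := by simpa using (List.nodup_cons.1 hl).1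
    rw [List.toFinset_cons, lmarginal_insert _ ?_ hi]
    swap
    · refine (Measurable.indicator ?_ Metric.isClosed_closedBall.measurableSet)
      exact ((sob_cont (i :: l) hg).comp (by fun_prop : Continuous fun y : Fin n → ℝ => (s, y))).measurable.ennreal_ofReal
    set h : ℝ → ℝ := fun y => g (s, Function.update x i y) with hh
    set h' : ℝ → ℝ := fun y => dD (some i) g (s, Function.update x i y) with hh'
    have hd : ∀ y, HasDerivAt h (h' y) y := by
      intro y
      have h1 := (hg.diff (s, Function.update x i y)).hasFDerivAt
      have h2 : HasDerivAt (fun y : ℝ => (s, Function.update x i y))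
          ((0 : ℝ), (Pi.single i (1 : ℝ) : Fin n → ℝ)) y :=
        (hasDerivAt_const y s).prodMk (hasDerivAt_update x i y)
      exact h1.comp_hasDerivAt y h2
    have hupd : Continuous fun y : ℝ => (s, Function.update x i y) :=
      continuous_const.prodMk (continuous_const.update i continuous_id)
    have hc' : Continuous h' := (hg.dD _).cont.comp hupd
    have hc : Continuous h := hg.cont.comp hupd
    have h1 := sobolev_one hd hc' (a := -r) (b := r) (by linarith) (abs_le.1 (hx i))
    have hxi : h (x i) = g (s, x) := by simp [hh]
    rw [hxi, intervalIntegral.integral_of_le (by linarith)] at h1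
    have hint : IntegrableOn (fun y => h y ^ 2 + h' y ^ 2) (Set.Ioc (-r) r) :=
      ((by fun_prop : Continuous fun y => h y ^ 2 + h' y ^ 2).integrableOn_Icc (a := -r) (b := r)).mono_set
        Set.Ioc_subset_Icc_self
    have h2 : ENNReal.ofReal (g (s, x) ^ 2) ≤ 2 * ∫⁻ y in Set.Ioc (-r) r,
        (ENNReal.ofReal (h y ^ 2) + ENNReal.ofReal (h' y ^ 2)) := by
      refine (ENNReal.ofReal_le_ofReal h1).trans ?_
      rw [ENNReal.ofReal_mul (by norm_num), ofReal_integral_eq_lintegral_ofReal hint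
        (Filter.Eventually.of_forall fun y => by simp only [Pi.zero_apply]; positivity)]
      simp only [ENNReal.ofReal_ofNat]
      gcongr with y
      rw [ENNReal.ofReal_add (sq_nonneg _) (sq_nonneg _)]
    refine h2.trans ?_
    rw [List.length_cons, pow_succ', mul_assoc]
    gcongr
    rw [← lintegral_const_mul' _ _ (by simp)]
    refine (setLIntegral_mono' measurableSet_Ioc fun y hy => ?_).trans
      (setLIntegral_le_lintegral (Set.Ioc (-r) r) _)
    have hxu : ∀ j, |Function.update x i y j| ≤ r := by
      intro j
      by_cases hj : j = i
      · subst hj; simpa using abs_le.2 ⟨hy.1.le, hy.2⟩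
      · simpa [hj] using hx j
    refine (add_le_add (ih hg (List.nodup_cons.1 hl).2 _ hxu)
      (ih (hg.dD (some i)) (List.nodup_cons.1 hl).2 _ hxu)).trans ?_
    rw [← mul_add]
    gcongr
    simp only [lmarginal]
    refine (le_lintegral_add _ _).trans (lintegral_mono fun z => ?_)
    simp only [Set.indicator]
    split_ifs
    · rw [← ENNReal.ofReal_add (sob_nonneg _ _ _) (sob_nonneg _ _ _)]; rfl
    · simp

/-- Pointwise control on a cube by the `L²` norms of derivatives of order at most `n` there. -/
lemma sobolev_cube {g : SpT n → ℝ} (hg : Sm g) (s : ℝ) {r : ℝ} (hr : 1 / 2 ≤ r)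
    (x : Fin n → ℝ) (hx : ‖x‖ ≤ r) :
    g (s, x) ^ 2 ≤ 2 ^ n *
      ∫ y in Metric.closedBall (0 : Fin n → ℝ) r, sob (List.finRange n) g (s, y) := by
  have hr0 : 0 ≤ r := by linarith
  have h := sobolev_lmarginal hg s hr (List.finRange n) (List.nodup_finRange n) x
    ((pi_norm_le_iff_of_nonneg hr0).1 hx)
  rw [List.toFinset_finRange, lmarginal_univ, List.length_finRange] at h
  have hcs : Continuous fun y => sob (List.finRange n) g (s, y) :=
    (sob_cont _ hg).comp (by fun_prop)
  have h0 : 0 ≤ ∫ y in Metric.closedBall (0 : Fin n → ℝ) r, sob (List.finRange n) g (s, y) :=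
    integral_nonneg fun y => sob_nonneg _ _ _
  rw [lintegral_indicator Metric.isClosed_closedBall.measurableSet] at h
  change _ ≤ 2 ^ n * ∫⁻ y in Metric.closedBall (0 : Fin n → ℝ) r,
    ENNReal.ofReal (sob (List.finRange n) g (s, y)) at h
  rw [← ofReal_integral_eq_lintegral_ofReal
    (hcs.continuousOn.integrableOn_compact (isCompact_closedBall _ _))
    (Filter.Eventually.of_forall fun y => sob_nonneg _ _ _)] at h
  rw [show (2 : ENNReal) ^ n = ENNReal.ofReal (2 ^ n) by
    rw [ENNReal.ofReal_pow (by norm_num)]; simp, ← ENNReal.ofReal_mul (by positivity)] at h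
  exact (ENNReal.ofReal_le_ofReal_iff (by positivity)).1 h

/-! ### Energy balance for the differentiated equation -/

lemma dD_neg {f : SpT n → ℝ} (hf : Sm f) (d : Dir n) :
    dD d (fun p => -f p) = fun p => -dD d f p := by
  have := dD_const_mul hf (-1) d
  simpa using this

lemma dW_add {f g : SpT n → ℝ} (hf : Sm f) (hg : Sm g) (w : List (Dir n)) :
    dW w (fun p => f p + g p) = fun p => dW w f p + dW w g p := by
  induction w with
  | nil => rfl
  | cons d w ih => simp only [dW_cons, ih]; exact dD_add (hf.dW w) (hg.dW w) d

/-- `U` solves `U_tt - c²ΔU = a U_t U_tt + b ∇U·∇U_t` on the set `O`. -/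
def Sol (a b c : ℝ) (O : Set (SpT n)) (U : SpT n → ℝ) : Prop :=
  ∀ p ∈ O, dD none (dD none U) p - c ^ 2 * ∑ i, dD (some i) (dD (some i) U) p =
    a * (dD none U p * dD none (dD none U) p) +
      b * ∑ i, dD (some i) U p * dD (some i) (dD none U) p

/-- The commutator of the derivative along `w` with the quasilinear wave operator. -/
def cmt (a b : ℝ) (U : SpT n → ℝ) (w : List (Dir n)) : SpT n → ℝ := fun p =>
  a * ((spl' w).map fun q => dW q.1 (dD none U) p * dW q.2 (dD none (dD none U)) p).sum +
    b * ∑ i, ((spl' w).map fun q =>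
      dW q.1 (dD (some i) U) p * dW q.2 (dD (some i) (dD none U)) p).sum

/-- The derivative `V` of `U` along `w` solves a linear wave equation whose coefficients are first
derivatives of `U`, with the commutator as source. -/
lemma Sol.word {a b c : ℝ} {O : Set (SpT n)} {U : SpT n → ℝ} (h : Sol a b c O U) (hU : Sm U)
    (hO : IsOpen O) (w : List (Dir n)) (p : SpT n) (hp : p ∈ O) :
    (1 - a * dD none U p) * dD none (dD none (dW w U)) p
      - c ^ 2 * ∑ i, dD (some i) (dD (some i) (dW w U)) p
      - b * ∑ i, dD (some i) U p * dD (some i) (dD none (dW w U)) p = cmt a b U w p := by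
  have h1 := dW_congr_open hO h w p hp
  have s1 : Sm fun p => ∑ i, dD (some i) (dD (some i) U) p :=
    ContDiff.sum fun i _ => (hU.dD _).dD _
  have s2 : ∀ i : Fin n, Sm fun p => dD (some i) U p * dD (some i) (dD none U) p :=
    fun i => (hU.dD _).mul ((hU.dD _).dD _)
  have s3 : Sm fun p => ∑ i, dD (some i) U p * dD (some i) (dD none U) p :=
    ContDiff.sum fun i _ => s2 i
  have s4 : Sm fun p => dD none U p * dD none (dD none U) p := (hU.dD _).mul ((hU.dD _).dD _)
  rw [dW_sub ((hU.dD _).dD _) (contDiff_const.mul s1), dW_const_mul s1,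
    dW_sum _ (fun i _ => (hU.dD _).dD _),
    dW_add (contDiff_const.mul s4) (contDiff_const.mul s3), dW_const_mul s4, dW_const_mul s3,
    dW_sum _ (fun i _ => s2 i), dW_mul' (hU.dD _) ((hU.dD _).dD _)] at h1
  have e : ∀ d e : Dir n, dW w (dD d (dD e U)) = dD d (dD e (dW w U)) := by
    intro d e
    rw [← dD_dW_comm (hU.dD _), ← dD_dW_comm hU]
  have e2 : ∀ i : Fin n, dW w (fun p => dD (some i) U p * dD (some i) (dD none U) p) p =
      dD (some i) U p * dD (some i) (dD none (dW w U)) p + ((spl' w).map fun q =>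
      dW q.1 (dD (some i) U) p * dW q.2 (dD (some i) (dD none U)) p).sum := by
    intro i
    rw [dW_mul' (hU.dD _) ((hU.dD _).dD _), e]
  simp only [e, e2, Finset.sum_add_distrib] at h1
  unfold cmt
  linear_combination h1

/-- Energy density of the derivative along `w`. -/
def rho (a c : ℝ) (U : SpT n → ℝ) (w : List (Dir n)) : SpT n → ℝ := fun p =>
  (1 - a * dD none U p) * dD none (dW w U) p ^ 2 + c ^ 2 * ∑ i, dD (some i) (dW w U) p ^ 2

/-- Energy flux of the derivative along `w`. -/
def flux (b c : ℝ) (U : SpT n → ℝ) (w : List (Dir n)) (i : Fin n) : SpT n → ℝ := fun p =>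
  -(2 * c ^ 2 * (dD none (dW w U) p * dD (some i) (dW w U) p) +
    b * (dD (some i) U p * dD none (dW w U) p ^ 2))

/-- Energy production of the derivative along `w`. -/
def src (a b : ℝ) (U : SpT n → ℝ) (w : List (Dir n)) : SpT n → ℝ := fun p =>
  -(a * dD none (dD none U) p * dD none (dW w U) p ^ 2)
    - b * (∑ i, dD (some i) (dD (some i) U) p) * dD none (dW w U) p ^ 2
    + 2 * dD none (dW w U) p * cmt a b U w p

lemma rho_sm (a c : ℝ) {U : SpT n → ℝ} (hU : Sm U) (w : List (Dir n)) : Sm (rho a c U w) :=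
  ((contDiff_const.sub (contDiff_const.mul (hU.dD _))).mul (((hU.dW _).dD _).pow 2)).add
    (contDiff_const.mul (ContDiff.sum fun i _ => ((hU.dW _).dD _).pow 2))

lemma flux_sm (b c : ℝ) {U : SpT n → ℝ} (hU : Sm U) (w : List (Dir n)) (i : Fin n) :
    Sm (flux b c U w i) :=
  ((contDiff_const.mul (((hU.dW _).dD _).mul ((hU.dW _).dD _))).add
    (contDiff_const.mul ((hU.dD _).mul (((hU.dW _).dD _).pow 2)))).neg

lemma cmt_sm (a b : ℝ) {U : SpT n → ℝ} (hU : Sm U) (w : List (Dir n)) : Sm (cmt a b U w) :=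
  (contDiff_const.mul (Sm.listSum _ fun _ _ =>
    ((hU.dD _).dW _).mul (((hU.dD _).dD _).dW _))).add
  (contDiff_const.mul (ContDiff.sum fun _ _ => Sm.listSum _ fun _ _ =>
    ((hU.dD _).dW _).mul (((hU.dD _).dD _).dW _)))

lemma src_sm (a b : ℝ) {U : SpT n → ℝ} (hU : Sm U) (w : List (Dir n)) : Sm (src a b U w) :=
  (((contDiff_const.mul ((hU.dD _).dD _)).mul (((hU.dW _).dD _).pow 2)).neg.sub
    ((contDiff_const.mul (ContDiff.sum fun i _ => (hU.dD _).dD _)).mul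
      (((hU.dW _).dD _).pow 2))).add
    ((contDiff_const.mul ((hU.dW _).dD _)).mul (cmt_sm a b hU w))

lemma dD_sq {f : SpT n → ℝ} (hf : Sm f) (d : Dir n) :
    dD d (fun p => f p ^ 2) = fun p => 2 * f p * dD d f p := by
  have := dD_mul hf hf d
  simp only [pow_two]
  rw [this]; funext p; ring

/-- The local energy balance for the derivative along `w`. -/
lemma rho_balance {a b c : ℝ} {O : Set (SpT n)} {U : SpT n → ℝ} (h : Sol a b c O U) (hU : Sm U)
    (hO : IsOpen O) (w : List (Dir n)) (p : SpT n) (hp : p ∈ O) :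
    dD none (rho a c U w) p + ∑ i, dD (some i) (flux b c U w i) p = src a b U w p := by
  have hV := hU.dW w
  have hc := h.word hU hO w p hp
  set V := dW w U with hVdef
  have e1 : dD none (rho a c U w) p = -(a * dD none (dD none U) p) * dD none V p ^ 2 +
      (1 - a * dD none U p) * (2 * dD none V p * dD none (dD none V) p) +
      c ^ 2 * ∑ i, 2 * dD (some i) V p * dD (some i) (dD none V) p := by
    unfold rho
    rw [dD_add ((contDiff_const.sub (contDiff_const.mul (hU.dD _))).mul ((hV.dD _).pow 2))
      (contDiff_const.mul (ContDiff.sum fun i _ => (hV.dD _).pow 2)),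
      dD_mul (contDiff_const.sub (contDiff_const.mul (hU.dD _))) ((hV.dD _).pow 2),
      dD_const_mul (ContDiff.sum fun i _ => (hV.dD _).pow 2),
      dD_sum _ (fun i _ => (hV.dD _).pow 2), dD_sq (hV.dD _),
      dD_sub contDiff_const (contDiff_const.mul (hU.dD _)), dD_const, dD_const_mul (hU.dD _)]
    simp only [zero_sub]
    congr 2
    refine Finset.sum_congr rfl fun i _ => ?_
    rw [dD_sq (hV.dD _), dD_comm hV none (some i)]
  have e2 : ∀ i, dD (some i) (flux b c U w i) p =
      -(2 * c ^ 2 * (dD (some i) (dD none V) p * dD (some i) V p +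
        dD none V p * dD (some i) (dD (some i) V) p)
      + b * (dD (some i) (dD (some i) U) p * dD none V p ^ 2 +
        dD (some i) U p * (2 * dD none V p * dD (some i) (dD none V) p))) := by
    intro i
    unfold flux
    rw [dD_neg ((contDiff_const.mul ((hV.dD _).mul (hV.dD _))).add
      (contDiff_const.mul ((hU.dD _).mul ((hV.dD _).pow 2)))),
      dD_add (contDiff_const.mul ((hV.dD _).mul (hV.dD _)))
      (contDiff_const.mul ((hU.dD _).mul ((hV.dD _).pow 2))),
      dD_const_mul ((hV.dD _).mul (hV.dD _)), dD_const_mul ((hU.dD _).mul ((hV.dD _).pow 2)),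
      dD_mul (hV.dD _) (hV.dD _), dD_mul (hU.dD _) ((hV.dD _).pow 2), dD_sq (hV.dD _)]
  have e3 : ∑ i, dD (some i) (flux b c U w i) p =
      - (c ^ 2 * ∑ i, 2 * dD (some i) V p * dD (some i) (dD none V) p)
      - 2 * dD none V p * (c ^ 2 * ∑ i, dD (some i) (dD (some i) V) p)
      - b * (∑ i, dD (some i) (dD (some i) U) p) * dD none V p ^ 2
      - 2 * dD none V p * (b * ∑ i, dD (some i) U p * dD (some i) (dD none V) p) := by
    simp only [e2, Finset.mul_sum, Finset.sum_mul, ← Finset.sum_neg_distrib,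
      ← Finset.sum_sub_distrib]
    refine Finset.sum_congr rfl fun i _ => by ring
  rw [e1, e3]
  unfold src
  rw [← hVdef, ← hc]
  ring

section pointwise

variable {a b c : ℝ} {U : SpT n → ℝ} {p : SpT n}

lemma rho_lower (ha : |a * dD none U p| ≤ 1 / 2) (w : List (Dir n)) :
    1 / 2 * dD none (dW w U) p ^ 2 + c ^ 2 * ∑ i, dD (some i) (dW w U) p ^ 2 ≤ rho a c U w p := by
  unfold rho
  have := (abs_le.1 ha).2
  nlinarith [sq_nonneg (dD none (dW w U) p)]

lemma rho_upper (ha : |a * dD none U p| ≤ 1 / 2) (w : List (Dir n)) :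
    rho a c U w p ≤ 3 / 2 * dD none (dW w U) p ^ 2 + c ^ 2 * ∑ i, dD (some i) (dW w U) p ^ 2 := by
  unfold rho
  have := (abs_le.1 ha).1
  nlinarith [sq_nonneg (dD none (dW w U) p)]

lemma rho_nonneg (ha : |a * dD none U p| ≤ 1 / 2) (w : List (Dir n)) : 0 ≤ rho a c U w p := by
  refine le_trans ?_ (rho_lower ha w)
  positivity

/-- The flux is dominated by the density: energy propagates at speed at most `2c + 2|b|L`, where
`L` bounds the gradient of `U`. -/
lemma flux_le (hc : 0 < c) (ha : |a * dD none U p| ≤ 1 / 2) (w : List (Dir n)) (i : Fin n) {L : ℝ}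
    (hL : |dD (some i) U p| ≤ L) : |flux b c U w i p| ≤ (2 * c + 2 * |b| * L) * rho a c U w p := by
  have hr := rho_lower (c := c) ha w
  set y := dD none (dW w U) p
  set z := dD (some i) (dW w U) p with hz
  have hz2 : z ^ 2 ≤ ∑ i, dD (some i) (dW w U) p ^ 2 :=
    Finset.single_le_sum (f := fun i => dD (some i) (dW w U) p ^ 2) (fun _ _ => sq_nonneg _)
      (Finset.mem_univ i)
  have hr' : 1 / 2 * y ^ 2 + c ^ 2 * z ^ 2 ≤ rho a c U w p := by nlinarith [sq_nonneg c]
  have hL0 : 0 ≤ L := (abs_nonneg _).trans hL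
  have h1 : |2 * c ^ 2 * (y * z)| ≤ 2 * c * rho a c U w p := by
    have : 2 * |y| * (c * |z|) ≤ y ^ 2 + c ^ 2 * z ^ 2 := by
      nlinarith [sq_nonneg (|y| - c * |z|), sq_abs y, sq_abs z]
    rw [abs_mul, abs_mul, abs_mul, abs_of_pos (two_pos : (0:ℝ) < 2), abs_of_nonneg (sq_nonneg c)]
    have h3 : c * (2 * |y| * (c * |z|)) ≤ c * (2 * rho a c U w p) :=
      mul_le_mul_of_nonneg_left (by nlinarith [sq_nonneg (c * z)]) hc.le
    nlinarith
  have h2 : |b * (dD (some i) U p * y ^ 2)| ≤ 2 * |b| * L * rho a c U w p := by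
    rw [abs_mul, abs_mul, abs_of_nonneg (sq_nonneg y)]
    have : |dD (some i) U p| * y ^ 2 ≤ L * (2 * rho a c U w p) :=
      mul_le_mul hL (by nlinarith [sq_nonneg (c * z)]) (sq_nonneg y) hL0
    nlinarith [mul_le_mul_of_nonneg_left this (abs_nonneg b)]
  unfold flux
  rw [abs_neg]
  refine (abs_add_le _ _).trans ?_
  linarith

end pointwise

/-- All words of length at most `K`. -/
def words (n K : ℕ) : Finset (List (Dir n)) := (List.finite_length_le (Dir n) K).toFinset

lemma mem_words {K : ℕ} {w : List (Dir n)} : w ∈ words n K ↔ w.length ≤ K := by simp [words]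

/-- Sum of the squares of all derivatives of order between `1` and `K + 1`. -/
def PK (K : ℕ) (U : SpT n → ℝ) : SpT n → ℝ := fun p =>
  ∑ w ∈ words n K, ∑ d : Dir n, dW (d :: w) U p ^ 2

lemma PK_cont (K : ℕ) {U : SpT n → ℝ} (hU : Sm U) : Continuous (PK K U) :=
  continuous_finsetSum _ fun w _ => continuous_finsetSum _ fun d _ => (hU.dW (d :: w)).cont.pow 2

lemma PK_nonneg (K : ℕ) (U : SpT n → ℝ) (p : SpT n) : 0 ≤ PK K U p :=
  Finset.sum_nonneg fun _ _ => Finset.sum_nonneg fun _ _ => sq_nonneg _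

lemma le_PK {K : ℕ} (U : SpT n → ℝ) (p : SpT n) (w : List (Dir n)) (h1 : 1 ≤ w.length)
    (h2 : w.length ≤ K + 1) : dW w U p ^ 2 ≤ PK K U p := by
  obtain _ | ⟨d, w⟩ := w
  · simp at h1
  · refine le_trans ?_ (Finset.single_le_sum
      (f := fun w => ∑ d : Dir n, dW (d :: w) U p ^ 2)
      (fun _ _ => Finset.sum_nonneg fun _ _ => sq_nonneg _)
      (mem_words.2 (by simpa using h2 : w.length ≤ K)))
    exact Finset.single_le_sum (f := fun d => dW (d :: w) U p ^ 2) (fun _ _ => sq_nonneg _)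
      (Finset.mem_univ d)

lemma PK_le_rho {a c : ℝ} {U : SpT n → ℝ} {p : SpT n} (hc : 0 < c) (K : ℕ)
    (ha : |a * dD none U p| ≤ 1 / 2) :
    PK K U p ≤ (2 + 1 / c ^ 2) * ∑ w ∈ words n K, rho a c U w p := by
  rw [PK, Finset.mul_sum]
  refine Finset.sum_le_sum fun w _ => ?_
  have h := rho_lower (c := c) ha w
  rw [Fintype.sum_option]
  simp only [dW_cons]
  set Y := dD none (dW w U) p ^ 2 with hY
  set Z := ∑ i, dD (some i) (dW w U) p ^ 2 with hZ
  have hY0 : 0 ≤ Y := sq_nonneg _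
  have hZ0 : 0 ≤ Z := Finset.sum_nonneg fun _ _ => sq_nonneg _
  have hc2 : 0 < c ^ 2 := by positivity
  have h4 : (2 + 1 / c ^ 2) * (1 / 2 * Y + c ^ 2 * Z) = Y + Z + (2 * c ^ 2 * Z + Y / (2 * c ^ 2)) := by
    field_simp; ring
  have h5 : 0 ≤ 2 * c ^ 2 * Z + Y / (2 * c ^ 2) := by positivity
  have h6 := mul_le_mul_of_nonneg_left h (by positivity : 0 ≤ 2 + 1 / c ^ 2)
  linarith

lemma rho_le_PK {a c : ℝ} {U : SpT n → ℝ} {p : SpT n} (K : ℕ)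
    (ha : |a * dD none U p| ≤ 1 / 2) :
    ∑ w ∈ words n K, rho a c U w p ≤ (3 / 2 + c ^ 2) * PK K U p := by
  rw [PK, Finset.mul_sum]
  refine Finset.sum_le_sum fun w _ => (rho_upper ha w).trans ?_
  rw [Fintype.sum_option]
  simp only [dW_cons]
  have hZ0 : 0 ≤ ∑ i, dD (some i) (dW w U) p ^ 2 := Finset.sum_nonneg fun _ _ => sq_nonneg _
  nlinarith [sq_nonneg (dD none (dW w U) p), sq_nonneg c]

lemma abs_listSum_le {ι : Type*} (l : List ι) (f : ι → ℝ) (X : ℝ) (h : ∀ i ∈ l, |f i| ≤ X) :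
    |(l.map f).sum| ≤ l.length * X := by
  induction l with
  | nil => simp
  | cons i l ih =>
    simp only [List.map_cons, List.sum_cons, List.length_cons, Nat.cast_add, Nat.cast_one]
    refine (abs_add_le _ _).trans ?_
    have := ih fun j hj => h j (by simp [hj])
    have := h i (by simp)
    linarith

lemma length_spl (w : List (Dir n)) : (spl w).length = 2 ^ w.length := by
  induction w with
  | nil => rfl
  | cons d w ih => simp [spl, ih, pow_succ]; ring

lemma length_spl' (w : List (Dir n)) : (spl' w).length ≤ 2 ^ w.length := by
  induction w with
  | nil => simp [spl']
  | cons d w ih => simp [spl', pow_succ, length_spl]; omega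

/-- If the low-order derivatives are at most `L`, the energy production is at most
a constant times `L` times the sum of squares `PK`: it is a sum of products of three derivatives, in
each of which at least one factor is of low order because `K ≥ 2n + 1`. -/
lemma src_le {a b : ℝ} {U : SpT n → ℝ} {p : SpT n} {K : ℕ} (hK : 2 * n + 1 ≤ K) {L : ℝ}
    (hL : 0 ≤ L)
    (hlow : ∀ w : List (Dir n), 1 ≤ w.length → w.length ≤ K + 1 - n → |dW w U p| ≤ L)
    {w : List (Dir n)} (hw : w.length ≤ K) :
    |src a b U w p| ≤ (|a| + n * |b|) * (1 + 2 * 2 ^ K) * (L * PK K U p) := by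
  have two : ∀ v v' : List (Dir n), 1 ≤ v.length → v.length ≤ K + 1 → 1 ≤ v'.length →
      v'.length ≤ K + 1 → |dW v U p| * |dW v' U p| ≤ PK K U p := by
    intro v v' h1 h2 h3 h4
    have := le_PK U p v h1 h2
    have := le_PK U p v' h3 h4
    nlinarith [sq_nonneg (|dW v U p| - |dW v' U p|), sq_abs (dW v U p), sq_abs (dW v' U p)]
  have low : ∀ v v' v'' : List (Dir n), 1 ≤ v.length → v.length ≤ K + 1 - n → 1 ≤ v'.length →
      v'.length ≤ K + 1 → 1 ≤ v''.length → v''.length ≤ K + 1 →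
      |dW v U p| * (|dW v' U p| * |dW v'' U p|) ≤ L * PK K U p := by
    intro v v' v'' h1 h2 h3 h4 h5 h6
    exact mul_le_mul (hlow v h1 h2) (two v' v'' h3 h4 h5 h6) (by positivity) hL
  set X := L * PK K U p with hX
  have hX0 : 0 ≤ X := mul_nonneg hL (PK_nonneg _ _ _)
  have term : ∀ d e : Dir n, ∀ q ∈ spl' w,
      |dD none (dW w U) p * (dW q.1 (dD d U) p * dW q.2 (dD e (dD none U)) p)| ≤ X := by
    intro d e q hq
    obtain ⟨h1, h2⟩ := mem_spl' w q hq
    have e1 : dW q.1 (dD d U) p = dW (q.1 ++ [d]) U p := by rw [dW_append]; rfl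
    have e2 : dW q.2 (dD e (dD none U)) p = dW (q.2 ++ [e, none]) U p := by rw [dW_append]; rfl
    have e3 : dD none (dW w U) p = dW (none :: w) U p := rfl
    rw [e1, e2, e3, abs_mul, abs_mul]
    by_cases hh : q.1.length + 1 ≤ K + 1 - n
    · have := low (q.1 ++ [d]) (q.2 ++ [e, none]) (none :: w) (by simp) (by simpa using hh) (by simp)
        (by simp; omega) (by simp) (by simpa using hw)
      nlinarith
    · have := low (q.2 ++ [e, none]) (q.1 ++ [d]) (none :: w) (by simp) (by simp; omega) (by simp)
        (by simp; omega) (by simp) (by simpa using hw)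
      nlinarith
  have lterm : ∀ d e : Dir n, |dD none (dW w U) p * ((spl' w).map fun q =>
      dW q.1 (dD d U) p * dW q.2 (dD e (dD none U)) p).sum| ≤ 2 ^ K * X := by
    intro d e
    rw [← List.sum_map_mul_left]
    refine (abs_listSum_le _ _ X (term d e)).trans ?_
    have : ((spl' w).length : ℝ) ≤ 2 ^ K := by
      have h1 := (length_spl' w).trans (Nat.pow_le_pow_right (by norm_num) hw)
      exact_mod_cast h1
    exact mul_le_mul_of_nonneg_right this hX0
  have sq : ∀ d e : Dir n, |dD d (dD e U) p| * dD none (dW w U) p ^ 2 ≤ X := by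
    intro d e
    have := low [d, e] (none :: w) (none :: w) (by simp) (by simp; omega) (by simp)
      (by simpa using hw) (by simp) (by simpa using hw)
    rw [← pow_two, sq_abs] at this
    exact this
  have t1 : |a * dD none (dD none U) p * dD none (dW w U) p ^ 2| ≤ |a| * X := by
    rw [mul_assoc, abs_mul, abs_mul, abs_of_nonneg (sq_nonneg (dD none (dW w U) p))]
    exact mul_le_mul_of_nonneg_left (sq _ _) (abs_nonneg a)
  have t2 : |b * (∑ i, dD (some i) (dD (some i) U) p) * dD none (dW w U) p ^ 2| ≤
      n * |b| * X := by
    rw [mul_assoc, abs_mul, Finset.sum_mul]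
    have : |∑ i, dD (some i) (dD (some i) U) p * dD none (dW w U) p ^ 2| ≤ n * X := by
      refine (Finset.abs_sum_le_sum_abs _ _).trans ?_
      refine (Finset.sum_le_card_nsmul _ _ X fun i _ => ?_).trans (by simp)
      rw [abs_mul, abs_of_nonneg (sq_nonneg (dD none (dW w U) p))]
      exact sq _ _
    nlinarith [mul_le_mul_of_nonneg_left this (abs_nonneg b)]
  have t3 : |dD none (dW w U) p * cmt a b U w p| ≤ (|a| + n * |b|) * (2 ^ K * X) := by
    unfold cmt
    rw [mul_add, mul_left_comm, mul_left_comm _ b, Finset.mul_sum]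
    refine (abs_add_le _ _).trans ?_
    rw [abs_mul, abs_mul b]
    have h1 := mul_le_mul_of_nonneg_left (lterm none none) (abs_nonneg a)
    have h2 : |∑ i, dD none (dW w U) p * ((spl' w).map fun q =>
      dW q.1 (dD (some i) U) p * dW q.2 (dD (some i) (dD none U)) p).sum| ≤ n * (2 ^ K * X) := by
      refine (Finset.abs_sum_le_sum_abs _ _).trans ?_
      exact (Finset.sum_le_card_nsmul _ _ _ fun i _ => lterm (some i) (some i)).trans (by simp)
    have h3 := mul_le_mul_of_nonneg_left h2 (abs_nonneg b)
    nlinarith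
  unfold src
  have e : ∀ A B C : ℝ, |A| ≤ |a| * X → |B| ≤ n * |b| * X → |C| ≤ (|a| + n * |b|) * (2 ^ K * X) →
      |-A - B + 2 * C| ≤ (|a| + n * |b|) * (1 + 2 * 2 ^ K) * X := by
    intro A B C hA hB hC
    rw [abs_le] at *
    constructor <;> nlinarith
  have := e _ _ _ t1 t2 t3
  rwa [← mul_assoc] at this

/-! ### Short-time bounds by finite propagation speed -/

lemma dD_eq_zero_of_min {W : SpT n → ℝ} (h0 : ∀ p, 0 ≤ W p) {p : SpT n} (hp : W p = 0) (d : Dir n) :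
    dD d W p = 0 := by
  have : IsLocalMin W p := Filter.Eventually.of_forall fun q => by rw [hp]; exact h0 q
  rw [dD, this.fderiv_eq_zero]; rfl

lemma slice_intervalIntegrable {G : SpT n → ℝ} (hG : Continuous G) {s1 : ℝ} (hs1 : 0 ≤ s1) (R : ℝ)
    (hsupp : ∀ s ∈ Set.Icc 0 s1, ∀ x, R < ‖x‖ → G (s, x) = 0) :
    IntervalIntegrable (fun s => ∫ x, G (s, x)) volume 0 s1 := by
  rw [intervalIntegrable_iff_integrableOn_Icc_of_le hs1]
  have h1 : IntegrableOn G (Set.Icc 0 s1 ×ˢ Metric.closedBall (0 : Fin n → ℝ) R)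
      ((volume : Measure ℝ).prod volume) :=
    hG.continuousOn.integrableOn_compact (isCompact_Icc.prod (isCompact_closedBall _ _))
  rw [IntegrableOn, ← Measure.prod_restrict] at h1
  refine (integrableOn_congr_fun (fun s hs => ?_) measurableSet_Icc).1 h1.integral_prod_left
  refine setIntegral_eq_integral_of_forall_compl_eq_zero fun x hx => hsupp s hs x ?_
  simpa using hx

/-- Energy inequality in a truncated backward cone, for a balance law whose flux is dominated by
`M` times the density. -/
lemma cone_ineq {ρ S : SpT n → ℝ} {q : Fin n → SpT n → ℝ} (hρ : Sm ρ) (hS : Continuous S)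
    (hq : ∀ i, Sm (q i)) {s1 r0 M k e : ℝ} (hs1 : 0 ≤ s1) (hM : 0 ≤ M) (hr0 : 0 ≤ r0) (he : 0 < e)
    (hid : ∀ s ∈ Set.Ioo 0 s1, ∀ x, dD none ρ (s, x) + ∑ i, dD (some i) (q i) (s, x) = S (s, x))
    (hr : 0 ≤ r0 - M * s1)
    (hflux : ∀ s ∈ Set.Ioo 0 s1, ∀ x, ‖x‖ ≤ r0 - M * s → 0 ≤ ρ (s, x) ∧
      ∀ i, |q i (s, x)| ≤ M * ρ (s, x)) :
    (∫ x, cone r0 M k e (s1, x) * ρ (s1, x)) ≤ (∫ x, cone r0 M k e (0, x) * ρ (0, x)) +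
      ∫ s in (0:ℝ)..s1, ∫ x, cone r0 M k e (s, x) * (S (s, x) - k * ρ (s, x)) := by
  set W := cone (n := n) r0 M k e with hW
  have hD : Decr M k W := cone_decr hM r0 k he
  have hsupp : ∀ s, -1 < s → ∀ x : Fin n → ℝ, r0 + M < ‖x‖ → W (s, x) = 0 := by
    intro s hs x hx
    refine cone_eq_zero he (R := r0 + M) (by positivity) ?_ hx
    simp only; nlinarith
  have h := cone_identity hρ hS hD.sm hq hs1 (r0 + M) hsupp hid
  have hz : ∀ d s, -1 < s → ∀ x : Fin n → ℝ, r0 + M < ‖x‖ → dD d W (s, x) = 0 :=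
    fun d s hs x hx => dD_eq_zero_of_min hD.nonneg (hsupp s hs x hx) d
  have hc1 : Continuous fun p => dD none W p * ρ p + ∑ i, dD (some i) W p * q i p + W p * S p :=
    (((hD.sm.dD _).cont.mul hρ.cont).add (continuous_finsetSum _ fun i _ =>
      (hD.sm.dD _).cont.mul (hq i).cont)).add (hD.sm.cont.mul hS)
  have hc2 : Continuous fun p => W p * (S p - k * ρ p) :=
    hD.sm.cont.mul (hS.sub (continuous_const.mul hρ.cont))
  have hcmp : ∫ s in (0:ℝ)..s1, ∫ x, (dD none W (s, x) * ρ (s, x) +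
        ∑ i, dD (some i) W (s, x) * q i (s, x) + W (s, x) * S (s, x)) ≤
      ∫ s in (0:ℝ)..s1, ∫ x, W (s, x) * (S (s, x) - k * ρ (s, x)) := by
    refine intervalIntegral.integral_mono_on_of_le_Ioo hs1
      (slice_intervalIntegrable hc1 hs1 (r0 + M) fun s hs x hx => ?_)
      (slice_intervalIntegrable hc2 hs1 (r0 + M) fun s hs x hx => ?_) fun s hs => ?_
    · have : -1 < s := by linarith [hs.1]
      simp [hz _ s this x hx, hsupp s this x hx]
    · have : -1 < s := by linarith [hs.1]
      simp [hsupp s this x hx]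
    · have hsm : -1 < s := by linarith [hs.1]
      refine integral_mono (integrable_slice hc1 s (r0 + M) fun x hx => ?_)
        (integrable_slice hc2 s (r0 + M) fun x hx => ?_) fun x => ?_
      · simp [hz _ s hsm x hx, hsupp s hsm x hx]
      · simp [hsupp s hsm x hx]
      · simp only
        have hrs : 0 ≤ r0 - M * s := by nlinarith [hs.2]
        by_cases hx : ‖x‖ ≤ r0 - M * s
        · obtain ⟨hp, hfl⟩ := hflux s hs x hx
          have h1 : ∑ i, dD (some i) W (s, x) * q i (s, x) ≤
              M * (∑ i, |dD (some i) W (s, x)|) * ρ (s, x) := by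
            rw [Finset.mul_sum, Finset.sum_mul]
            refine Finset.sum_le_sum fun i _ => ?_
            refine (le_abs_self _).trans ?_
            rw [abs_mul]
            nlinarith [mul_le_mul_of_nonneg_left (hfl i) (abs_nonneg (dD (some i) W (s, x)))]
          have h2 := mul_le_mul_of_nonneg_right (hD.ineq (s, x)) hp
          nlinarith
        · have h0 : W (s, x) = 0 := cone_eq_zero he (R := r0 - M * s) hrs le_rfl (not_le.1 hx)
          have h1 : ∀ d, dD d W (s, x) = 0 := fun d => dD_eq_zero_of_min hD.nonneg h0 d
          simp [h0, h1]
  linarith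

lemma Sm.sum' {ι : Type*} {s : Finset ι} {f : ι → SpT n → ℝ} (hf : ∀ i ∈ s, Sm (f i)) :
    Sm (fun p => ∑ i ∈ s, f i p) := ContDiff.sum hf

/-- Constant comparing the sum of squares of derivatives with the energy density. -/
def kap (c : ℝ) : ℝ := 2 + 1 / c ^ 2

/-- A short-time bound for all derivatives of a solution, from integrability at time `0` only.
The a priori region of control is a cube shrinking at finite speed, on which a continuity
argument is run; the resulting bound does not depend on the size of the cube. -/
lemma local_bound {a b c : ℝ} (hc : 0 < c) {K : ℕ} (hK : 2 * n + 1 ≤ K) {U : SpT n → ℝ}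
    (hU : Sm U) {T1 : ℝ} (hsol : Sol a b c {p | 0 < p.1 ∧ p.1 < T1} U)
    (ha : ∀ s ∈ Set.Icc 0 T1, ∀ x, |a * dD none U (s, x)| ≤ 1 / 2)
    (hint : Integrable fun x => PK K U (0, x)) :
    ∃ δ > 0, ∃ C, ∀ s, 0 ≤ s → s ≤ δ → s ≤ T1 → ∀ R, 0 ≤ R →
      ∫ x in Metric.closedBall (0 : Fin n → ℝ) R, PK K U (s, x) ≤ C := by
  set N0 := (3 / 2 + c ^ 2) * ∫ x, PK K U (0, x) with hN0
  have hN0' : 0 ≤ N0 := mul_nonneg (by positivity) (integral_nonneg fun x => PK_nonneg _ _ _)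
  have hk0 : 0 < kap c := by unfold kap; positivity
  set L := Real.sqrt (4 ^ n * kap c * (2 * N0) + 1) with hL
  have hL2 : L ^ 2 = 4 ^ n * kap c * (2 * N0) + 1 := Real.sq_sqrt (by positivity)
  have hL0 : 0 ≤ L := Real.sqrt_nonneg _
  set M := 2 * c + 2 * |b| * L with hM
  have hM0 : 0 < M := by positivity
  set CS := (|a| + n * |b|) * (1 + 2 * 2 ^ K) * L with hCS
  have hCS0 : 0 ≤ CS := by positivity
  set k := (words n K).card * CS * kap c with hk
  have hk0' : 0 ≤ k := by positivity
  set δ := min (1 / (4 * M)) (Real.log 2 / (k + 1)) with hδ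
  have hδ0 : 0 < δ := lt_min (by positivity) (div_pos (Real.log_pos (by norm_num)) (by linarith))
  have hδM : ∀ s, s ≤ δ → M * s ≤ 1 / 4 := by
    intro s hs
    have := hs.trans (min_le_left _ _)
    rw [le_div_iff₀ (by positivity)] at this
    linarith
  have hδk : ∀ s, 0 ≤ s → s ≤ δ → 1 / 2 ≤ Real.exp (-(k * s)) := by
    intro s hs0 hs
    have := hs.trans (min_le_right _ _)
    rw [le_div_iff₀ (by linarith)] at this
    rw [one_div, ← Real.exp_log (by norm_num : (0:ℝ) < 2), ← Real.exp_neg]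
    exact Real.exp_le_exp.2 (by linarith)
  set ρ : SpT n → ℝ := fun p => ∑ w ∈ words n K, rho a c U w p with hρ
  have hρs : Sm ρ := Sm.sum' fun w _ => rho_sm a c hU w
  have hO : IsOpen {p : SpT n | 0 < p.1 ∧ p.1 < T1} :=
    (isOpen_lt continuous_const continuous_fst).inter (isOpen_lt continuous_fst continuous_const)
  have hρ0 : ∀ s ∈ Set.Icc 0 T1, ∀ x, 0 ≤ ρ (s, x) := fun s hs x =>
    Finset.sum_nonneg fun w _ => rho_nonneg (ha s hs x) w
  -- one step of the continuity argument
  have step : ∀ R, 0 ≤ R → ∀ s1, 0 ≤ s1 → s1 ≤ δ → s1 ≤ T1 →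
      (∀ s, 0 ≤ s → s < s1 → ∀ x : Fin n → ℝ, ‖x‖ ≤ R + 1 - M * s → ∀ w : List (Dir n),
        1 ≤ w.length → w.length ≤ K + 1 - n → |dW w U (s, x)| ≤ L) →
      ∀ e, 0 < e → ∫ x in Metric.closedBall (0 : Fin n → ℝ) (R + 1 - M * s1 - e), ρ (s1, x)
        ≤ 2 * N0 := by
    intro R hR s1 h0 h1 h2 hlow e he
    have hin : ∀ s ∈ Set.Ioo 0 s1, s ∈ Set.Icc 0 T1 := fun s hs => ⟨hs.1.le, hs.2.le.trans h2⟩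
    have hr : 0 ≤ R + 1 - M * s1 := by linarith [hδM s1 h1]
    have hci := cone_ineq (ρ := ρ) (S := fun p => ∑ w ∈ words n K, src a b U w p)
      (q := fun i p => ∑ w ∈ words n K, flux b c U w i p) (k := k) hρs
      (Sm.sum' fun w _ => src_sm a b hU w).cont (fun i => Sm.sum' fun w _ => flux_sm b c hU w i)
      h0 hM0.le (by linarith : 0 ≤ R + 1) he ?_ hr ?_
    rotate_left
    · intro s hs x
      have e1 : dD none ρ (s, x) = ∑ w ∈ words n K, dD none (rho a c U w) (s, x) := by
        rw [hρ, dD_sum _ fun w _ => rho_sm a c hU w]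
      have e2 : ∀ i, dD (some i) (fun p => ∑ w ∈ words n K, flux b c U w i p) (s, x) =
          ∑ w ∈ words n K, dD (some i) (flux b c U w i) (s, x) := by
        intro i; rw [dD_sum _ fun w _ => flux_sm b c hU w i]
      simp only [e1, e2]
      rw [Finset.sum_comm, ← Finset.sum_add_distrib]
      exact Finset.sum_congr rfl fun w _ => rho_balance hsol hU hO w (s, x) ⟨hs.1, hs.2.trans_le h2⟩
    · intro s hs x hx
      refine ⟨hρ0 s (hin s hs) x, fun i => ?_⟩
      rw [hρ, Finset.mul_sum]
      refine (Finset.abs_sum_le_sum_abs _ _).trans (Finset.sum_le_sum fun w _ => ?_)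
      exact flux_le hc (ha s (hin s hs) x) w i
        (hlow s hs.1.le hs.2 x hx [some i] (by simp) (by simp; omega))
    set W := cone (n := n) (R + 1) M k e with hW
    have hD : Decr M k W := cone_decr hM0.le _ k he
    have hneg : ∫ s in (0:ℝ)..s1, ∫ x, W (s, x) *
        ((∑ w ∈ words n K, src a b U w (s, x)) - k * ρ (s, x)) ≤ 0 := by
      rw [intervalIntegral.integral_of_le h0, integral_Ioc_eq_integral_Ioo]
      refine setIntegral_nonpos measurableSet_Ioo fun s hs => integral_nonpos fun x => ?_
      simp only [Pi.zero_apply]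
      have hrs : 0 ≤ R + 1 - M * s := by nlinarith [hs.2]
      by_cases hx : ‖x‖ ≤ R + 1 - M * s
      · refine mul_nonpos_of_nonneg_of_nonpos (hD.nonneg _) ?_
        have hs1 : ∑ w ∈ words n K, src a b U w (s, x) ≤ (words n K).card * (CS * PK K U (s, x)) := by
          refine (Finset.sum_le_card_nsmul _ _ (CS * PK K U (s, x)) fun w hw => ?_).trans (by simp)
          have := src_le (a := a) (b := b) hK hL0 (fun w h3 h4 => hlow s hs.1.le hs.2 x hx w h3 h4)
            (mem_words.1 hw)
          rw [← mul_assoc] at this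
          exact (le_abs_self _).trans this
        have hs2 := PK_le_rho hc K (ha s (hin s hs) x)
        have hs3 : (words n K).card * (CS * PK K U (s, x)) ≤ k * ρ (s, x) := by
          rw [hk, ← mul_assoc, mul_assoc _ (kap c)]
          exact mul_le_mul_of_nonneg_left hs2 (by positivity)
        linarith
      · have h0 : W (s, x) = 0 := cone_eq_zero he (R := R + 1 - M * s) hrs le_rfl (not_le.1 hx)
        simp [h0]
    have hsupp : ∀ s, 0 ≤ s → ∀ x : Fin n → ℝ, R + 1 < ‖x‖ → W (s, x) = 0 := by
      intro s hs x hx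
      refine cone_eq_zero he (R := R + 1) (by positivity) ?_ hx
      simp only; nlinarith
    have hinit : ∫ x, W (0, x) * ρ (0, x) ≤ N0 := by
      rw [hN0, ← integral_const_mul]
      refine integral_mono (integrable_slice (hD.sm.cont.mul hρs.cont) 0 (R + 1)
        fun x hx => by simp [hsupp 0 le_rfl x hx]) (hint.const_mul _) fun x => ?_
      simp only
      have hin0 : (0:ℝ) ∈ Set.Icc 0 T1 := ⟨le_rfl, h0.trans h2⟩
      have h3 := rho_le_PK (c := c) K (ha 0 hin0 x)
      have h4 : W (0, x) ≤ 1 := by simpa using cone_le_exp (R + 1) M k e (0, x)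
      exact (mul_le_of_le_one_left (hρ0 0 hin0 x) h4).trans h3
    have hfin : 1 / 2 * ∫ x in Metric.closedBall (0 : Fin n → ℝ) (R + 1 - M * s1 - e), ρ (s1, x) ≤
        ∫ x, W (s1, x) * ρ (s1, x) := by
      rw [← integral_const_mul, ← integral_indicator Metric.isClosed_closedBall.measurableSet]
      have hcs : Continuous fun x => ρ (s1, x) := hρs.cont.comp (by fun_prop)
      refine integral_mono ?_ (integrable_slice (hD.sm.cont.mul hρs.cont) s1 (R + 1)
        fun x hx => by simp [hsupp s1 h0 x hx]) fun x => ?_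
      · rw [integrable_indicator_iff Metric.isClosed_closedBall.measurableSet]
        exact ((continuous_const.mul hcs).continuousOn.integrableOn_compact (isCompact_closedBall _ _))
      · have hp := hρ0 s1 ⟨h0, h2⟩ x
        simp only [Set.indicator]
        split_ifs with hx
        · rw [mem_closedBall_zero_iff] at hx
          have : W (s1, x) = Real.exp (-(k * s1)) := cone_eq_exp he hx
          rw [this]
          exact mul_le_mul_of_nonneg_right (hδk s1 h0 h1) hp
        · exact mul_nonneg (hD.nonneg _) hp
    linarith
  -- the Sobolev step: the energy bound improves the pointwise bound strictly
  have improve : ∀ R, 0 ≤ R → ∀ s1, 0 ≤ s1 → s1 ≤ δ → s1 ≤ T1 →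
      (∀ e, 0 < e → ∫ x in Metric.closedBall (0 : Fin n → ℝ) (R + 1 - M * s1 - e), ρ (s1, x)
        ≤ 2 * N0) → ∀ x : Fin n → ℝ, ‖x‖ ≤ R + 1 - M * s1 → ∀ w : List (Dir n),
        1 ≤ w.length → w.length ≤ K + 1 - n → |dW w U (s1, x)| < L := by
    intro R hR s1 h0 h1 h2 hen x hx w hw1 hw2
    have hcs : ∀ f : SpT n → ℝ, Continuous f → Continuous fun x => f (s1, x) :=
      fun f hf => hf.comp (by fun_prop)
    have inner : ∀ y : Fin n → ℝ, ‖y‖ < R + 1 - M * s1 → dW w U (s1, y) ^ 2 ≤ L ^ 2 - 1 := by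
      intro y hy
      set e := min (R + 1 - M * s1 - ‖y‖) (1 / 4)
      have he : 0 < e := lt_min (by linarith) (by norm_num)
      have he1 : e ≤ R + 1 - M * s1 - ‖y‖ := min_le_left _ _
      have he2 : e ≤ 1 / 4 := min_le_right _ _
      have hsb := sobolev_cube (hU.dW w) s1 (r := R + 1 - M * s1 - e)
        (by linarith [hδM s1 h1]) y (by linarith)
      have hm : ∫ y in Metric.closedBall (0 : Fin n → ℝ) (R + 1 - M * s1 - e),
          sob (List.finRange n) (dW w U) (s1, y) ≤ ∫ y in
          Metric.closedBall (0 : Fin n → ℝ) (R + 1 - M * s1 - e), 2 ^ n * (kap c * ρ (s1, y)) := by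
        refine setIntegral_mono
          ((hcs _ (sob_cont _ (hU.dW w))).continuousOn.integrableOn_compact (isCompact_closedBall _ _))
          ((continuous_const.mul (continuous_const.mul (hcs _ hρs.cont))).continuousOn.integrableOn_compact
            (isCompact_closedBall _ _)) fun z => ?_
        have h3 := sob_le (List.finRange n) U w (s1, z) (PK K U (s1, z)) fun w' h4 h5 =>
          le_PK U _ w' (by omega) (by simp at h5; omega)
        rw [List.length_finRange] at h3
        exact h3.trans (mul_le_mul_of_nonneg_left (PK_le_rho hc K (ha s1 ⟨h0, h2⟩ z)) (by positivity))
      rw [integral_const_mul, integral_const_mul] at hm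
      have h4 := mul_le_mul_of_nonneg_left (hen e he) hk0.le
      have h5 : (4:ℝ) ^ n = 2 ^ n * 2 ^ n := by rw [← mul_pow]; norm_num
      have h6 : (0:ℝ) < 2 ^ n := by positivity
      calc _ ≤ _ := hsb
        _ ≤ 2 ^ n * (2 ^ n * (kap c * (2 * N0))) :=
          mul_le_mul_of_nonneg_left (hm.trans (mul_le_mul_of_nonneg_left h4 h6.le)) h6.le
        _ = _ := by rw [hL2, h5]; ring
    have hcl : IsClosed {y : Fin n → ℝ | dW w U (s1, y) ^ 2 ≤ L ^ 2 - 1} :=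
      isClosed_le (hcs _ ((hU.dW w).cont.pow 2)) continuous_const
    have hx' : x ∈ closure (Metric.ball (0 : Fin n → ℝ) (R + 1 - M * s1)) := by
      rw [closure_ball _ (by linarith [hδM s1 h1])]
      simpa using hx
    have hsq : dW w U (s1, x) ^ 2 ≤ L ^ 2 - 1 :=
      closure_minimal (fun y hy => inner y (by simpa using hy)) hcl hx'
    exact abs_lt_of_sq_lt_sq (by linarith) hL0
  refine ⟨δ, hδ0, kap c * (2 * N0), fun s hs0 hsδ hsT R hR => ?_⟩
  have hlowfin : {w : List (Dir n) | 1 ≤ w.length ∧ w.length ≤ K + 1 - n}.Finite :=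
    (List.finite_length_le (Dir n) (K + 1 - n)).subset fun w hw => hw.2
  -- `Bad` is the compact set of points of the truncated cone where the bound `L` on the low-order
  -- derivatives is attained; at an earliest such point `step` and `improve` contradict each other.
  set Bad : Set (SpT n) := (Set.Icc 0 s ×ˢ Metric.closedBall (0 : Fin n → ℝ) (R + 1)) ∩
    ({p | ‖p.2‖ ≤ R + 1 - M * p.1} ∩ ⋃ w ∈ {w : List (Dir n) | 1 ≤ w.length ∧ w.length ≤ K + 1 - n},
      {p | L ≤ |dW w U p|}) with hBad
  have hBadc : IsCompact Bad := by
    refine (isCompact_Icc.prod (isCompact_closedBall _ _)).inter_right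
      (IsClosed.inter (isClosed_le continuous_snd.norm (by fun_prop))
      (hlowfin.isClosed_biUnion fun w _ => isClosed_le continuous_const (hU.dW w).cont.abs))
  have hempty : Bad = ∅ := by
    by_contra hne
    obtain ⟨p, hp, hmin⟩ := hBadc.exists_isMinOn (Set.nonempty_iff_ne_empty.2 hne)
      continuous_fst.continuousOn
    obtain ⟨hp1, hp2, hp3⟩ := hp
    simp only [Set.mem_iUnion, Set.mem_ofPred_eq] at hp3
    obtain ⟨w, ⟨hw1, hw2⟩, hw3⟩ := hp3
    have h0 : 0 ≤ p.1 := hp1.1.1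
    have h1 : p.1 ≤ s := hp1.1.2
    have := improve R hR p.1 h0 (h1.trans hsδ) (h1.trans hsT)
      (step R hR p.1 h0 (h1.trans hsδ) (h1.trans hsT) fun s' h3 h4 x hx v hv1 hv2 => ?_) p.2 hp2 w hw1 hw2
    · exact absurd hw3 (not_le.2 this)
    · by_contra hcon
      have hmem : ((s', x) : SpT n) ∈ Bad := by
        refine ⟨⟨⟨h3, h4.le.trans h1⟩, ?_⟩, hx, ?_⟩
        · rw [mem_closedBall_zero_iff]
          simp only
          nlinarith
        · simp only [Set.mem_iUnion, Set.mem_ofPred_eq]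
          exact ⟨v, ⟨hv1, hv2⟩, (not_le.1 hcon).le⟩
      have : p.1 ≤ s' := hmin hmem
      linarith
  have hen := step R hR s hs0 hsδ hsT (fun s' h3 h4 x hx v hv1 hv2 => by
    by_contra hcon
    have hmem : ((s', x) : SpT n) ∈ Bad := by
      refine ⟨⟨⟨h3, h4.le⟩, ?_⟩, hx, ?_⟩
      · rw [mem_closedBall_zero_iff]
        simp only
        nlinarith
      · simp only [Set.mem_iUnion, Set.mem_ofPred_eq]
        exact ⟨v, ⟨hv1, hv2⟩, (not_le.1 hcon).le⟩
    rw [hempty] at hmem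
    exact hmem) (1 / 2) (by norm_num)
  have hcs : ∀ f : SpT n → ℝ, Continuous f → Continuous fun x => f (s, x) :=
      fun f hf => hf.comp (by fun_prop)
  calc ∫ x in Metric.closedBall (0 : Fin n → ℝ) R, PK K U (s, x)
      ≤ ∫ x in Metric.closedBall (0 : Fin n → ℝ) R, kap c * ρ (s, x) :=
        setIntegral_mono
          ((hcs _ (PK_cont K hU)).continuousOn.integrableOn_compact (isCompact_closedBall _ _))
          ((continuous_const.mul (hcs _ hρs.cont)).continuousOn.integrableOn_compact
            (isCompact_closedBall _ _)) fun x => PK_le_rho hc K (ha s ⟨hs0, hsT⟩ x)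
    _ = kap c * ∫ x in Metric.closedBall (0 : Fin n → ℝ) R, ρ (s, x) := integral_const_mul _ _
    _ ≤ kap c * ∫ x in Metric.closedBall (0 : Fin n → ℝ) (R + 1 - M * s - 1 / 2), ρ (s, x) := by
        refine mul_le_mul_of_nonneg_left ?_ hk0.le
        refine setIntegral_mono_set
          ((hcs _ hρs.cont).continuousOn.integrableOn_compact (isCompact_closedBall _ _))
          (Filter.Eventually.of_forall fun x => hρ0 s ⟨hs0, hsT⟩ x)
          (Filter.Eventually.of_forall ?_)
        exact Metric.closedBall_subset_closedBall (by linarith [hδM s hsδ])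
    _ ≤ _ := mul_le_mul_of_nonneg_left hen hk0.le

/-! ### The energy inequality on the whole space -/

/-- The function with time shifted by `t0` and scaled by `σ`. -/
def tsh (t0 σ : ℝ) (f : SpT n → ℝ) : SpT n → ℝ := fun p => f (t0 + σ * p.1, p.2)

/-- The factor produced by differentiating a time-rescaled function. -/
def sg (σ : ℝ) : Dir n → ℝ
  | none => σ
  | some _ => 1

lemma tsh_sm (t0 σ : ℝ) {f : SpT n → ℝ} (hf : Sm f) : Sm (tsh t0 σ f) :=
  ContDiff.comp hf ((contDiff_const.add (contDiff_const.mul contDiff_fst)).prodMk contDiff_snd)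

/-- Each time derivative of the rescaled function brings out one factor `σ`. -/
lemma dD_tsh (t0 σ : ℝ) {f : SpT n → ℝ} (hf : Sm f) (d : Dir n) :
    dD d (tsh t0 σ f) = fun p => sg σ d * tsh t0 σ (dD d f) p := by
  funext p
  have h1 := (hf.diff (t0 + σ * p.1, p.2)).hasFDerivAt
  have h2 : HasFDerivAt (fun p : SpT n => (t0 + σ * p.1, p.2))
      ((σ • ContinuousLinearMap.fst ℝ ℝ (Fin n → ℝ)).prod
        (ContinuousLinearMap.snd ℝ ℝ (Fin n → ℝ))) p :=
    ((((ContinuousLinearMap.fst ℝ ℝ (Fin n → ℝ)).hasFDerivAt).const_mul σ).const_add t0).prodMk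
      (ContinuousLinearMap.snd ℝ ℝ (Fin n → ℝ)).hasFDerivAt
  have h3 := (HasFDerivAt.comp p h1 h2).fderiv
  have h4 : dD d (tsh t0 σ f) p = fderiv ℝ f (t0 + σ * p.1, p.2) (σ * (bv d).1, (bv d).2) := by
    rw [dD]
    change fderiv ℝ (f ∘ fun p : SpT n => (t0 + σ * p.1, p.2)) p (bv d) = _
    rw [h3]; simp
  rw [h4]
  have h5 : ((σ * (bv d).1, (bv d).2) : SpT n) = sg σ d • bv d := by
    cases d <;> simp [bv, sg]
  rw [h5, map_smul]; rfl

lemma dW_tsh_sq (t0 : ℝ) {σ : ℝ} (hσ : σ ^ 2 = 1) {f : SpT n → ℝ} (hf : Sm f) (w : List (Dir n)) :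
    ∃ τ : ℝ, τ ^ 2 = 1 ∧ dW w (tsh t0 σ f) = fun p => τ * tsh t0 σ (dW w f) p := by
  induction w with
  | nil => exact ⟨1, by norm_num, by simp⟩
  | cons d w ih =>
    obtain ⟨τ, h1, h2⟩ := ih
    refine ⟨τ * sg σ d, ?_, ?_⟩
    · cases d <;> simp [sg, mul_pow, h1, hσ]
    · rw [dW_cons, h2, dD_const_mul (tsh_sm t0 σ (hf.dW w)), dD_tsh t0 σ (hf.dW w)]
      funext p; simp [mul_assoc]

lemma PK_tsh (t0 : ℝ) {σ : ℝ} (hσ : σ ^ 2 = 1) {f : SpT n → ℝ} (hf : Sm f) (K : ℕ) (p : SpT n) :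
    PK K (tsh t0 σ f) p = PK K f (t0 + σ * p.1, p.2) := by
  refine Finset.sum_congr rfl fun w _ => Finset.sum_congr rfl fun d _ => ?_
  obtain ⟨τ, h1, h2⟩ := dW_tsh_sq t0 hσ hf (d :: w)
  rw [h2, mul_pow, h1, one_mul]; rfl

/-- Translation and reversal of time (`σ = ±1`) preserve the equation, with `a` and `b` replaced
by `σ a` and `σ b`. -/
lemma Sol.tsh {a b c t0 σ : ℝ} (hσ : σ ^ 2 = 1) {O : Set (SpT n)} {U : SpT n → ℝ} (hU : Sm U)
    (h : Sol a b c O U) :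
    Sol (σ * a) (σ * b) c {p | (t0 + σ * p.1, p.2) ∈ O} (tsh t0 σ U) := by
  intro p hp
  have e : ∀ d d' : Dir n, dD d (dD d' (_root_.tsh t0 σ U)) p =
      sg σ d' * (sg σ d * dD d (dD d' U) (t0 + σ * p.1, p.2)) := by
    intro d d'
    rw [dD_tsh t0 σ hU, dD_const_mul (tsh_sm t0 σ (hU.dD d')), dD_tsh t0 σ (hU.dD d')]
    rfl
  have e1 : ∀ d : Dir n, dD d (_root_.tsh t0 σ U) p = sg σ d * dD d U (t0 + σ * p.1, p.2) := by
    intro d; rw [dD_tsh t0 σ hU]; rfl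
  have := h _ hp
  simp only [e, e1, sg, one_mul]
  have hσ' : σ * σ = 1 := by rw [← pow_two, hσ]
  have e3 : ∑ i, dD (some i) U (t0 + σ * p.1, p.2) *
      (σ * dD (some i) (dD none U) (t0 + σ * p.1, p.2)) =
      σ * ∑ i, dD (some i) U (t0 + σ * p.1, p.2) *
      dD (some i) (dD none U) (t0 + σ * p.1, p.2) := by
    rw [Finset.mul_sum]; exact Finset.sum_congr rfl fun i _ => by ring
  rw [e3]
  set X := dD none (dD none U) (t0 + σ * p.1, p.2)
  set Y := dD none U (t0 + σ * p.1, p.2)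
  set Z := ∑ i, dD (some i) U (t0 + σ * p.1, p.2) * dD (some i) (dD none U) (t0 + σ * p.1, p.2)
  have e4 : σ * (σ * X) = X := by rw [← mul_assoc, hσ', one_mul]
  have e5 : σ * a * (σ * Y * X) = a * (Y * X) := by linear_combination (a * Y * X) * hσ'
  have e6 : σ * b * (σ * Z) = b * Z := by linear_combination (b * Z) * hσ'
  rw [e4, e5, e6]; exact this

lemma IsSchwartz.sq {f : (Fin n → ℝ) → ℝ} (hf : IsSchwartz f) : IsSchwartz (fun x => f x ^ 2) := by
  simpa only [pow_two] using hf.mul hf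

/-- All derivatives have Schwartz time slices. -/
def SchW (U : SpT n → ℝ) : Prop := ∀ w t, IsSchwartz (fun x => dW w U (t, x))

lemma SchW.PK {U : SpT n → ℝ} (h : SchW U) (K : ℕ) (t : ℝ) :
    IsSchwartz (fun x => PK K U (t, x)) :=
  IsSchwartz.sum _ fun _ _ => IsSchwartz.sum _ fun _ _ => (h _ t).sq

/-- The energies of all orders stay bounded on the closed time interval: `local_bound`, applied
forward and backward in time from each `t0`, bounds them near `t0`, and `[0, T]` is compact. -/
lemma energy_bdd {a b c : ℝ} (hc : 0 < c) {K : ℕ} (hK : 2 * n + 1 ≤ K) {U : SpT n → ℝ}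
    (hU : Sm U) (hS : SchW U) {T : ℝ} (hsol : Sol a b c {p | 0 < p.1 ∧ p.1 < T} U)
    (ha : ∀ s ∈ Set.Icc 0 T, ∀ x, |a * dD none U (s, x)| ≤ 1 / 2) :
    ∃ C, ∀ s ∈ Set.Icc 0 T, ∫ x, PK K U (s, x) ≤ C := by
  have hI : ∀ s, Integrable fun x => PK K U (s, x) := fun s => (hS.PK K s).integrable
  have hball : ∀ s C, (∀ R, 0 ≤ R → ∫ x in Metric.closedBall (0 : Fin n → ℝ) R, PK K U (s, x) ≤ C) →
      ∫ x, PK K U (s, x) ≤ C := by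
    intro s C h
    have hcov : AECover (volume : Measure (Fin n → ℝ)) Filter.atTop
      (fun k : ℕ => Metric.closedBall (0 : Fin n → ℝ) k) := aecover_closedBall tendsto_natCast_atTop_atTop
    exact le_of_tendsto' (hcov.integral_tendsto_of_countably_generated (hI s))
      fun k => h k (Nat.cast_nonneg k)
  have hone : ∀ t0 ∈ Set.Icc 0 T, ∀ σ : ℝ, σ = 1 ∨ σ = -1 → ∃ δ > 0, ∃ C, ∀ s, 0 ≤ s → s ≤ δ →
      t0 + σ * s ∈ Set.Icc 0 T → ∫ x, PK K U (t0 + σ * s, x) ≤ C := by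
    intro t0 ht0 σ hσ
    have hσ2 : σ ^ 2 = 1 := by rcases hσ with h | h <;> simp [h]
    have hσa : |σ| = 1 := by rcases hσ with h | h <;> simp [h]
    set T1 := if σ = 1 then T - t0 else t0 with hT1
    have hmem : ∀ s ∈ Set.Icc 0 T1, t0 + σ * s ∈ Set.Icc 0 T := by
      intro s hs
      rcases hσ with h | h
      · subst h; simp only [if_true] at hT1; constructor <;> linarith [hs.1, hs.2, ht0.1]
      · subst h; norm_num at hT1; constructor <;> linarith [hs.1, hs.2, ht0.1, ht0.2]
    have hmem' : ∀ s, 0 < s → s < T1 → 0 < t0 + σ * s ∧ t0 + σ * s < T := by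
      intro s h1 h2
      rcases hσ with h | h
      · subst h; simp only [if_true] at hT1; constructor <;> linarith [ht0.1, ht0.2]
      · subst h; norm_num at hT1; constructor <;> linarith [ht0.1, ht0.2]
    have hle : ∀ s, t0 + σ * s ∈ Set.Icc 0 T → s ≤ T1 := by
      intro s hs
      rcases hσ with h | h
      · subst h; simp only [if_true] at hT1; linarith [hs.2]
      · subst h; norm_num at hT1; linarith [hs.1]
    obtain ⟨δ, hδ, C, hC⟩ := local_bound (a := σ * a) (b := σ * b) hc hK (tsh_sm t0 σ hU) (T1 := T1)
      (fun p hp => (hsol.tsh (t0 := t0) hσ2 hU) p (hmem' p.1 hp.1 hp.2))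
      (fun s hs x => by
        have := ha _ (hmem s hs) x
        rw [dD_tsh t0 σ hU]
        simp only [sg, _root_.tsh, abs_mul, hσa, one_mul] at this ⊢
        exact this)
      (by simp only [PK_tsh t0 hσ2 hU]; exact hI _)
    refine ⟨δ, hδ, C, fun s h1 h2 h3 => hball _ _ fun R hR => ?_⟩
    have := hC s h1 h2 (hle s h3) R hR
    simpa only [PK_tsh t0 hσ2 hU] using this
  have hcomp := isCompact_Icc (a := (0:ℝ)) (b := T)
  have := hcomp.induction_on (p := fun S => ∃ C, ∀ s ∈ S, s ∈ Set.Icc 0 T →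
    ∫ x, PK K U (s, x) ≤ C) ⟨0, by simp⟩ (fun s t hst ⟨C, hC⟩ => ⟨C, fun x hx => hC x (hst hx)⟩)
    (fun s t ⟨C, hC⟩ ⟨D, hD⟩ => ⟨max C D, fun x hx hx' => by
      rcases hx with hx | hx
      · exact (hC x hx hx').trans (le_max_left _ _)
      · exact (hD x hx hx').trans (le_max_right _ _)⟩) ?_
  · obtain ⟨C, hC⟩ := this
    exact ⟨C, fun s hs => hC s hs hs⟩
  · intro t0 ht0
    obtain ⟨δ1, h1, C1, hC1⟩ := hone t0 ht0 1 (Or.inl rfl)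
    obtain ⟨δ2, h2, C2, hC2⟩ := hone t0 ht0 (-1) (Or.inr rfl)
    refine ⟨Set.Icc (t0 - δ2) (t0 + δ1), mem_nhdsWithin_of_mem_nhds
      (Icc_mem_nhds (by linarith) (by linarith)), max C1 C2, fun s hs hsT => ?_⟩
    rcases le_total t0 s with h | h
    · have := hC1 (s - t0) (by linarith) (by linarith [hs.2]) (by ring_nf; exact hsT)
      rw [show t0 + 1 * (s - t0) = s by ring] at this
      exact this.trans (le_max_left _ _)
    · have := hC2 (t0 - s) (by linarith) (by linarith [hs.1]) (by ring_nf; exact hsT)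
      rw [show t0 + -1 * (t0 - s) = s by ring] at this
      exact this.trans (le_max_right _ _)

/-- Bounded energies bound the low-order derivatives uniformly in space and time. -/
lemma low_bdd {K : ℕ} {U : SpT n → ℝ} (hU : Sm U) (hS : SchW U) {T C : ℝ}
    (hC : ∀ s ∈ Set.Icc 0 T, ∫ x, PK K U (s, x) ≤ C) :
    ∃ L, 0 ≤ L ∧ ∀ s ∈ Set.Icc 0 T, ∀ x, ∀ w : List (Dir n), 1 ≤ w.length → w.length ≤ K + 1 - n →
      |dW w U (s, x)| ≤ L := by
  refine ⟨Real.sqrt (2 ^ n * (2 ^ n * C)), Real.sqrt_nonneg _, fun s hs x w h1 h2 => ?_⟩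
  refine Real.abs_le_sqrt ?_
  set r := max ‖x‖ (1 / 2)
  have h := sobolev_cube (hU.dW w) s (r := r) (le_max_right _ _) x (le_max_left _ _)
  refine h.trans (mul_le_mul_of_nonneg_left ?_ (by positivity))
  have hcs : ∀ f : SpT n → ℝ, Continuous f → Continuous fun x => f (s, x) :=
      fun f hf => hf.comp (by fun_prop)
  have hI : Integrable fun x => PK K U (s, x) := (hS.PK K s).integrable
  calc _ ≤ ∫ y in Metric.closedBall (0 : Fin n → ℝ) r, 2 ^ n * PK K U (s, y) := by
        refine setIntegral_mono
          ((hcs _ (sob_cont _ (hU.dW w))).continuousOn.integrableOn_compact (isCompact_closedBall _ _))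
          (hI.const_mul _).integrableOn fun z => ?_
        have h3 := sob_le (List.finRange n) U w (s, z) (PK K U (s, z)) fun w' h4 h5 =>
          le_PK U _ w' (by omega) (by simp at h5; omega)
        rwa [List.length_finRange] at h3
    _ ≤ ∫ y, 2 ^ n * PK K U (s, y) := setIntegral_le_integral (hI.const_mul _)
        (Filter.Eventually.of_forall fun y => mul_nonneg (by positivity) (PK_nonneg _ _ _))
    _ = 2 ^ n * ∫ y, PK K U (s, y) := integral_const_mul _ _
    _ ≤ _ := mul_le_mul_of_nonneg_left (hC s hs) (by positivity)

lemma SchW.rho {U : SpT n → ℝ} (h : SchW U) (a c : ℝ) (w : List (Dir n)) (t : ℝ) :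
    IsSchwartz (fun x => rho a c U w (t, x)) := by
  have h1 : IsSchwartz (fun x => dD none (dW w U) (t, x) ^ 2) := (h (none :: w) t).sq
  have h2 : ∀ i : Fin n, IsSchwartz (fun x => dD (some i) (dW w U) (t, x) ^ 2) :=
    fun i => (h (some i :: w) t).sq
  have h3 : IsSchwartz (fun x => dD none U (t, x) * dD none (dW w U) (t, x) ^ 2) :=
    IsSchwartz.mul (h [none] t) h1
  have := (h1.add (h3.const_mul (-a))).add ((IsSchwartz.sum Finset.univ fun i _ => h2 i).const_mul (c ^ 2))
  convert this using 2 with x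
  unfold _root_.rho; ring

lemma SchW.word2 {U : SpT n → ℝ} (h : SchW U) (v v' : List (Dir n)) (t : ℝ) :
    IsSchwartz (fun x => dW v (dW v' U) (t, x)) := by
  rw [← dW_append]; exact h _ t

lemma SchW.cmt {U : SpT n → ℝ} (h : SchW U) (a b : ℝ) (w : List (Dir n)) (t : ℝ) :
    IsSchwartz (fun x => cmt a b U w (t, x)) := by
  refine ((IsSchwartz.listSum _ fun q _ => ?_).const_mul a).add
    ((IsSchwartz.sum Finset.univ fun i _ => IsSchwartz.listSum _ fun q _ => ?_).const_mul b)
  · exact (h.word2 q.1 [none] t).mul (h.word2 q.2 [none, none] t)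
  · exact (h.word2 q.1 [some i] t).mul (h.word2 q.2 [some i, none] t)

lemma SchW.src {U : SpT n → ℝ} (h : SchW U) (a b : ℝ) (w : List (Dir n)) (t : ℝ) :
    IsSchwartz (fun x => src a b U w (t, x)) := by
  have h1 : IsSchwartz (fun x => dD none (dW w U) (t, x) ^ 2) := (h (none :: w) t).sq
  have h2 : IsSchwartz (fun x => dD none (dD none U) (t, x) * dD none (dW w U) (t, x) ^ 2) :=
    (h [none, none] t).mul h1
  have h3 : IsSchwartz (fun x => (∑ i, dD (some i) (dD (some i) U) (t, x)) *
      dD none (dW w U) (t, x) ^ 2) :=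
    (IsSchwartz.sum Finset.univ fun i _ => h [some i, some i] t).mul h1
  have h4 : IsSchwartz (fun x => dD none (dW w U) (t, x) * _root_.cmt a b U w (t, x)) :=
    (h (none :: w) t).mul (h.cmt a b w t)
  convert ((h2.const_mul (-a)).add (h3.const_mul (-b))).add (h4.const_mul 2) using 2 with x
  unfold _root_.src; ring

/-- The integrated energy inequality over the whole space. The balance law is tested against the
cutoffs `cone (R + M t) M 0 1`; they decrease along the flow of energy, so the boundary terms have
a sign, and they increase to `1` as `R → ∞`. The bounds of `energy_bdd` and `low_bdd` provide a
finite propagation speed `M` and the dominating functions. -/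
lemma energy_ineq {a b c : ℝ} (hc : 0 < c) {K : ℕ} (hK : 2 * n + 1 ≤ K) {U : SpT n → ℝ}
    (hU : Sm U) (hS : SchW U) {T : ℝ} (hsol : Sol a b c {p | 0 < p.1 ∧ p.1 < T} U)
    (ha : ∀ s ∈ Set.Icc 0 T, ∀ x, |a * dD none U (s, x)| ≤ 1 / 2)
    {w : List (Dir n)} (hw : w.length ≤ K) {t : ℝ} (ht : t ∈ Set.Icc 0 T) :
    ∫ x, rho a c U w (t, x) ≤ (∫ x, rho a c U w (0, x)) +
      ∫ s in (0:ℝ)..t, ∫ x, src a b U w (s, x) := by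
  obtain ⟨C, hC⟩ := energy_bdd hc hK hU hS hsol ha
  obtain ⟨L, hL0, hL⟩ := low_bdd hU hS hC
  set M := 2 * c + 2 * |b| * L with hM
  have hM0 : 0 < M := by positivity
  have hO : IsOpen {p : SpT n | 0 < p.1 ∧ p.1 < T} :=
    (isOpen_lt continuous_const continuous_fst).inter (isOpen_lt continuous_fst continuous_const)
  have hin : ∀ s ∈ Set.Ioo 0 t, s ∈ Set.Icc 0 T := fun s hs => ⟨hs.1.le, hs.2.le.trans ht.2⟩
  set W : ℕ → SpT n → ℝ := fun R => cone (R + M * t) M 0 1 with hW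
  have hD : ∀ R, Decr M 0 (W R) := fun R => cone_decr hM0.le _ 0 one_pos
  have hW1 : ∀ R p, W R p ≤ 1 := fun R p => by simpa using cone_le_exp (R + M * t) M 0 1 p
  have hWlim : ∀ s, s ≤ t → ∀ x, ∀ᶠ R in Filter.atTop, W R (s, x) = 1 := by
    intro s hs x
    obtain ⟨R0, hR0⟩ := exists_nat_ge (‖x‖ + 1)
    filter_upwards [Filter.eventually_ge_atTop R0] with R hR
    have : (R0 : ℝ) ≤ R := by exact_mod_cast hR
    have h := cone_eq_exp (n := n) (r0 := R + M * t) (M := M) (k := 0) one_pos (p := (s, x))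
      (by simp only; nlinarith)
    simpa using h
  have hsupp : ∀ R : ℕ, ∀ s, 0 ≤ s → ∀ x : Fin n → ℝ, R + M * t < ‖x‖ → W R (s, x) = 0 := by
    intro R s hs x hx
    refine cone_eq_zero one_pos (R := R + M * t) (add_nonneg (Nat.cast_nonneg R) (mul_nonneg hM0.le ht.1)) ?_ hx
    simp only; nlinarith
  have hcone : ∀ R : ℕ, ∫ x, W R (t, x) * rho a c U w (t, x) ≤ (∫ x, rho a c U w (0, x)) +
      ∫ s in (0:ℝ)..t, ∫ x, W R (s, x) * src a b U w (s, x) := by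
    intro R
    have h := cone_ineq (ρ := rho a c U w) (S := src a b U w) (q := flux b c U w) (k := 0) (e := 1)
      (r0 := R + M * t) (rho_sm a c hU w) (src_sm a b hU w).cont (fun i => flux_sm b c hU w i) ht.1
      hM0.le (add_nonneg (Nat.cast_nonneg R) (mul_nonneg hM0.le ht.1)) one_pos
      (fun s hs x => rho_balance hsol hU hO w (s, x) ⟨hs.1, hs.2.trans_le ht.2⟩)
      (by simp) (fun s hs x _ => ⟨rho_nonneg (ha s (hin s hs) x) w, fun i =>
        flux_le hc (ha s (hin s hs) x) w i (hL s (hin s hs) x [some i] (by simp) (by simp; omega))⟩)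
    simp only [zero_mul, sub_zero] at h
    refine h.trans (add_le_add_left ?_ _)
    refine integral_mono (integrable_slice ((hD R).sm.cont.mul (rho_sm a c hU w).cont) 0 (R + M * t)
      fun x hx => mul_eq_zero_of_left (hsupp R 0 le_rfl x hx) _)
      (hS.rho a c w 0).integrable fun x => ?_
    exact mul_le_of_le_one_left (rho_nonneg (ha 0 ⟨le_rfl, ht.1.trans ht.2⟩ x) w) (hW1 R _)
  have hcs : ∀ s, ∀ f : SpT n → ℝ, Continuous f → Continuous fun x => f (s, x) :=
      fun s f hf => hf.comp (by fun_prop)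
  have hlim : ∀ s, 0 ≤ s → s ≤ t → ∀ f : SpT n → ℝ, Continuous f → (Integrable fun x => f (s, x)) →
      Filter.Tendsto (fun R => ∫ x, W R (s, x) * f (s, x)) Filter.atTop (nhds (∫ x, f (s, x))) := by
    intro s hs0 hs f hf hfi
    refine tendsto_integral_of_dominated_convergence (fun x => ‖f (s, x)‖)
      (fun R => ((hcs s _ (hD R).sm.cont).mul (hcs s f hf)).aestronglyMeasurable) hfi.norm
      (fun R => Filter.Eventually.of_forall fun x => ?_) (Filter.Eventually.of_forall fun x => ?_)
    · rw [norm_mul]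
      refine mul_le_of_le_one_left (norm_nonneg _) ?_
      rw [Real.norm_eq_abs, abs_of_nonneg ((hD R).nonneg _)]; exact hW1 R _
    · refine tendsto_const_nhds.congr' ?_
      filter_upwards [hWlim s hs x] with R hR
      simp [hR]
  set X := (|a| + n * |b|) * (1 + 2 * 2 ^ K) with hX
  have hsrc : ∀ s ∈ Set.Icc 0 T, ∫ x, ‖src a b U w (s, x)‖ ≤ X * (L * C) := by
    intro s hs
    calc ∫ x, ‖src a b U w (s, x)‖ ≤ ∫ x, X * (L * PK K U (s, x)) :=
          integral_mono (hS.src a b w s).integrable.norm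
            (((hS.PK K s).integrable.const_mul L).const_mul X)
            fun x => src_le hK hL0 (hL s hs x) hw
      _ = X * (L * ∫ x, PK K U (s, x)) := by rw [integral_const_mul, integral_const_mul]
      _ ≤ _ := mul_le_mul_of_nonneg_left (mul_le_mul_of_nonneg_left (hC s hs) hL0) (by positivity)
  have hlim2 : Filter.Tendsto (fun R => ∫ s in (0:ℝ)..t, ∫ x, W R (s, x) * src a b U w (s, x))
      Filter.atTop (nhds (∫ s in (0:ℝ)..t, ∫ x, src a b U w (s, x))) := by
    refine intervalIntegral.tendsto_integral_filter_of_dominated_convergence (fun _ => X * (L * C))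
      (Filter.Eventually.of_forall fun R => ?_) (Filter.Eventually.of_forall fun R =>
        Filter.Eventually.of_forall fun s hs => ?_) (by simp) (Filter.Eventually.of_forall fun s hs => ?_)
    · exact (slice_intervalIntegrable ((hD R).sm.cont.mul (src_sm a b hU w).cont) ht.1 (R + M * t)
        fun s hs x hx => mul_eq_zero_of_left (hsupp R s hs.1 x hx) _).aestronglyMeasurable_restrict_uIoc
    · rw [Set.uIoc_of_le ht.1] at hs
      refine (norm_integral_le_integral_norm _).trans (le_trans ?_ (hsrc s ⟨hs.1.le, hs.2.trans ht.2⟩))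
      refine integral_mono (integrable_slice ((hD R).sm.cont.mul (src_sm a b hU w).cont) s (R + M * t)
        fun x hx => mul_eq_zero_of_left (hsupp R s hs.1.le x hx) _).norm
        (hS.src a b w s).integrable.norm fun x => ?_
      simp only [norm_mul]
      refine mul_le_of_le_one_left (norm_nonneg _) ?_
      rw [Real.norm_eq_abs, abs_of_nonneg ((hD R).nonneg _)]; exact hW1 R _
    · rw [Set.uIoc_of_le ht.1] at hs
      exact hlim s hs.1.le hs.2 _ (src_sm a b hU w).cont (hS.src a b w s).integrable
  exact le_of_tendsto_of_tendsto' (hlim t ht.1 le_rfl _ (rho_sm a c hU w).cont (hS.rho a c w t).integrable)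
    (tendsto_const_nhds.add hlim2) hcone

/-! ### The Sobolev product estimate -/

open FourierTransform LineDeriv SchwartzMap in
/-- The squared Sobolev norm of order `s` of `φ` in terms of its inverse Fourier transform. -/
def WS (s : ℕ) (φ : SchwartzMap (EuclideanSpace ℝ (Fin n)) ℂ) : ENNReal :=
  ∫⁻ ξ, ENNReal.ofReal (‖𝓕⁻ φ ξ‖ ^ 2 * (1 + ‖ξ‖ ^ 2) ^ s)

/-- Iterated derivative of a Schwartz function along a list of coordinate directions. -/
def lds (v : List (Fin n)) (φ : SchwartzMap (EuclideanSpace ℝ (Fin n)) ℂ) :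
    SchwartzMap (EuclideanSpace ℝ (Fin n)) ℂ :=
  v.foldr (fun i g => LineDeriv.lineDerivOp (EuclideanSpace.single i (1:ℝ)) g) φ

open FourierTransform in
/-- Plancherel. -/
lemma WS_zero (φ : SchwartzMap (EuclideanSpace ℝ (Fin n)) ℂ) :
    WS 0 φ = ENNReal.ofReal (∫ x, ‖φ x‖ ^ 2) := by
  have h := SchwartzMap.integral_norm_sq_fourier (𝓕⁻ φ)
  rw [FourierTransform.fourier_fourierInv_eq] at h
  have hI : MemLp (⇑(𝓕⁻ φ : SchwartzMap (EuclideanSpace ℝ (Fin n)) ℂ)) (2 : ℕ) volume :=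
    SchwartzMap.memLp _ _ _
  rw [h, ofReal_integral_eq_lintegral_ofReal (hI.integrable_norm_pow two_ne_zero)
    (Filter.Eventually.of_forall fun x => by positivity)]
  simp [WS]

open FourierTransform in
/-- The factor `1 + ‖ξ‖²` is the Fourier symbol of at most one further derivative in some
direction. -/
lemma WS_succ (s : ℕ) (φ : SchwartzMap (EuclideanSpace ℝ (Fin n)) ℂ) :
    WS (s + 1) φ ≤ WS s φ +
      ∑ i : Fin n, WS s (LineDeriv.lineDerivOp (EuclideanSpace.single i (1:ℝ)) φ) := by
  have hm : ∀ ψ : SchwartzMap (EuclideanSpace ℝ (Fin n)) ℂ,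
      Measurable fun ξ => ENNReal.ofReal (‖𝓕⁻ ψ ξ‖ ^ 2 * (1 + ‖ξ‖ ^ 2) ^ s) := fun ψ => by
    have := (𝓕⁻ ψ).continuous
    fun_prop
  unfold WS
  rw [← lintegral_finsetSum _ fun i _ => hm _, ← lintegral_add_left (hm φ)]
  refine lintegral_mono fun ξ => ?_
  rw [← ENNReal.ofReal_sum_of_nonneg fun i _ => by positivity,
    ← ENNReal.ofReal_add (by positivity) (Finset.sum_nonneg fun i _ => by positivity)]
  refine ENNReal.ofReal_le_ofReal ?_
  have h1 : ∀ i, ‖𝓕⁻ φ ξ‖ ^ 2 * ξ i ^ 2 ≤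
      ‖𝓕⁻ (LineDeriv.lineDerivOp (EuclideanSpace.single i (1:ℝ)) φ) ξ‖ ^ 2 := by
    intro i
    have ht : (fun x : EuclideanSpace ℝ (Fin n) => inner ℝ x (EuclideanSpace.single i (1:ℝ))).HasTemperateGrowth := by
      fun_prop
    rw [SchwartzMap.fourierInv_lineDerivOp_eq]
    have : (-(2 * π * Complex.I) • SchwartzMap.smulLeftCLM ℂ (inner ℝ · (EuclideanSpace.single i (1:ℝ))) (𝓕⁻ φ)) ξ
        = -(2 * π * Complex.I) * ((ξ i : ℝ) * 𝓕⁻ φ ξ) := by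
      rw [smul_apply, SchwartzMap.smulLeftCLM_apply_apply ht]
      simp [EuclideanSpace.inner_single_right]
    rw [this, norm_mul, norm_mul, mul_pow, mul_pow]
    have h2 : ‖-(2 * π * Complex.I)‖ = 2 * π := by
      simp [abs_of_pos Real.pi_pos]
    rw [h2, Complex.norm_real, Real.norm_eq_abs, sq_abs]
    have : 1 ≤ (2 * π) ^ 2 := by nlinarith [Real.pi_gt_three]
    nlinarith [mul_nonneg (sq_nonneg (ξ i)) (sq_nonneg ‖𝓕⁻ φ ξ‖)]
  rw [pow_succ (1 + ‖ξ‖ ^ 2) s, EuclideanSpace.norm_sq_eq ξ]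
  simp only [Real.norm_eq_abs, sq_abs]
  set w := (1 + ∑ i, ξ i ^ 2) ^ s
  have hw : 0 ≤ w := by positivity
  rw [← Finset.sum_mul]
  have h3 := Finset.sum_le_sum fun i (_ : i ∈ Finset.univ) => h1 i
  rw [← Finset.mul_sum] at h3
  nlinarith [mul_le_mul_of_nonneg_right h3 hw]

/-- The Fourier-side norm is controlled by the `L²` norms of the derivatives of order at most `s`. -/
lemma WS_le (s : ℕ) (φ : SchwartzMap (EuclideanSpace ℝ (Fin n)) ℂ) (X : ℝ)
    (h : ∀ v : List (Fin n), v.length ≤ s → ∫ x, ‖lds v φ x‖ ^ 2 ≤ X) :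
    WS s φ ≤ ENNReal.ofReal ((n + 1) ^ s * X) := by
  induction s generalizing φ with
  | zero =>
    rw [WS_zero]; simpa [lds] using ENNReal.ofReal_le_ofReal (h [] (by simp))
  | succ s ih =>
    have hX : 0 ≤ X := le_trans (integral_nonneg fun x => by positivity) (h [] (by simp))
    refine (WS_succ s φ).trans ?_
    have h1 : ∀ i : Fin n, WS s (LineDeriv.lineDerivOp (EuclideanSpace.single i (1:ℝ)) φ) ≤
        ENNReal.ofReal ((n + 1) ^ s * X) := fun i => ih _ fun v hv => by
      have := h (v ++ [i]) (by simpa using hv)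
      simpa [lds] using this
    refine (add_le_add (ih φ fun v hv => h v (by omega)) (Finset.sum_le_sum fun i _ => h1 i)).trans ?_
    rw [Finset.sum_const, Finset.card_univ, Fintype.card_fin, nsmul_eq_mul,
      ← ENNReal.ofReal_natCast, ← ENNReal.ofReal_mul (by positivity),
      ← ENNReal.ofReal_add (by positivity) (by positivity)]
    exact ENNReal.ofReal_le_ofReal (by rw [pow_succ]; linarith)

/-- Cauchy–Schwarz. -/
lemma lintegral_cs {α : Type*} [MeasurableSpace α] (μ : Measure α) {f g : α → ENNReal}
    (hf : AEMeasurable f μ) (hg : AEMeasurable g μ) :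
    (∫⁻ a, f a * g a ∂μ) ^ 2 ≤ (∫⁻ a, f a ^ 2 ∂μ) * ∫⁻ a, g a ^ 2 ∂μ := by
  have h := ENNReal.lintegral_mul_le_Lp_mul_Lq μ Real.HolderConjugate.two_two hf hg
  simp only [ENNReal.rpow_two, Pi.mul_apply] at h
  refine (pow_le_pow_left' h 2).trans (le_of_eq ?_)
  rw [mul_pow, ← ENNReal.rpow_two, ← ENNReal.rpow_two, ← ENNReal.rpow_mul, ← ENNReal.rpow_mul]
  norm_num

/-- The integral of the weight, finite when `n < 2p`. -/
lemma weight_fin {p : ℕ} (hp : n < 2 * p) :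
    ∫⁻ ξ : EuclideanSpace ℝ (Fin n), ENNReal.ofReal (((1 + ‖ξ‖ ^ 2) ^ p)⁻¹) ≠ ⊤ := by
  have h := integrable_rpow_neg_one_add_norm_sq (E := EuclideanSpace ℝ (Fin n)) (μ := volume)
    (r := 2 * p) (by simpa using (by exact_mod_cast hp : (n:ℝ) < 2 * p))
  have h2 := h.lintegral_lt_top
  convert h2.ne using 4 with ξ
  rw [show -(2 * (p:ℝ)) / 2 = -p by ring, Real.rpow_neg (by positivity), Real.rpow_natCast]

/-- One of the two frequencies is the smaller one, so the product of weights of total order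
`s₁ + s₂` dominates the weight of order `s₁ + s₂` at that frequency. -/
lemma weight_ineq {x y : ℝ} (hx : 1 ≤ x) (hy : 1 ≤ y) (s1 s2 : ℕ) :
    1 ≤ (x ^ s1 * y ^ s2) * ((x ^ (s1 + s2))⁻¹ + (y ^ (s1 + s2))⁻¹) := by
  have hx0 : 0 < x := by linarith
  have hy0 : 0 < y := by linarith
  rcases le_total x y with h | h
  · have h1 : 1 ≤ (x ^ s1 * y ^ s2) * (x ^ (s1 + s2))⁻¹ := by
      rw [← div_eq_mul_inv, one_le_div (by positivity), pow_add]
      gcongr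
    have : 0 ≤ (x ^ s1 * y ^ s2) * (y ^ (s1 + s2))⁻¹ := by positivity
    linarith
  · have h1 : 1 ≤ (x ^ s1 * y ^ s2) * (y ^ (s1 + s2))⁻¹ := by
      rw [← div_eq_mul_inv, one_le_div (by positivity), pow_add]
      gcongr
    have : 0 ≤ (x ^ s1 * y ^ s2) * (x ^ (s1 + s2))⁻¹ := by positivity
    linarith


open FourierTransform in
/-- The product estimate on the Fourier side. By Plancherel the left-hand side is the squared `L²`
norm of a convolution, which `weight_ineq` and Cauchy–Schwarz bound at each frequency. -/
lemma prod_le {s1 s2 : ℕ} (φ ψ : SchwartzMap (EuclideanSpace ℝ (Fin n)) ℂ) :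
    ENNReal.ofReal (∫ x, ‖φ x * ψ x‖ ^ 2) ≤
      (2 * ∫⁻ ξ : EuclideanSpace ℝ (Fin n), ENNReal.ofReal (((1 + ‖ξ‖ ^ 2) ^ (s1 + s2))⁻¹)) *
        (WS s1 φ * WS s2 ψ) := by
  set W := ∫⁻ ξ : EuclideanSpace ℝ (Fin n), ENNReal.ofReal (((1 + ‖ξ‖ ^ 2) ^ (s1 + s2))⁻¹) with hW
  set a := 𝓕⁻ φ with ha
  set b := 𝓕⁻ ψ with hb
  set C := SchwartzMap.convolution (ContinuousLinearMap.mul ℂ ℂ) a b with hC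
  have hac := a.continuous
  have hbc := b.continuous
  have h1 : ∫ x, ‖φ x * ψ x‖ ^ 2 = ∫ ξ, ‖C ξ‖ ^ 2 := by
    rw [← SchwartzMap.integral_norm_sq_fourier C, hC, SchwartzMap.fourier_convolution, ha, hb,
      FourierTransform.fourier_fourierInv_eq, FourierTransform.fourier_fourierInv_eq]
    rfl
  have hI : MemLp C (2 : ℕ) volume := C.memLp _ _
  rw [h1, ofReal_integral_eq_lintegral_ofReal (hI.integrable_norm_pow two_ne_zero)
    (Filter.Eventually.of_forall fun x => by positivity)]
  set A : EuclideanSpace ℝ (Fin n) → ENNReal := fun ξ => ENNReal.ofReal (‖a ξ‖ ^ 2 * (1 + ‖ξ‖ ^ 2) ^ s1) with hA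
  set B : EuclideanSpace ℝ (Fin n) → ENNReal := fun ξ => ENNReal.ofReal (‖b ξ‖ ^ 2 * (1 + ‖ξ‖ ^ 2) ^ s2) with hB
  have hAm : Measurable A := by fun_prop
  have hBm : Measurable B := by fun_prop
  have key : ∀ ξ, ENNReal.ofReal (‖C ξ‖ ^ 2) ≤ (∫⁻ η, A η * B (ξ - η)) * (2 * W) := by
    intro ξ
    have h2 : ENNReal.ofReal ‖C ξ‖ ≤ ∫⁻ η,
        ENNReal.ofReal (Real.sqrt ((‖a η‖ ^ 2 * (1 + ‖η‖ ^ 2) ^ s1) * (‖b (ξ - η)‖ ^ 2 * (1 + ‖ξ - η‖ ^ 2) ^ s2)))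
        * ENNReal.ofReal (Real.sqrt (((1 + ‖η‖ ^ 2) ^ (s1 + s2))⁻¹ + ((1 + ‖ξ - η‖ ^ 2) ^ (s1 + s2))⁻¹)) := by
      rw [hC, SchwartzMap.convolution_apply, MeasureTheory.convolution, ofReal_norm]
      refine (enorm_integral_le_lintegral_enorm _).trans (lintegral_mono fun η => ?_)
      rw [← ofReal_norm, ← ENNReal.ofReal_mul (Real.sqrt_nonneg _), ← Real.sqrt_mul (by positivity)]
      refine ENNReal.ofReal_le_ofReal (Real.le_sqrt_of_sq_le ?_)
      simp only [ContinuousLinearMap.mul_apply', norm_mul, mul_pow]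
      have := weight_ineq (x := 1 + ‖η‖ ^ 2) (y := 1 + ‖ξ - η‖ ^ 2) (by nlinarith [sq_nonneg ‖η‖])
        (by nlinarith [sq_nonneg ‖ξ - η‖]) s1 s2
      calc ‖a η‖ ^ 2 * ‖b (ξ - η)‖ ^ 2 = (‖a η‖ ^ 2 * ‖b (ξ - η)‖ ^ 2) * 1 := by ring
        _ ≤ (‖a η‖ ^ 2 * ‖b (ξ - η)‖ ^ 2) * _ := mul_le_mul_of_nonneg_left this (by positivity)
        _ = _ := by ring
    rw [ENNReal.ofReal_pow (norm_nonneg _)]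
    refine (pow_le_pow_left' h2 2).trans ((lintegral_cs _ (Measurable.aemeasurable (by fun_prop)) (Measurable.aemeasurable (by fun_prop))).trans ?_)
    refine mul_le_mul' (le_of_eq ?_) (le_of_eq ?_)
    · refine lintegral_congr fun η => ?_
      rw [← ENNReal.ofReal_pow (Real.sqrt_nonneg _), Real.sq_sqrt (by positivity),
        ENNReal.ofReal_mul (by positivity)]
    · have : ∀ η, ENNReal.ofReal (Real.sqrt (((1 + ‖η‖ ^ 2) ^ (s1 + s2))⁻¹ + ((1 + ‖ξ - η‖ ^ 2) ^ (s1 + s2))⁻¹)) ^ 2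
          = ENNReal.ofReal (((1 + ‖η‖ ^ 2) ^ (s1 + s2))⁻¹) + ENNReal.ofReal (((1 + ‖ξ - η‖ ^ 2) ^ (s1 + s2))⁻¹) := by
        intro η
        rw [← ENNReal.ofReal_pow (Real.sqrt_nonneg _), Real.sq_sqrt (by positivity),
          ENNReal.ofReal_add (by positivity) (by positivity)]
      simp only [this]
      rw [lintegral_add_left (by fun_prop), lintegral_sub_left_eq_self
        (fun η : EuclideanSpace ℝ (Fin n) => ENNReal.ofReal (((1 + ‖η‖ ^ 2) ^ (s1 + s2))⁻¹)) ξ, two_mul]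
  refine (lintegral_mono key).trans ?_
  rw [lintegral_mul_const _ (by fun_prop), mul_comm]
  refine mul_le_mul' le_rfl (le_of_eq ?_)
  rw [lintegral_lintegral_swap (by fun_prop)]
  have : ∀ η, ∫⁻ ξ, A η * B (ξ - η) = A η * ∫⁻ ξ, B ξ := by
    intro η
    rw [lintegral_const_mul _ (by fun_prop), lintegral_sub_right_eq_self B η]
  simp only [this]
  rw [lintegral_mul_const _ hAm]
  rfl


/-- Iterated spatial derivative of a function along a list of coordinate directions. -/
def pds (v : List (Fin n)) (f : (Fin n → ℝ) → ℝ) : (Fin n → ℝ) → ℝ := v.foldr pd f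

/-- The complex-valued Schwartz function on Euclidean space attached to a real one. -/
def toC (g : SchwartzMap (Fin n → ℝ) ℝ) : SchwartzMap (EuclideanSpace ℝ (Fin n)) ℂ :=
  (SchwartzMap.compCLMOfContinuousLinearEquiv ℝ (EuclideanSpace.equiv (Fin n) ℝ) g).postcompCLM
    Complex.ofRealCLM

lemma toC_apply (g : SchwartzMap (Fin n → ℝ) ℝ) (x : EuclideanSpace ℝ (Fin n)) :
    toC g x = (g (WithLp.ofLp x) : ℂ) := rfl

lemma lds_toC (g : SchwartzMap (Fin n → ℝ) ℝ) (v : List (Fin n)) :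
    ∃ g' : SchwartzMap (Fin n → ℝ) ℝ, ⇑g' = pds v g ∧ lds v (toC g) = toC g' := by
  induction v with
  | nil => exact ⟨g, rfl, rfl⟩
  | cons i v ih =>
    obtain ⟨g', h1, h2⟩ := ih
    refine ⟨LineDeriv.lineDerivOp (Pi.single i (1:ℝ) : Fin n → ℝ) g', ?_, ?_⟩
    · funext x
      change fderiv ℝ g' x _ = pd i (pds v g) x
      rw [← h1]; rfl
    · change LineDeriv.lineDerivOp (EuclideanSpace.single i (1:ℝ)) (lds v (toC g)) = _
      rw [h2]
      ext x
      rw [SchwartzMap.lineDerivOp_apply_eq_fderiv, toC_apply, SchwartzMap.lineDerivOp_apply_eq_fderiv]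
      have h3 := (g'.differentiable (WithLp.ofLp x)).hasFDerivAt
      have h4 : HasFDerivAt (fun y : EuclideanSpace ℝ (Fin n) => ((g' (WithLp.ofLp y) : ℝ) : ℂ))
          (Complex.ofRealCLM.comp ((fderiv ℝ g' (WithLp.ofLp x)).comp
            (EuclideanSpace.equiv (Fin n) ℝ : EuclideanSpace ℝ (Fin n) →L[ℝ] (Fin n → ℝ)))) x :=
        Complex.ofRealCLM.hasFDerivAt.comp x
          (HasFDerivAt.comp x h3 (EuclideanSpace.equiv (Fin n) ℝ).toContinuousLinearMap.hasFDerivAt)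
      have h5 : (⇑(toC g') : EuclideanSpace ℝ (Fin n) → ℂ) =
        fun y => ((g' (WithLp.ofLp y) : ℝ) : ℂ) := rfl
      rw [h5, h4.fderiv]
      rfl

lemma integral_eu (F : (Fin n → ℝ) → ℝ) :
    ∫ x : EuclideanSpace ℝ (Fin n), F (WithLp.ofLp x) = ∫ x, F x :=
  (PiLp.volume_preserving_ofLp (Fin n)).integral_comp
    (MeasurableEquiv.toLp 2 (Fin n → ℝ)).symm.measurableEmbedding F

/-- The product estimate in Sobolev spaces: `H^{s₁} · H^{s₂} ⊂ L²` when `s₁ + s₂ > n/2`. -/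
lemma exists_prod {p : ℕ} (hp : n < 2 * p) : ∃ C, 0 ≤ C ∧ ∀ s1 s2 : ℕ, s1 + s2 = p →
    ∀ f g : (Fin n → ℝ) → ℝ, IsSchwartz f → IsSchwartz g → ∀ X Y : ℝ,
    (∀ v : List (Fin n), v.length ≤ s1 → ∫ x, pds v f x ^ 2 ≤ X) →
    (∀ v : List (Fin n), v.length ≤ s2 → ∫ x, pds v g x ^ 2 ≤ Y) →
    ∫ x, (f x * g x) ^ 2 ≤ C * (X * Y) := by
  set W := ∫⁻ ξ : EuclideanSpace ℝ (Fin n), ENNReal.ofReal (((1 + ‖ξ‖ ^ 2) ^ p)⁻¹) with hW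
  have hWf : W ≠ ⊤ := weight_fin hp
  refine ⟨2 * W.toReal * (n + 1) ^ p, by positivity, ?_⟩
  rintro s1 s2 hs _ _ ⟨f, rfl⟩ ⟨g, rfl⟩ X Y hX hY
  have hX0 : 0 ≤ X := le_trans (integral_nonneg fun x => by positivity) (hX [] (by simp))
  have hY0 : 0 ≤ Y := le_trans (integral_nonneg fun x => by positivity) (hY [] (by simp))
  have key : ∀ s (f : SchwartzMap (Fin n → ℝ) ℝ) (X : ℝ),
      (∀ v : List (Fin n), v.length ≤ s → ∫ x, pds v f x ^ 2 ≤ X) →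
      WS s (toC f) ≤ ENNReal.ofReal ((n + 1) ^ s * X) := by
    intro s f X h
    refine WS_le s _ X fun v hv => ?_
    obtain ⟨f', h1, h2⟩ := lds_toC f v
    have h3 := integral_eu fun x => f' x ^ 2
    simp only [h2, toC_apply, Complex.norm_real, Real.norm_eq_abs, sq_abs]
    rw [h3, h1]; exact h v hv
  have h1 := prod_le (s1 := s1) (s2 := s2) (toC f) (toC g)
  have h2 : ∫ x, ‖toC f x * toC g x‖ ^ 2 = ∫ x, (f x * g x) ^ 2 := by
    rw [← integral_eu fun x => (f x * g x) ^ 2]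
    refine integral_congr_ae (Filter.Eventually.of_forall fun x => ?_)
    simp only [toC_apply, ← Complex.ofReal_mul, Complex.norm_real, Real.norm_eq_abs, sq_abs]
  rw [hs, ← hW, h2] at h1
  have h3 := h1.trans (mul_le_mul' le_rfl (mul_le_mul' (key s1 f X hX) (key s2 g Y hY)))
  rw [← ENNReal.ofReal_mul (by positivity), ← ENNReal.ofReal_toReal hWf,
    show (2 : ENNReal) = ENNReal.ofReal 2 by simp, ← ENNReal.ofReal_mul (by positivity),
    ← ENNReal.ofReal_mul (by positivity), ENNReal.ofReal_le_ofReal_iff (by positivity)] at h3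
  refine h3.trans (le_of_eq ?_)
  rw [← hs, pow_add]; ring

/-- The trilinear estimate on `H^{s₁} × H^{s₂} × L²` for `s₁ + s₂ ≥ p > n/2`. -/
lemma exists_trilinear {p : ℕ} (hp : n < 2 * p) : ∃ C, 0 ≤ C ∧ ∀ s1 s2 : ℕ, p ≤ s1 + s2 →
    ∀ f g h : (Fin n → ℝ) → ℝ, IsSchwartz f → IsSchwartz g → IsSchwartz h → ∀ X : ℝ,
    (∀ v : List (Fin n), v.length ≤ s1 → ∫ x, pds v f x ^ 2 ≤ X) →
    (∀ v : List (Fin n), v.length ≤ s2 → ∫ x, pds v g x ^ 2 ≤ X) →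
    ∫ x, h x ^ 2 ≤ X → |∫ x, f x * g x * h x| ≤ C * X ^ ((3:ℝ) / 2) := by
  obtain ⟨C, hC, H⟩ := exists_prod hp
  refine ⟨Real.sqrt C, Real.sqrt_nonneg _, fun s1 s2 hs f g h hf hg hh X h1 h2 h3 => ?_⟩
  have hX : 0 ≤ X := le_trans (integral_nonneg fun x => by positivity) h3
  have h4 := H (min s1 p) (p - min s1 p) (by omega) f g hf hg X X
    (fun v hv => h1 v (hv.trans (min_le_left _ _))) (fun v hv => h2 v (by omega))
  have hfg := hf.mul hg
  have hi1 : Integrable fun x => (f x * g x) ^ 2 := by simpa only [pow_two] using (hfg.mul hfg).integrable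
  have hi2 : Integrable fun x => h x ^ 2 := by simpa only [pow_two] using (hh.mul hh).integrable
  have hi3 : Integrable fun x => f x * g x * h x := (hfg.mul hh).integrable
  have hq : (∫ x, f x * g x * h x) ^ 2 ≤ (∫ x, (f x * g x) ^ 2) * ∫ x, h x ^ 2 := by
    have hd := discrim_le_zero (a := ∫ x, h x ^ 2) (b := 2 * ∫ x, f x * g x * h x)
      (c := ∫ x, (f x * g x) ^ 2) fun r => by
        have : 0 ≤ ∫ x, (r * h x + f x * g x) ^ 2 := integral_nonneg fun x => sq_nonneg _
        have e : (fun x => (r * h x + f x * g x) ^ 2) =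
          fun x => (r * r * h x ^ 2 + 2 * r * (f x * g x * h x)) + (f x * g x) ^ 2 := by
            funext x; ring
        have hj : Integrable fun x => r * r * h x ^ 2 + 2 * r * (f x * g x * h x) :=
          (hi2.const_mul _).add (hi3.const_mul _)
        rw [e, integral_add hj hi1, integral_add (hi2.const_mul _) (hi3.const_mul _), integral_const_mul, integral_const_mul] at this
        linarith
    rw [discrim] at hd
    nlinarith
  have hq2 : (∫ x, f x * g x * h x) ^ 2 ≤ C * X ^ 3 := by
    refine hq.trans ?_
    calc _ ≤ (C * (X * X)) * X := mul_le_mul h4 h3 (integral_nonneg fun x => sq_nonneg _) (by positivity)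
      _ = _ := by ring
  have e : X ^ ((3:ℝ) / 2) = Real.sqrt (X ^ 3) := by
    rw [Real.sqrt_eq_rpow, ← Real.rpow_natCast X 3, ← Real.rpow_mul hX]; norm_num
  rw [e, ← Real.sqrt_mul hC]
  exact Real.abs_le_sqrt hq2

/-! ### Integrated energy production -/

lemma pds_slice {U : SpT n → ℝ} (hU : Sm U) (v : List (Fin n)) (w : List (Dir n)) (t : ℝ) :
    pds v (fun x => dW w U (t, x)) = fun x => dW (v.map some ++ w) U (t, x) := by
  induction v with
  | nil => rfl
  | cons i v ih =>
    change pd i (pds v _) = _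
    rw [ih]
    funext x
    simp only [List.map_cons, List.cons_append, dW_cons]
    rw [dD_some_eq (hU.dW _)]

/-- Schwartz functions whose integral is at most `S` in absolute value. -/
def Bd (S : ℝ) (f : (Fin n → ℝ) → ℝ) : Prop := IsSchwartz f ∧ |∫ x, f x| ≤ S

lemma Bd.add {S S' : ℝ} {f g : (Fin n → ℝ) → ℝ} (hf : Bd S f) (hg : Bd S' g) :
    Bd (S + S') fun x => f x + g x := by
  refine ⟨hf.1.add hg.1, ?_⟩
  rw [integral_add hf.1.integrable hg.1.integrable]
  exact (abs_add_le _ _).trans (add_le_add hf.2 hg.2)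

lemma Bd.const_mul {S : ℝ} {f : (Fin n → ℝ) → ℝ} (hf : Bd S f) (k : ℝ) :
    Bd (|k| * S) fun x => k * f x := by
  refine ⟨hf.1.const_mul k, ?_⟩
  rw [integral_const_mul, abs_mul]
  exact mul_le_mul_of_nonneg_left hf.2 (abs_nonneg k)

lemma Bd.listSum {ι : Type*} (l : List ι) {S : ℝ} {f : ι → (Fin n → ℝ) → ℝ}
    (hf : ∀ i ∈ l, Bd S (f i)) : Bd (l.length * S) fun x => (l.map fun i => f i x).sum := by
  induction l with
  | nil => exact ⟨by simpa using IsSchwartz.zero, by simp⟩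
  | cons a l ih =>
    have := (hf a (by simp)).add (ih fun i hi => hf i (by simp [hi]))
    simp only [List.map_cons, List.sum_cons, List.length_cons, Nat.cast_add, Nat.cast_one]
    rwa [show (l.length + 1 : ℝ) * S = S + l.length * S by ring]

lemma Bd.sum {ι : Type*} (s : Finset ι) {S : ℝ} {f : ι → (Fin n → ℝ) → ℝ}
    (hf : ∀ i ∈ s, Bd S (f i)) : Bd (s.card * S) fun x => ∑ i ∈ s, f i x := by
  have := Bd.listSum s.toList (f := f) (S := S) (by simpa using hf)
  simpa [Finset.sum_map_toList] using this

lemma Bd.mono {S S' : ℝ} {f : (Fin n → ℝ) → ℝ} (hf : Bd S f) (h : S ≤ S') : Bd S' f :=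
  ⟨hf.1, hf.2.trans h⟩

/-- The integrated energy production is controlled by the `3/2` power of any common bound `X`
for the squared `L²` norms of the derivatives of order `1` to `m + 1`. In each of its cubic terms
one factor is taken in `L²` and the other two, of orders `k₁`, `k₂` with `k₁ + k₂ ≤ m + 3`, in
`H^{m+1-k₁}` and `H^{m+1-k₂}`; then `(m+1-k₁) + (m+1-k₂) ≥ m - 1 > n/2`. -/
lemma exists_src (n m : ℕ) (hm : n / 2 + 2 ≤ m) : ∃ C, 0 ≤ C ∧ ∀ U : SpT n → ℝ, Sm U → SchW U →
    ∀ t X : ℝ, (∀ w : List (Dir n), 1 ≤ w.length → w.length ≤ m + 1 → ∫ x, dW w U (t, x) ^ 2 ≤ X) →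
    ∀ a b : ℝ, ∀ w : List (Dir n), w.length ≤ m →
    |∫ x, src a b U w (t, x)| ≤ (|a| + n * |b|) * (C * X ^ ((3:ℝ) / 2)) := by
  obtain ⟨C, hC, H⟩ := exists_trilinear (n := n) (p := n / 2 + 1) (by omega)
  refine ⟨(1 + 2 * 2 ^ m) * C, by positivity, fun U hU hS t X hX a b w hw => ?_⟩
  have hX0 : 0 ≤ X := le_trans (integral_nonneg fun x => sq_nonneg _) (hX [none] (by simp) (by simp))
  set S := C * X ^ ((3:ℝ) / 2) with hSdef
  have hS0 : 0 ≤ S := by positivity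
  have tri : ∀ v1 v2 v3 : List (Dir n), 1 ≤ v1.length → 1 ≤ v2.length → 1 ≤ v3.length →
      v3.length ≤ m + 1 → v1.length ≤ m + 1 → v2.length ≤ m + 1 →
      v1.length + v2.length ≤ m + 3 →
      Bd S fun x => dW v1 U (t, x) * dW v2 U (t, x) * dW v3 U (t, x) := by
    intro v1 v2 v3 h1 h2 h3 h3' h1' h2' h12
    refine ⟨((hS _ t).mul (hS _ t)).mul (hS _ t), ?_⟩
    refine H (m + 1 - v1.length) (m + 1 - v2.length) (by omega) _ _ _ (hS v1 t) (hS v2 t) (hS v3 t) X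
      (fun v hv => ?_) (fun v hv => ?_) (hX v3 h3 h3')
    · rw [pds_slice hU]; exact hX _ (by simp; omega) (by simp; omega)
    · rw [pds_slice hU]; exact hX _ (by simp; omega) (by simp; omega)
  have b1 := (tri [none, none] (none :: w) (none :: w) (by simp) (by simp) (by simp) (by simpa)
    (by simp; omega) (by simpa) (by simp; omega)).const_mul (-a)
  have b2 := (Bd.sum Finset.univ fun (i : Fin n) _ => tri [some i, some i] (none :: w) (none :: w)
    (by simp) (by simp) (by simp) (by simpa) (by simp; omega) (by simpa) (by simp; omega)).const_mul (-b)
  have b3 := (Bd.listSum (spl' w) fun q hq => tri (q.1 ++ [none]) (q.2 ++ [none, none]) (none :: w)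
    (by simp) (by simp) (by simp) (by simpa) (by have := mem_spl' w q hq; simp; omega)
    (by have := mem_spl' w q hq; simp; omega) (by have := mem_spl' w q hq; simp; omega)).const_mul (2 * a)
  have b4 := (Bd.sum Finset.univ fun (i : Fin n) _ => Bd.listSum (spl' w) fun q hq =>
    tri (q.1 ++ [some i]) (q.2 ++ [some i, none]) (none :: w)
    (by simp) (by simp) (by simp) (by simpa) (by have := mem_spl' w q hq; simp; omega)
    (by have := mem_spl' w q hq; simp; omega) (by have := mem_spl' w q hq; simp; omega)).const_mul (2 * b)
  have hl : ((spl' w).length : ℝ) ≤ 2 ^ m := by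
    exact_mod_cast (length_spl' w).trans (Nat.pow_le_pow_right (by norm_num) hw)
  have hb := ((b1.add b2).add (b3.add b4)).mono (S' := (|a| + n * |b|) * ((1 + 2 * 2 ^ m) * S)) (by
    rw [Finset.card_univ, Fintype.card_fin, abs_neg, abs_neg, abs_mul, abs_mul, abs_two]
    have e1 : |a| * (((spl' w).length : ℝ) * S) ≤ |a| * (2 ^ m * S) := by gcongr
    have e2 : |b| * (n * (((spl' w).length : ℝ) * S)) ≤ |b| * (n * (2 ^ m * S)) := by gcongr
    linarith)
  have e : (fun x => src a b U w (t, x)) = fun x =>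
      (-a * (dW [none, none] U (t, x) * dW (none :: w) U (t, x) * dW (none :: w) U (t, x)) +
      -b * ∑ i : Fin n, dW [some i, some i] U (t, x) * dW (none :: w) U (t, x) * dW (none :: w) U (t, x)) +
      (2 * a * ((spl' w).map fun q => dW (q.1 ++ [none]) U (t, x) * dW (q.2 ++ [none, none]) U (t, x) *
        dW (none :: w) U (t, x)).sum +
      2 * b * ∑ i : Fin n, ((spl' w).map fun q => dW (q.1 ++ [some i]) U (t, x) *
        dW (q.2 ++ [some i, none]) U (t, x) * dW (none :: w) U (t, x)).sum) := by
    funext x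
    simp only [src, cmt, dW_append, dW_cons, dW_nil, List.sum_map_mul_right, ← Finset.sum_mul]
    ring
  rw [e, mul_assoc (1 + 2 * 2 ^ m : ℝ)]
  exact hb.2

/-! ### Modified energy and multiplicities -/

lemma mem_multiIdx {k : ℕ} {A : Fin n → ℕ} : A ∈ multiIdx n k ↔ ∑ i, A i ≤ k := by
  simp only [multiIdx, Finset.mem_filter, Fintype.mem_piFinset, Finset.mem_range,
    and_iff_right_iff_imp]
  intro h i
  have := Finset.single_le_sum (f := A) (fun _ _ => Nat.zero_le _) (Finset.mem_univ i)
  omega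

lemma sum_add_single (A : Fin n → ℕ) (i : Fin n) :
    ∑ k, (A + Pi.single i 1 : Fin n → ℕ) k = ∑ k, A k + 1 := by
  simp [Finset.sum_add_distrib]

lemma sub_single_add {B : Fin n → ℕ} {i : Fin n} (h : B i ≠ 0) :
    B - Pi.single i 1 + Pi.single i 1 = B := by
  funext k
  by_cases hk : k = i
  · subst hk; simp; omega
  · simp [hk]

/-- Number of variables occurring in a multi-index. -/
def nsupp (B : Fin n → ℕ) : ℕ := (Finset.univ.filter fun i => B i ≠ 0).card

lemma nsupp_sub {B : Fin n → ℕ} {i : Fin n} (h : B i ≠ 0) :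
    nsupp B - 1 ≤ nsupp (B - Pi.single i 1) ∧ nsupp (B - Pi.single i 1) ≤ nsupp B := by
  have hi : i ∈ Finset.univ.filter fun i => B i ≠ 0 := by simpa
  constructor
  · rw [nsupp, ← Finset.card_erase_of_mem hi]
    refine Finset.card_le_card fun k hk => ?_
    simp only [Finset.mem_erase, Finset.mem_filter, Finset.mem_univ, true_and] at hk ⊢
    simp [hk.1, hk.2]
  · refine Finset.card_le_card fun k hk => ?_
    simp only [Finset.mem_filter, Finset.mem_univ, true_and, Pi.sub_apply] at hk ⊢
    omega

/-- Weight of the derivative `∂_t^j ∂^A` in the modified energy. The same derivative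
`∂_t^j ∂^B` arises as `∂_i ∂_t^j ∂^A` once for each variable occurring in `B`; for `j ≥ 1` the
weight compensates for this multiplicity, up to a factor `2`. For `j = 0` no compensation is needed,
since the gradient norm in the energy counts pure space derivatives with the same multiplicity. -/
def wt (j : ℕ) (A : Fin n → ℕ) : ℝ := if j = 0 then 1 else ((max 1 (nsupp A) : ℕ) : ℝ)⁻¹

lemma wt_pos (j : ℕ) (A : Fin n → ℕ) : 0 < wt j A := by
  unfold wt
  split_ifs
  · exact one_pos
  · have : 0 < max 1 (nsupp A) := by omega
    positivity

lemma wt_le_one (j : ℕ) (A : Fin n → ℕ) : wt j A ≤ 1 := by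
  unfold wt
  split_ifs
  · exact le_rfl
  · exact inv_le_one_of_one_le₀ (by exact_mod_cast le_max_left _ _)

lemma wt_ge (j : ℕ) (A : Fin n → ℕ) : ((max 1 (nsupp A) : ℕ) : ℝ)⁻¹ ≤ wt j A := by
  have := wt_le_one 1 A
  unfold wt at *
  split_ifs with h
  · simpa using this
  · exact le_rfl

/-- The coefficient of `‖∂_t^j ∂^B u‖²` in the modified energy is at least `min (1/2) (c²)`: either
`B = 0`, and the time part contributes `1/2`, or the space part contributes at least `c²`. -/
lemma coef_lower (c : ℝ) (j : ℕ) (B : Fin n → ℕ) :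
    min (1 / 2) (c ^ 2) ≤ 1 / 2 * wt (j - 1) B +
      c ^ 2 * ∑ i with B i ≠ 0, wt j (B - Pi.single i 1) := by
  rcases Nat.eq_zero_or_pos (nsupp B) with h | h
  · have h1 := wt_ge (j - 1) B
    rw [h] at h1; simp only [zero_le, sup_of_le_left, Nat.cast_one, inv_one] at h1
    have h2 : 0 ≤ c ^ 2 * ∑ i with B i ≠ 0, wt j (B - Pi.single i 1) :=
      mul_nonneg (sq_nonneg c) (Finset.sum_nonneg fun i _ => (wt_pos _ _).le)
    have := min_le_left (1 / 2) (c ^ 2)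
    linarith
  · have h1 : 1 ≤ ∑ i with B i ≠ 0, wt j (B - Pi.single i 1) := by
      calc (1:ℝ) = ∑ i with B i ≠ 0, ((nsupp B : ℕ) : ℝ)⁻¹ := by
            rw [Finset.sum_const, nsmul_eq_mul]
            change 1 = (nsupp B : ℝ) * _
            rw [mul_inv_cancel₀ (by positivity)]
        _ ≤ _ := Finset.sum_le_sum fun i hi => by
            simp only [Finset.mem_filter, Finset.mem_univ, true_and] at hi
            have h2 := nsupp_sub hi
            refine le_trans ?_ (wt_ge _ _)
            have : max 1 (nsupp (B - Pi.single i 1)) ≤ nsupp B := by omega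
            have h3 : 0 < max 1 (nsupp (B - Pi.single i 1)) := by omega
            exact inv_anti₀ (by exact_mod_cast h3) (by exact_mod_cast this)
    have := min_le_right (1 / 2) (c ^ 2)
    nlinarith [mul_le_mul_of_nonneg_left h1 (sq_nonneg c), wt_pos (j - 1) B]

/-- The coefficient of `‖∂_t^j ∂^B u‖²` in the modified energy is at most `3 + 2c²`: the weights
of the derivatives from which it arises add up to at most `2`, since
`nsupp B ≤ 2 max 1 (nsupp B - 1)`. -/
lemma coef_upper (c : ℝ) {j : ℕ} (hj : j ≠ 0) (B : Fin n → ℕ) :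
    3 / 2 * wt (j - 1) B + c ^ 2 * ∑ i with B i ≠ 0, wt j (B - Pi.single i 1) ≤ 3 + 2 * c ^ 2 := by
  have h1 : ∑ i with B i ≠ 0, wt j (B - Pi.single i 1) ≤ 2 := by
    calc _ ≤ ∑ i with B i ≠ 0, ((max 1 (nsupp B - 1) : ℕ) : ℝ)⁻¹ :=
          Finset.sum_le_sum fun i hi => by
            simp only [Finset.mem_filter, Finset.mem_univ, true_and] at hi
            have h2 := nsupp_sub hi
            simp only [wt, hj, if_false]
            have : max 1 (nsupp B - 1) ≤ max 1 (nsupp (B - Pi.single i 1)) := by omega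
            have h3 : 0 < max 1 (nsupp B - 1) := by omega
            exact inv_anti₀ (by exact_mod_cast h3) (by exact_mod_cast this)
      _ = (nsupp B : ℝ) * ((max 1 (nsupp B - 1) : ℕ) : ℝ)⁻¹ := by
            rw [Finset.sum_const, nsmul_eq_mul]; rfl
      _ ≤ 2 := by
            have h3 : 0 < max 1 (nsupp B - 1) := by omega
            rw [← div_eq_mul_inv, div_le_iff₀ (by exact_mod_cast h3)]
            have : nsupp B ≤ 2 * max 1 (nsupp B - 1) := by omega
            exact_mod_cast this
  nlinarith [wt_le_one (j - 1) B, mul_le_mul_of_nonneg_left h1 (sq_nonneg c)]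

/-- The energy as a function of the squared norms `X j A` of `∂_t^j ∂^A u`. -/
def EX (m : ℕ) (X : ℕ → (Fin n → ℕ) → ℝ) : ℝ :=
  ∑ i : Fin n, ∑ A ∈ multiIdx n m, X 0 (A + Pi.single i 1) +
    ∑ j ∈ Finset.Icc 1 (m + 1), ∑ A ∈ multiIdx n (m + 1 - j), X j A

/-- The weighted sum of `k ‖∂_t V‖² + c² ‖∇V‖²` over the derivatives `V` of order at most `m`, as a
function of the squared norms `X j A`. The modified energy lies between its values at `k = 1/2`
and `k = 3/2`. -/
def FX (k c : ℝ) (m : ℕ) (X : ℕ → (Fin n → ℕ) → ℝ) : ℝ :=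
  ∑ j ∈ Finset.range (m + 1), ∑ A ∈ multiIdx n (m - j),
    wt j A * (k * X (j + 1) A + c ^ 2 * ∑ i, X j (A + Pi.single i 1))

/-- Reindexing by `B = A + e_i`. -/
lemma sum_shift (k : ℕ) (g : (Fin n → ℕ) → ℝ) (Y : (Fin n → ℕ) → ℝ) :
    ∑ A ∈ multiIdx n k, g A * ∑ i, Y (A + Pi.single i 1) =
      ∑ B ∈ multiIdx n (k + 1), (∑ i with B i ≠ 0, g (B - Pi.single i 1)) * Y B := by
  simp only [Finset.mul_sum, Finset.sum_mul]
  rw [Finset.sum_comm]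
  simp only [Finset.sum_filter]
  rw [Finset.sum_comm (s := multiIdx n (k + 1))]
  refine Finset.sum_congr rfl fun i _ => ?_
  rw [← Finset.sum_filter]
  refine Finset.sum_bij' (fun A _ => A + Pi.single i 1) (fun B _ => B - Pi.single i 1) ?_ ?_ ?_ ?_ ?_
  · intro A hA
    rw [mem_multiIdx] at hA
    simp only [Finset.mem_filter, mem_multiIdx, sum_add_single]
    exact ⟨by omega, by simp⟩
  · intro B hB
    simp only [Finset.mem_filter, mem_multiIdx] at hB ⊢
    have := sum_add_single (B - Pi.single i 1) i
    rw [sub_single_add hB.2] at this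
    omega
  · intro A _; simp
  · intro B hB; exact sub_single_add (Finset.mem_filter.1 hB).2
  · intro A _; simp

/-- `FX` with the terms belonging to the same derivative collected. -/
lemma FX_eq (k c : ℝ) (m : ℕ) (X : ℕ → (Fin n → ℕ) → ℝ) :
    FX k c m X = c ^ 2 * ∑ i : Fin n, ∑ A ∈ multiIdx n m, X 0 (A + Pi.single i 1) +
      ∑ j ∈ Finset.Icc 1 (m + 1), ∑ A ∈ multiIdx n (m + 1 - j),
        (k * wt (j - 1) A + c ^ 2 * ∑ i with A i ≠ 0, wt j (A - Pi.single i 1)) * X j A := by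
  have hI : ∀ G : ℕ → ℝ, ∑ j ∈ Finset.Icc 1 (m + 1), G j = ∑ j ∈ Finset.range (m + 1), G (j + 1) := by
    intro G
    rw [Finset.range_eq_Ico, Finset.sum_Ico_add' G 0 (m + 1) 1]
    rfl
  have h1 : FX k c m X = ∑ j ∈ Finset.range (m + 1), ∑ A ∈ multiIdx n (m - j), k * wt j A * X (j + 1) A +
      c ^ 2 * ∑ j ∈ Finset.range (m + 1), ∑ A ∈ multiIdx n (m - j), wt j A * ∑ i, X j (A + Pi.single i 1) := by
    simp only [FX, Finset.mul_sum, ← Finset.sum_add_distrib]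
    refine Finset.sum_congr rfl fun j _ => Finset.sum_congr rfl fun A _ => ?_
    rw [mul_add, Finset.mul_sum]
    congr 1
    · ring
    · exact Finset.sum_congr rfl fun i _ => by ring
  have h2 : ∑ j ∈ Finset.range (m + 1), ∑ A ∈ multiIdx n (m - j), wt j A * ∑ i, X j (A + Pi.single i 1) =
      ∑ i : Fin n, ∑ A ∈ multiIdx n m, X 0 (A + Pi.single i 1) +
      ∑ j ∈ Finset.Icc 1 (m + 1), ∑ A ∈ multiIdx n (m + 1 - j),
        (∑ i with A i ≠ 0, wt j (A - Pi.single i 1)) * X j A := by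
    rw [Finset.sum_range_succ', add_comm, hI, Finset.sum_range_succ]
    congr 1
    · rw [Finset.sum_comm]; simp [wt]
    · have hz : ∑ A ∈ multiIdx n (m + 1 - (m + 1)), (∑ i with A i ≠ 0, wt (m + 1) (A - Pi.single i 1)) *
          X (m + 1) A = 0 := by
        refine Finset.sum_eq_zero fun A hA => ?_
        rw [mem_multiIdx] at hA
        have : ∀ i, A i = 0 := fun i => by
          have := Finset.single_le_sum (f := A) (fun _ _ => Nat.zero_le _) (Finset.mem_univ i)
          omega
        simp [this]
      rw [hz, add_zero]
      refine Finset.sum_congr rfl fun j hj => ?_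
      rw [Finset.mem_range] at hj
      rw [sum_shift, show m + 1 - (j + 1) = m - (j + 1) + 1 by omega]
  rw [h1, h2, mul_add, ← add_assoc, add_comm (∑ j ∈ _, _) (c ^ 2 * _), add_assoc, hI, hI]
  congr 1
  rw [Finset.mul_sum, ← Finset.sum_add_distrib]
  refine Finset.sum_congr rfl fun j _ => ?_
  rw [Nat.add_sub_add_right, Finset.mul_sum, ← Finset.sum_add_distrib]
  refine Finset.sum_congr rfl fun A _ => ?_
  rw [Nat.add_sub_cancel]; ring

lemma FX_lower (c : ℝ) (m : ℕ) {X : ℕ → (Fin n → ℕ) → ℝ} (hX : ∀ j A, 0 ≤ X j A) :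
    min (1 / 2) (c ^ 2) * EX m X ≤ FX (1 / 2) c m X := by
  rw [FX_eq, EX, mul_add]
  refine add_le_add (mul_le_mul_of_nonneg_right (min_le_right _ _)
    (Finset.sum_nonneg fun _ _ => Finset.sum_nonneg fun _ _ => hX _ _)) ?_
  rw [Finset.mul_sum]
  refine Finset.sum_le_sum fun j hj => ?_
  rw [Finset.mul_sum]
  refine Finset.sum_le_sum fun A _ => ?_
  rw [Finset.mem_Icc] at hj
  exact mul_le_mul_of_nonneg_right (coef_lower c j A) (hX _ _)

lemma FX_upper (c : ℝ) (m : ℕ) {X : ℕ → (Fin n → ℕ) → ℝ} (hX : ∀ j A, 0 ≤ X j A) :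
    FX (3 / 2) c m X ≤ (3 + 2 * c ^ 2) * EX m X := by
  rw [FX_eq, EX, mul_add]
  refine add_le_add (mul_le_mul_of_nonneg_right (by nlinarith [sq_nonneg c])
    (Finset.sum_nonneg fun _ _ => Finset.sum_nonneg fun _ _ => hX _ _)) ?_
  rw [Finset.mul_sum]
  refine Finset.sum_le_sum fun j hj => ?_
  rw [Finset.mul_sum]
  refine Finset.sum_le_sum fun A _ => ?_
  rw [Finset.mem_Icc] at hj
  exact mul_le_mul_of_nonneg_right (coef_upper c (by omega) A) (hX _ _)

/-- Squared `L²` norm of `∂_t^j ∂^A U` at time `t`. -/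
def nrm (U : SpT n → ℝ) (t : ℝ) (j : ℕ) (A : Fin n → ℕ) : ℝ := ∫ x, dW (wJ j A) U (t, x) ^ 2

lemma nrm_nonneg (U : SpT n → ℝ) (t : ℝ) (j : ℕ) (A : Fin n → ℕ) : 0 ≤ nrm U t j A :=
  integral_nonneg fun _ => sq_nonneg _

lemma perm_some (A : Fin n → ℕ) (i : Fin n) (j : ℕ) :
    (some i :: wJ j A).Perm (wJ j (A + Pi.single i 1)) := by
  rw [List.perm_iff_count]
  rintro (_ | k)
  · simp [wJ, count_none_wA]
  · simp only [wJ, List.count_append, List.count_cons, count_wA, List.count_replicate]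
    by_cases h : k = i
    · subst h; simp
    · simp [h, Ne.symm h]

lemma perm_none (A : Fin n → ℕ) (j : ℕ) : (none :: wJ j A).Perm (wJ (j + 1) A) := by
  rw [List.perm_iff_count]
  rintro (_ | k)
  · simp [wJ, count_none_wA]
  · simp [wJ, List.count_append, List.count_replicate]

lemma Em_eq {u : ℝ → (Fin n → ℝ) → ℝ} (hu : SmoothSchwartz u) (m : ℕ) (t : ℝ) :
    Em m u t = EX m (nrm (unc u) t) := by
  unfold Em EX gradHsq Hsq L2sq nrm
  congr 1
  · refine Finset.sum_congr rfl fun i _ => Finset.sum_congr rfl fun A _ => ?_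
    have h1 : pd i (u t) = fun x => dD (some i) (unc u) (t, x) := by
      funext x; rw [dD_some_eq hu.sm]; rfl
    rw [h1, pdMulti_eq (hu.sm.dD _), ← dW_perm hu.sm (perm_some A i 0)]
    have h2 : dW (wA A) (dD (some i) (unc u)) = dW (some i :: wJ 0 A) (unc u) := by
      rw [dW_cons, dD_dW_comm hu.sm]; simp [wJ]
    rw [h2]
  · refine Finset.sum_congr rfl fun j _ => Finset.sum_congr rfl fun A _ => ?_
    have h1 : (fun x => dtIter j u t x) = fun x => dW (List.replicate j none) (unc u) (t, x) := by
      funext x; rw [dtIter_eq hu.sm]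
    rw [h1, pdMulti_eq (hu.sm.dW _), wJ, dW_append]

/-- Each squared `L²` norm of a derivative of order between `1` and `m + 1` is one of the terms of
the energy. -/
lemma nrm_word {U : SpT n → ℝ} (hU : Sm U) {m : ℕ} {t : ℝ} {w : List (Dir n)} (h1 : 1 ≤ w.length)
    (h2 : w.length ≤ m + 1) : ∫ x, dW w U (t, x) ^ 2 ≤ EX m (nrm U t) := by
  have hp := perm_wJ w
  set j := w.count none
  set A : Fin n → ℕ := fun i => w.count (some i)
  have hl := hp.length_eq
  rw [length_wJ] at hl
  rw [dW_perm hU hp]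
  change nrm U t j A ≤ _
  have hN := nrm_nonneg U t
  have hG : 0 ≤ ∑ i : Fin n, ∑ A ∈ multiIdx n m, nrm U t 0 (A + Pi.single i 1) :=
    Finset.sum_nonneg fun _ _ => Finset.sum_nonneg fun _ _ => hN _ _
  have hT : 0 ≤ ∑ j ∈ Finset.Icc 1 (m + 1), ∑ A ∈ multiIdx n (m + 1 - j), nrm U t j A :=
    Finset.sum_nonneg fun _ _ => Finset.sum_nonneg fun _ _ => hN _ _
  rcases Nat.eq_zero_or_pos j with hj | hj
  · rw [hj] at hl ⊢
    obtain ⟨i, hi⟩ : ∃ i, A i ≠ 0 := by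
      by_contra! h
      have h0 : ∑ i, A i = 0 := Finset.sum_eq_zero fun i _ => h i
      omega
    have hA := sub_single_add hi
    have hs := sum_add_single (A - Pi.single i 1) i
    rw [hA] at hs
    refine le_trans ?_ (le_add_of_nonneg_right hT)
    refine le_trans ?_ (Finset.single_le_sum
      (f := fun i => ∑ A ∈ multiIdx n m, nrm U t 0 (A + Pi.single i 1))
      (fun _ _ => Finset.sum_nonneg fun _ _ => hN _ _) (Finset.mem_univ i))
    have := Finset.single_le_sum (f := fun A => nrm U t 0 (A + Pi.single i 1)) (s := multiIdx n m)
      (fun _ _ => hN _ _) (a := A - Pi.single i 1) (mem_multiIdx.2 (by omega))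
    simpa only [hA] using this
  · refine le_trans ?_ (le_add_of_nonneg_left hG)
    refine le_trans ?_ (Finset.single_le_sum
      (f := fun j => ∑ A ∈ multiIdx n (m + 1 - j), nrm U t j A)
      (fun _ _ => Finset.sum_nonneg fun _ _ => hN _ _) (Finset.mem_Icc.2 ⟨hj, by omega⟩))
    exact Finset.single_le_sum (f := fun A => nrm U t j A)
      (fun _ _ => hN _ _) (mem_multiIdx.2 (by omega))

/-! ### The a priori estimate -/

lemma stronglyMeasurable_slice {f : SpT n → ℝ} (hf : Continuous f) :
    StronglyMeasurable fun s => ∫ x, f (s, x) :=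
  hf.stronglyMeasurable.integral_prod_right'

/-- The density with its coefficient `1 - a ∂_t U` replaced by a constant `k`, integrated. -/
lemma rho_int {c : ℝ} {U : SpT n → ℝ} (hU : Sm U) (hS : SchW U) (k : ℝ) (j : ℕ)
    (A : Fin n → ℕ) (t : ℝ) :
    IsSchwartz (fun x => k * dD none (dW (wJ j A) U) (t, x) ^ 2 +
      c ^ 2 * ∑ i, dD (some i) (dW (wJ j A) U) (t, x) ^ 2) ∧
    ∫ x, (k * dD none (dW (wJ j A) U) (t, x) ^ 2 +
      c ^ 2 * ∑ i, dD (some i) (dW (wJ j A) U) (t, x) ^ 2) =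
      k * nrm U t (j + 1) A + c ^ 2 * ∑ i, nrm U t j (A + Pi.single i 1) := by
  have h1 : IsSchwartz fun x => dD none (dW (wJ j A) U) (t, x) ^ 2 := (hS (none :: wJ j A) t).sq
  have h2 : ∀ i, IsSchwartz fun x => dD (some i) (dW (wJ j A) U) (t, x) ^ 2 :=
    fun i => (hS (some i :: wJ j A) t).sq
  have h3 : IsSchwartz fun x => ∑ i, dD (some i) (dW (wJ j A) U) (t, x) ^ 2 :=
    IsSchwartz.sum _ fun i _ => h2 i
  refine ⟨(h1.const_mul k).add (h3.const_mul (c ^ 2)), ?_⟩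
  rw [integral_add (h1.const_mul k).integrable (h3.const_mul (c ^ 2)).integrable,
    integral_const_mul, integral_const_mul, integral_finsetSum _ fun i _ => (h2 i).integrable]
  congr 2
  · unfold nrm; rw [← dW_perm hU (perm_none A j)]; rfl
  · refine Finset.sum_congr rfl fun i _ => ?_
    unfold nrm; rw [← dW_perm hU (perm_some A i j)]; rfl

/-- The modified energy: weighted sum of the energies of all derivatives of order at most `m`. -/
def Fm (a c : ℝ) (m : ℕ) (U : SpT n → ℝ) (t : ℝ) : ℝ :=
  ∑ j ∈ Finset.range (m + 1), ∑ A ∈ multiIdx n (m - j), wt j A * ∫ x, rho a c U (wJ j A) (t, x)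

lemma Fm_lower {a c : ℝ} (m : ℕ) {U : SpT n → ℝ} (hU : Sm U) (hS : SchW U) {t : ℝ}
    (ha : ∀ x, |a * dD none U (t, x)| ≤ 1 / 2) :
    min (1 / 2) (c ^ 2) * EX m (nrm U t) ≤ Fm a c m U t := by
  refine (FX_lower c m (nrm_nonneg U t)).trans ?_
  refine Finset.sum_le_sum fun j _ => Finset.sum_le_sum fun A _ =>
    mul_le_mul_of_nonneg_left ?_ (wt_pos _ _).le
  obtain ⟨h1, h2⟩ := rho_int (c := c) hU hS (1 / 2) j A t
  rw [← h2]
  exact integral_mono h1.integrable (hS.rho a c (wJ j A) t).integrable fun x => rho_lower (ha x) _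

lemma Fm_upper {a c : ℝ} (m : ℕ) {U : SpT n → ℝ} (hU : Sm U) (hS : SchW U) {t : ℝ}
    (ha : ∀ x, |a * dD none U (t, x)| ≤ 1 / 2) :
    Fm a c m U t ≤ (3 + 2 * c ^ 2) * EX m (nrm U t) := by
  refine le_trans ?_ (FX_upper c m (nrm_nonneg U t))
  refine Finset.sum_le_sum fun j _ => Finset.sum_le_sum fun A _ =>
    mul_le_mul_of_nonneg_left ?_ (wt_pos _ _).le
  obtain ⟨h1, h2⟩ := rho_int (c := c) hU hS (3 / 2) j A t
  rw [← h2]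
  exact integral_mono (hS.rho a c (wJ j A) t).integrable h1.integrable fun x => rho_upper (ha x) _

lemma EX_measurable (m : ℕ) {U : SpT n → ℝ} (hU : Sm U) :
    StronglyMeasurable fun t => EX m (nrm U t) := by
  have h : ∀ j A, StronglyMeasurable fun t => nrm U t j A := fun j A =>
    stronglyMeasurable_slice ((hU.dW _).cont.pow 2)
  unfold EX
  refine StronglyMeasurable.add ?_ ?_ <;>
  exact Finset.stronglyMeasurable_fun_sum _ fun _ _ => Finset.stronglyMeasurable_fun_sum _ fun _ _ => h _ _

lemma EX_nonneg {m : ℕ} {X : ℕ → (Fin n → ℕ) → ℝ} (hX : ∀ j A, 0 ≤ X j A) : 0 ≤ EX m X :=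
  add_nonneg (Finset.sum_nonneg fun _ _ => Finset.sum_nonneg fun _ _ => hX _ _)
    (Finset.sum_nonneg fun _ _ => Finset.sum_nonneg fun _ _ => hX _ _)

lemma EX_le {m : ℕ} {X : ℕ → (Fin n → ℕ) → ℝ} {C : ℝ}
    (hX : ∀ j A, 1 ≤ ∑ i, A i + j → ∑ i, A i + j ≤ m + 1 → X j A ≤ C) :
    EX m X ≤ ∑ _i : Fin n, ∑ _A ∈ multiIdx n m, C +
      ∑ j ∈ Finset.Icc 1 (m + 1), ∑ _A ∈ multiIdx n (m + 1 - j), C := by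
  refine add_le_add (Finset.sum_le_sum fun i _ => Finset.sum_le_sum fun A hA => ?_)
    (Finset.sum_le_sum fun j hj => Finset.sum_le_sum fun A hA => ?_)
  · rw [mem_multiIdx] at hA
    have := sum_add_single A i
    exact hX _ _ (by omega) (by omega)
  · rw [mem_multiIdx] at hA
    rw [Finset.mem_Icc] at hj
    exact hX _ _ (by omega) (by omega)

/-- Measurability comes from joint smoothness, boundedness from `energy_bdd`, so the time integral
in the estimate is a genuine integral. -/
lemma energy_integrable {a b c : ℝ} (hc : 0 < c) (m : ℕ) {U : SpT n → ℝ}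
    (hU : Sm U) (hS : SchW U) {T : ℝ} (hsol : Sol a b c {p | 0 < p.1 ∧ p.1 < T} U)
    (ha : ∀ s ∈ Set.Icc 0 T, ∀ x, |a * dD none U (s, x)| ≤ 1 / 2) {t : ℝ}
    (ht : t ∈ Set.Icc 0 T) :
    IntervalIntegrable (fun s => EX m (nrm U s) ^ ((3 : ℝ) / 2)) volume 0 t := by
  obtain ⟨C, hC⟩ := energy_bdd hc (K := 2 * n + 1 + m) (by omega) hU hS hsol ha
  have hb : ∃ D, ∀ s ∈ Set.Icc 0 T, EX m (nrm U s) ≤ D := by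
    refine ⟨_, fun s hs => EX_le (C := C) fun j A h1 h2 => ?_⟩
    refine le_trans (integral_mono (hS (wJ j A) s).sq.integrable (hS.PK _ s).integrable fun x => ?_)
      (hC s hs)
    exact le_PK U (s, x) _ (by rw [length_wJ]; omega) (by rw [length_wJ]; omega)
  obtain ⟨D, hD⟩ := hb
  rw [intervalIntegrable_iff_integrableOn_Ioc_of_le ht.1]
  refine Measure.integrableOn_of_bounded (M := D ^ ((3:ℝ) / 2)) (by simp)
    ((EX_measurable m hU).measurable.pow_const _).aestronglyMeasurable ?_
  refine (ae_restrict_iff' measurableSet_Ioc).2 (Filter.Eventually.of_forall fun s hs => ?_)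
  have h0 := EX_nonneg (m := m) (nrm_nonneg U s)
  rw [Real.norm_of_nonneg (by positivity)]
  exact Real.rpow_le_rpow h0 (hD s ⟨hs.1.le, hs.2.trans ht.2⟩) (by norm_num)

/-- The weighted sum of the energy inequalities of all derivatives of order at most `m`. -/
lemma Fm_ineq {a b c : ℝ} (hc : 0 < c) {m : ℕ} {U : SpT n → ℝ}
    (hU : Sm U) (hS : SchW U) {T : ℝ} (hsol : Sol a b c {p | 0 < p.1 ∧ p.1 < T} U)
    (ha : ∀ s ∈ Set.Icc 0 T, ∀ x, |a * dD none U (s, x)| ≤ 1 / 2) {C : ℝ}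
    (hC : ∀ t X : ℝ, (∀ w : List (Dir n), 1 ≤ w.length → w.length ≤ m + 1 →
      ∫ x, dW w U (t, x) ^ 2 ≤ X) → ∀ w : List (Dir n), w.length ≤ m →
      |∫ x, src a b U w (t, x)| ≤ C * X ^ ((3:ℝ) / 2)) {t : ℝ} (ht : t ∈ Set.Icc 0 T) :
    Fm a c m U t ≤ Fm a c m U 0 + ∑ j ∈ Finset.range (m + 1), ∑ A ∈ multiIdx n (m - j),
      wt j A * (C * ∫ s in (0:ℝ)..t, EX m (nrm U s) ^ ((3 : ℝ) / 2)) := by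
  unfold Fm
  rw [← Finset.sum_add_distrib]
  refine Finset.sum_le_sum fun j hj => ?_
  rw [← Finset.sum_add_distrib]
  refine Finset.sum_le_sum fun A hA => ?_
  rw [← mul_add]
  refine mul_le_mul_of_nonneg_left ?_ (wt_pos _ _).le
  rw [mem_multiIdx] at hA
  rw [Finset.mem_range] at hj
  have hl : (wJ j A).length ≤ m := by rw [length_wJ]; omega
  refine (energy_ineq hc (K := 2 * n + 1 + m) (by omega) hU hS hsol ha (w := wJ j A) (by omega) ht).trans
    (add_le_add_right ?_ _)
  rw [← intervalIntegral.integral_const_mul]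
  refine (le_abs_self _).trans ((Real.norm_eq_abs _).symm.le.trans <| intervalIntegral.norm_integral_le_of_norm_le ht.1
    (Filter.Eventually.of_forall fun s _ => ?_)
    ((energy_integrable hc m hU hS hsol ha ht).const_mul C))
  exact hC s _ (fun w h1 h2 => nrm_word hU h1 h2) _ hl

lemma sol_of_kuznetsov {c α β ε T : ℝ} {u : ℝ → (Fin n → ℝ) → ℝ} (hu : SmoothSchwartz u)
    (h : ∀ t ∈ Set.Icc (0 : ℝ) T, InviscidKuznetsov c α β ε u t) :
    Sol (α * ε) (β * ε) c {p | 0 < p.1 ∧ p.1 < T} (unc u) := by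
  rintro ⟨t, x⟩ ht
  have h1 := h t ⟨ht.1.le, ht.2.le⟩ x
  have hdt : ∀ x, dt u t x = dD none (unc u) (t, x) := fun x => (hasDerivAt_time hu.sm t x).deriv
  have hpd : ∀ i x, pd i (u t) x = dD (some i) (unc u) (t, x) := fun i x =>
    (dD_some_eq hu.sm i t x).symm
  have hpd' : ∀ i, pd i (u t) = fun x => dD (some i) (unc u) (t, x) := fun i => funext (hpd i)
  have hdt' : dt u t = fun x => dD none (unc u) (t, x) := funext hdt
  rw [dtIter_eq hu.sm, hdt x] at h1
  simp only [lap, gradDot, hpd', hdt', ← dD_some_eq (hu.sm.dD _)] at h1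
  simp only [List.replicate, dW_cons, dW_nil] at h1
  linarith

/-- The supremum is that of a bounded family, hence it dominates each value. -/
lemma small_of_supNorm {α ε t : ℝ} (hα : 0 < α) (hε : 0 < ε) {u : ℝ → (Fin n → ℝ) → ℝ}
    (hu : SmoothSchwartz u) (h : supNorm (fun x => dt u t x) ≤ 1 / (2 * α * ε)) (x : Fin n → ℝ) :
    |α * ε * dD none (unc u) (t, x)| ≤ 1 / 2 := by
  have hdt : (fun x => dt u t x) = fun x => dD none (unc u) (t, x) :=
    funext fun x => (hasDerivAt_time hu.sm t x).deriv
  obtain ⟨M, hM⟩ := (hu.word [none] t).bdd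
  rw [hdt] at h
  have h1 : |dD none (unc u) (t, x)| ≤ 1 / (2 * α * ε) :=
    le_trans (le_ciSup (f := fun x => |dD none (unc u) (t, x)|)
      ⟨M, by rintro _ ⟨y, rfl⟩; exact hM y⟩ x) h
  rw [abs_mul, abs_of_pos (mul_pos hα hε)]
  calc α * ε * |dD none (unc u) (t, x)| ≤ α * ε * (1 / (2 * α * ε)) :=
        mul_le_mul_of_nonneg_left h1 (mul_pos hα hε).le
    _ = 1 / 2 := by field_simp

end

/-- First a priori estimate for the inviscid Kuznetsov equation (Proposition 1): for
`m ≥ ⌊n/2⌋ + 2` there is a constant `C_m > 0` depending only on `m`, `n` and `c` such that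
every smooth spatially-Schwartz solution `u` on `[0,T]` with
`‖∂_t u(t)‖_∞ ≤ 1/(2αε)` satisfies, with `B = (3 + 2c²)/min(1/2, c²)`,
`E_m[u](t) ≤ B E_m[u](0) + C_m max(α,β) ε ∫₀ᵗ E_m[u](τ)^{3/2} dτ`. -/
theorem kuznetsov_first_apriori_estimate (n : ℕ) (hn : 1 ≤ n) (c : ℝ) (hc : 0 < c)
    (m : ℕ) (hm : n / 2 + 2 ≤ m) :
    ∃ Cm > (0 : ℝ), ∀ α β ε T : ℝ, 0 < α → 0 < β → 0 < ε → 0 < T →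
      ∀ u : ℝ → (Fin n → ℝ) → ℝ, SmoothSchwartz u →
        (∀ t ∈ Set.Icc (0 : ℝ) T, InviscidKuznetsov c α β ε u t) →
        (∀ t ∈ Set.Icc (0 : ℝ) T, supNorm (fun x => dt u t x) ≤ 1 / (2 * α * ε)) →
        ∀ t ∈ Set.Icc (0 : ℝ) T,
          Em m u t ≤ (3 + 2 * c ^ 2) / min (1 / 2) (c ^ 2) * Em m u 0 +
            Cm * max α β * ε * ∫ τ in (0 : ℝ)..t, (Em m u τ) ^ ((3 : ℝ) / 2) := by
  obtain ⟨C, hC0, hC⟩ := exists_src n m hm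
  set κ := min (1 / 2) (c ^ 2) with hκ
  have hκ0 : 0 < κ := lt_min (by norm_num) (by positivity)
  set N : ℝ := ∑ j ∈ Finset.range (m + 1), ∑ A ∈ multiIdx n (m - j), wt j A with hN
  have hN0 : 0 ≤ N := Finset.sum_nonneg fun _ _ => Finset.sum_nonneg fun _ _ => (wt_pos _ _).le
  -- the summand `1` makes the constant positive even if `C = 0`
  refine ⟨N * (1 + n) * C / κ + 1, by positivity, fun α β ε T hα hβ hε _ u hu hK hsup t ht => ?_⟩
  have hU := hu.sm
  have hS : SchW (unc u) := fun w t => hu.word w t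
  have hsol := sol_of_kuznetsov hu hK
  have ha : ∀ s ∈ Set.Icc 0 T, ∀ x, |α * ε * dD none (unc u) (s, x)| ≤ 1 / 2 :=
    fun s hs x => small_of_supNorm hα hε hu (hsup s hs) x
  have h0 : (0:ℝ) ∈ Set.Icc 0 T := ⟨le_rfl, ht.1.trans ht.2⟩
  simp only [Em_eq hu]
  set I := ∫ s in (0:ℝ)..t, EX m (nrm (unc u) s) ^ ((3 : ℝ) / 2) with hI
  have hI0 : 0 ≤ I := intervalIntegral.integral_nonneg ht.1 fun s _ =>
    Real.rpow_nonneg (EX_nonneg (nrm_nonneg _ _)) _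
  have hmain := Fm_ineq hc hU hS hsol ha (C := (|α * ε| + n * |β * ε|) * C)
    (fun t X hX w hw => by rw [mul_assoc]; exact hC _ hU hS t X hX _ _ w hw) ht
  simp only [← Finset.sum_mul] at hmain
  rw [← hN, ← hI] at hmain
  have hlow := Fm_lower (c := c) m hU hS (ha t ht)
  have hup := Fm_upper (c := c) m hU hS (ha 0 h0)
  have hmax : |α * ε| + n * |β * ε| ≤ (1 + n) * (max α β * ε) := by
    rw [abs_of_pos (mul_pos hα hε), abs_of_pos (mul_pos hβ hε)]
    have h1 := mul_le_mul_of_nonneg_right (le_max_left α β) hε.le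
    have h2 := mul_le_mul_of_nonneg_left
      (mul_le_mul_of_nonneg_right (le_max_right α β) hε.le) (Nat.cast_nonneg (α := ℝ) n)
    linarith
  have hsrc : N * ((|α * ε| + n * |β * ε|) * C * I) ≤ N * ((1 + n) * (max α β * ε) * C * I) := by
    gcongr
  have hfin : κ * EX m (nrm (unc u) t) ≤ (3 + 2 * c ^ 2) * EX m (nrm (unc u) 0) +
      N * ((1 + n) * (max α β * ε) * C * I) := by linarith
  have hM0 : 0 ≤ max α β * ε * I := by
    have := hα.le.trans (le_max_left α β)
    positivity
  calc EX m (nrm (unc u) t) = κ * EX m (nrm (unc u) t) / κ := by field_simp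
    _ ≤ ((3 + 2 * c ^ 2) * EX m (nrm (unc u) 0) + N * ((1 + n) * (max α β * ε) * C * I)) / κ := by
        gcongr
    _ = (3 + 2 * c ^ 2) / κ * EX m (nrm (unc u) 0) + N * (1 + n) * C / κ * (max α β * ε * I) := by
        ring
    _ ≤ (3 + 2 * c ^ 2) / κ * EX m (nrm (unc u) 0) +
        (N * (1 + n) * C / κ + 1) * (max α β * ε * I) := by linarith
    _ = _ := by ring
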